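/- For every integer d ≥ 1 there exists a constant c_d > 0 depending only on d such that for every integer n ≥ 1 and every integer N ≥ c_d·n^{2d(d+1)/(d+2)} there exist points x_1,…,x_N ∈ S^d forming a spherical n-design. -/

import Mathlib

open MeasureTheory Finset
open scoped RealInnerProductSpace

noncomputable section
attribute [local instance] Classical.propDecidable

/-- Euclidean space `ℝ^{d+1}`. -/
abbrev Euc (d : ℕ) := EuclideanSpace ℝ (Fin (d + 1))

/-- The unit sphere `S^d ⊆ ℝ^{d+1}`. -/
abbrev Sph (d : ℕ) := Metric.sphere (0 : Euc d) 1

/-- Real-valued functions on the sphere. -/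
abbrev SphFun (d : ℕ) := Sph d → ℝ

/-- The normalized surface measure `μ_d` on `S^d`. -/
noncomputable def muSph (d : ℕ) : Measure (Sph d) :=
  ((volume : Measure (Euc d)).toSphere Set.univ)⁻¹ • (volume : Measure (Euc d)).toSphere

/-- Gegenbauer polynomials `C_k^α`, normalized so that `C_k^α(1) = binom(2α+k-1, k)`,
defined by the standard three-term recurrence. -/
noncomputable def gegenbauer (α : ℝ) : ℕ → Polynomial ℝ
  | 0 => 1
  | 1 => Polynomial.C (2 * α) * Polynomial.X
  | n + 2 =>
      Polynomial.C (2 * ((n : ℝ) + 1 + α) / ((n : ℝ) + 2)) *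
          (Polynomial.X * gegenbauer α (n + 1)) -
        Polynomial.C (((n : ℝ) + 2 * α) / ((n : ℝ) + 2)) * gegenbauer α n

/-- `dim H_k = ((2k+d-1)/(k+d-1))·binom(d+k-1, k)`. -/
noncomputable def dimHarm (d k : ℕ) : ℝ :=
  ((2 * (k : ℝ) + d - 1) / ((k : ℝ) + d - 1)) * (Nat.choose (d + k - 1) k : ℝ)

/-- The kernel polynomial `g_w(t) = Σ_{k=1}^n dim H_k / (w_k G_k^α(1)) · G_k^α(t)`,
with `α = (d-1)/2` and `w_k = k(k+d-1)`. -/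
noncomputable def gw (d n : ℕ) : Polynomial ℝ :=
  ∑ k ∈ Finset.Icc 1 n,
    Polynomial.C (dimHarm d k /
        (((k : ℝ) * ((k : ℝ) + d - 1)) * (gegenbauer (((d : ℝ) - 1) / 2) k).eval 1)) *
      gegenbauer (((d : ℝ) - 1) / 2) k

/-- The Laplace operator on polynomials in `d+1` variables. -/
noncomputable def polyLaplacian (d : ℕ) (p : MvPolynomial (Fin (d + 1)) ℝ) :
    MvPolynomial (Fin (d + 1)) ℝ :=
  ∑ i : Fin (d + 1), MvPolynomial.pderiv i (MvPolynomial.pderiv i p)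

/-- The space `H_k` of spherical harmonics of degree `k` on `S^d`: restrictions to the
sphere of harmonic homogeneous polynomials of degree `k`. -/
def sphHarmonic (d k : ℕ) : Set (SphFun d) :=
  {f | ∃ p : MvPolynomial (Fin (d + 1)) ℝ, p.IsHomogeneous k ∧ polyLaplacian d p = 0 ∧
        ∀ x : Sph d, f x = MvPolynomial.eval (fun i => (x : Euc d) i) p}

/-- The space `P_n`: restrictions to `S^d` of polynomials of total degree at most `n`
having zero mean over the sphere. -/
def PolySph (d n : ℕ) : Set (SphFun d) :=
  {f | ∃ p : MvPolynomial (Fin (d + 1)) ℝ, p.totalDegree ≤ n ∧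
        (∀ x : Sph d, f x = MvPolynomial.eval (fun i => (x : Euc d) i) p) ∧
        ∫ x, f x ∂muSph d = 0}

/-- The `H_k`-component of `P ∈ P_n` in the decomposition `P_n = ⊕_{k=1}^n H_k`
(the decomposition is unique; an arbitrary one is chosen if it exists). -/
noncomputable def harmComponent (d n : ℕ) (P : SphFun d) (k : ℕ) : SphFun d :=
  if h : ∃ c : ℕ → SphFun d, (∀ j, c j ∈ sphHarmonic d j) ∧ P = ∑ j ∈ Finset.Icc 1 n, c j
  then h.choose k else 0

/-- The inner product `⟨P,Q⟩_w = Σ_{k=1}^n w_k ∫ P_k Q_k dμ_d` with `w_k = k(k+d-1)`. -/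
noncomputable def innerW (d n : ℕ) (P Q : SphFun d) : ℝ :=
  ∑ k ∈ Finset.Icc 1 n, ((k : ℝ) * ((k : ℝ) + d - 1)) *
    ∫ x, harmComponent d n P k x * harmComponent d n Q k x ∂muSph d

/-- The norm `‖P‖_w = ⟨P,P⟩_w^{1/2}`. -/
noncomputable def normW (d n : ℕ) (P : SphFun d) : ℝ :=
  Real.sqrt (innerW d n P P)

/-- The function `G_x(y) = g_w((x,y))` on the sphere, for `x ∈ ℝ^{d+1}`. -/
noncomputable def GxFun (d n : ℕ) (x : Euc d) : SphFun d :=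
  fun y => (gw d n).eval ⟪x, (y : Euc d)⟫

/-- The extension of a function on the sphere to `ℝ^{d+1} \ {0}` by `x ↦ f(x/‖x‖)`
(with value `0` at the origin). -/
noncomputable def extendSph (d : ℕ) (f : SphFun d) : Euc d → ℝ :=
  fun x =>
    if hx : x = 0 then 0
    else f ⟨‖x‖⁻¹ • x, by
      rw [mem_sphere_zero_iff_norm, norm_smul, norm_inv, norm_norm,
        inv_mul_cancel₀ (norm_ne_zero_iff.mpr hx)]⟩

/-- The spherical gradient `∇f(x) = (∂/∂x) f(x/‖x‖)`. -/
noncomputable def sphGrad (d : ℕ) (f : SphFun d) (x : Euc d) : Euc d :=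
  gradient (extendSph d f) x

/-- The spherical Hessian quadratic form `∇²f(x)·y·y`. -/
noncomputable def sphHessApply (d : ℕ) (f : SphFun d) (x y : Euc d) : ℝ :=
  iteratedFDeriv ℝ 2 (extendSph d f) x ![y, y]

/-- `‖∇²f(x₀)‖ = max { |∇²f(x₀)·y·y| : ‖y‖ = 1, (y,x₀) = 0 }`. -/
noncomputable def sphHessNorm (d : ℕ) (f : SphFun d) (x₀ : Sph d) : ℝ :=
  sSup {r : ℝ | ∃ y : Euc d, ‖y‖ = 1 ∧ ⟪y, (x₀ : Euc d)⟫ = 0 ∧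
    r = |sphHessApply d f (x₀ : Euc d) y|}

/-- `x_1, …, x_N ∈ S^d` form a spherical `n`-design. -/
def IsSphericalDesign (d n N : ℕ) (x : Fin N → Sph d) : Prop :=
  ∀ p : MvPolynomial (Fin (d + 1)) ℝ, p.totalDegree ≤ n →
    ∫ y, MvPolynomial.eval (fun j => (y : Euc d) j) p ∂muSph d =
      (N : ℝ)⁻¹ * ∑ i, MvPolynomial.eval (fun j => ((x i : Euc d)) j) p

/-- An area-regular partition `R_1, …, R_N` of `S^d`: closed sets with pairwise disjoint
interiors, covering the sphere, each of normalized measure `1/N`. -/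
def IsAreaRegularPartition (d N : ℕ) (R : Fin N → Set (Sph d)) : Prop :=
  (∀ i, IsClosed (R i)) ∧ (⋃ i, R i) = Set.univ ∧
    (∀ i j, i ≠ j → interior (R i) ∩ interior (R j) = ∅) ∧
    ∀ i, muSph d (R i) = 1 / N

/-- The Marcinkiewicz–Zygmund property of degree `m` for points `x_1, …, x_N ∈ S^d`. -/
def MZProperty (d m N : ℕ) (x : Fin N → Sph d) : Prop :=
  ∀ p : MvPolynomial (Fin (d + 1)) ℝ, p.totalDegree ≤ m →
    (1 / 2) * (∫ y, |MvPolynomial.eval (fun j => (y : Euc d) j) p| ∂muSph d) ≤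
        (N : ℝ)⁻¹ * ∑ i, |MvPolynomial.eval (fun j => ((x i : Euc d)) j) p| ∧
      (N : ℝ)⁻¹ * ∑ i, |MvPolynomial.eval (fun j => ((x i : Euc d)) j) p| ≤
        (3 / 2) * ∫ y, |MvPolynomial.eval (fun j => (y : Euc d) j) p| ∂muSph d

/-- The point `x_i(P)`: move `x` along the great circle in the direction of the spherical
gradient `∇P(x)` through angle `‖∇P(x)‖`. -/
noncomputable def movePoint (d : ℕ) (P : SphFun d) (x : Sph d) : Euc d :=
  if _h : sphGrad d P (x : Euc d) = 0 then (x : Euc d)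
  else Real.cos ‖sphGrad d P (x : Euc d)‖ • (x : Euc d) +
    Real.sin ‖sphGrad d P (x : Euc d)‖ • (‖sphGrad d P (x : Euc d)‖⁻¹ • sphGrad d P (x : Euc d))

/-- The map `L(P) = (1/N) Σ_i G_{x_i(P)}`. -/
noncomputable def Lmap (d n N : ℕ) (x : Fin N → Sph d) (P : SphFun d) : SphFun d :=
  (N : ℝ)⁻¹ • ∑ i, GxFun d n (movePoint d P (x i))

end

/-!
On the circle the vertices of a regular `N`-gon form an `n`-design as soon as `N > n`. For
`d ≥ 2` we have `d + 1 ≤ 2d(d+1)/(d+2)`, and already `N ≥ c_d n^{d+1}` points suffice.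

Cut the surface of the cube `[-1, 1]^{d+1}` into cells of side `1/m`, with `m` a large multiple of
`n`, and distribute the `N` points among the cells in proportion to the spherical measure of their
radial projections, up to an error of one point per cell. Let `e_α` be the monomials of degree at
most `n`, centred to have mean zero on the sphere, and minimise `E(z) = ∑_α (∑_j e_α(z_j))²` over
all choices of `z_j` in the threefold enlargement of the cell of `j`. At a minimiser put
`P = ∑_α (∑_j e_α(z_j)) e_α`; then `E(z) = ∑_j P(z_j)`. Since the enlarged cell leaves room around
the cell itself, the first-order condition makes `P(z_j)` smaller than the values of `P` on the cell
of `j` by a multiple of `|∇P| / m`, up to a second-order error. Averaged over the sphere, where `P`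
has mean zero, this gives `E(z) ≤ -κ ‖∇P‖₁` plus errors. Bernstein's inequality in `L¹` (from
M. Riesz's interpolation formula), Marcinkiewicz–Zygmund sampling on the cells and the Poincaré
inequality in `L¹` bound the errors by `κ ‖∇P‖₁`. Hence `E(z) = 0`, and the `z_j`, projected to the
sphere, form a design.
-/

namespace SphericalDesign

open MvPolynomial (eval pderiv)
open scoped ENNReal

/-! ### The sphere in coordinates -/

section Coordinates

variable {ι : Type*} [Fintype ι]

/-- The squared Euclidean norm of a coordinate vector. The space `ι → ℝ` itself carries the
supremum norm; it is used in place of `EuclideanSpace` for its product measure. -/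
noncomputable def sqNorm (z : ι → ℝ) : ℝ := ∑ i, z i ^ 2

/-- The radial projection `z ↦ z / |z|` onto the unit sphere, with value `0` at the origin. -/
noncomputable def radialProj (z : ι → ℝ) : ι → ℝ := fun i => z i / √(sqNorm z)

lemma sqNorm_nonneg (z : ι → ℝ) : 0 ≤ sqNorm z := Finset.sum_nonneg fun _ _ => sq_nonneg _

lemma sqNorm_pos {z : ι → ℝ} (hz : sqNorm z ≠ 0) : 0 < sqNorm z :=
  lt_of_le_of_ne (sqNorm_nonneg z) hz.symm

lemma sq_apply_le_sqNorm (z : ι → ℝ) (i : ι) : z i ^ 2 ≤ sqNorm z :=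
  Finset.single_le_sum (f := fun i => z i ^ 2) (fun _ _ => sq_nonneg _) (Finset.mem_univ i)

lemma sqNorm_ofLp (x : EuclideanSpace ℝ ι) : sqNorm x.ofLp = ‖x‖ ^ 2 := by
  simp [EuclideanSpace.norm_sq_eq, sqNorm]

lemma radialProj_ofLp (x : EuclideanSpace ℝ ι) : radialProj x.ofLp = (‖x‖⁻¹ • x).ofLp := by
  funext i
  simp [radialProj, sqNorm_ofLp, div_eq_inv_mul]

lemma sqNorm_smul (r : ℝ) (z : ι → ℝ) : sqNorm (r • z) = r ^ 2 * sqNorm z := by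
  simp [sqNorm, mul_pow, Finset.mul_sum]

lemma radialProj_smul {r : ℝ} (hr : 0 < r) (z : ι → ℝ) : radialProj (r • z) = radialProj z := by
  funext i
  rw [radialProj, sqNorm_smul, Real.sqrt_mul (sq_nonneg r), Real.sqrt_sq hr.le, Pi.smul_apply,
    smul_eq_mul, mul_div_mul_left _ _ hr.ne', radialProj]

lemma radialProj_of_sqNorm_eq_one {z : ι → ℝ} (hz : sqNorm z = 1) : radialProj z = z := by
  funext i
  simp [radialProj, hz]

lemma sqNorm_radialProj {z : ι → ℝ} (hz : sqNorm z ≠ 0) : sqNorm (radialProj z) = 1 := by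
  rw [sqNorm]
  simp only [radialProj, div_pow, Real.sq_sqrt (sqNorm_nonneg z)]
  rw [← Finset.sum_div]
  exact div_self hz

lemma continuous_sqNorm : Continuous (sqNorm : (ι → ℝ) → ℝ) := by
  unfold sqNorm
  fun_prop

lemma measurable_radialProj : Measurable (radialProj : (ι → ℝ) → ι → ℝ) :=
  measurable_pi_lambda _ fun i => (measurable_pi_apply i).div continuous_sqNorm.measurable.sqrt

lemma measurableSet_sqNorm_le (R : ℝ) : MeasurableSet {z : ι → ℝ | sqNorm z ≤ R} :=
  continuous_sqNorm.measurable measurableSet_Iic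

lemma volume_sqNorm_le_lt_top (R : ℝ) : volume {z : ι → ℝ | sqNorm z ≤ R} < ⊤ := by
  refine Bornology.IsBounded.measure_lt_top
    (Metric.isBounded_closedBall (x := (0 : ι → ℝ)) (r := √R) |>.subset fun z hz => ?_)
  rw [mem_closedBall_zero_iff, pi_norm_le_iff_of_nonneg (Real.sqrt_nonneg _)]
  exact fun i => Real.abs_le_sqrt ((sq_apply_le_sqNorm z i).trans hz)

lemma volume_sqNorm_le_pos {R : ℝ} (hR : 0 < R) : 0 < volume {z : ι → ℝ | sqNorm z ≤ R} := by
  have hopen : IsOpen {z : ι → ℝ | sqNorm z < R} := isOpen_lt continuous_sqNorm continuous_const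
  have hzero : (0 : ι → ℝ) ∈ {z : ι → ℝ | sqNorm z < R} := by simp [sqNorm, hR]
  exact (hopen.measure_pos volume ⟨0, hzero⟩).trans_le
    (measure_mono fun z (hz : sqNorm z < R) => hz.le)

end Coordinates

/-- The normalized surface measure of the sphere, as a measure on coordinate space. -/
noncomputable def sphereMeasure (d : ℕ) : Measure (Fin (d + 1) → ℝ) :=
  (muSph d).map fun y : Sph d => (y : Euc d).ofLp

section SphereMeasure

variable {d : ℕ}

lemma measurable_sphere_coe : Measurable fun y : Sph d => (y : Euc d).ofLp := by
  have : Continuous fun y : Sph d => (y : Euc d).ofLp := by fun_prop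
  exact this.measurable

lemma toSphere_univ_ne_zero : (volume : Measure (Euc d)).toSphere Set.univ ≠ 0 :=
  Measure.measure_univ_ne_zero.2 (Measure.toSphere_ne_zero _)

instance : IsProbabilityMeasure (muSph d) := by
  constructor
  rw [muSph, Measure.smul_apply, smul_eq_mul,
    ENNReal.inv_mul_cancel toSphere_univ_ne_zero (measure_ne_top _ _)]

instance : IsProbabilityMeasure (sphereMeasure d) :=
  Measure.isProbabilityMeasure_map measurable_sphere_coe.aemeasurable

lemma ae_sqNorm_eq_one : ∀ᵐ y ∂sphereMeasure d, sqNorm y = 1 := by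
  refine (ae_map_iff measurable_sphere_coe.aemeasurable
    (continuous_sqNorm.measurable (measurableSet_singleton 1))).2 ?_
  exact Filter.Eventually.of_forall fun y => by simp [sqNorm_ofLp]

lemma toSphere_eq_smul_muSph :
    (volume : Measure (Euc d)).toSphere =
      (volume : Measure (Euc d)).toSphere Set.univ • muSph d := by
  rw [muSph, smul_smul, ENNReal.mul_inv_cancel toSphere_univ_ne_zero (measure_ne_top _ _), one_smul]

lemma lintegral_radialProj_mul_toSphere {f : (Fin (d + 1) → ℝ) → ℝ≥0∞} (hf : Measurable f)
    {w : ℝ → ℝ≥0∞} (hw : Measurable w) :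
    ∫⁻ z : Fin (d + 1) → ℝ, f (radialProj z) * w (sqNorm z) =
      (∫⁻ y : Sph d, f (y : Euc d).ofLp ∂(volume : Measure (Euc d)).toSphere) *
      ∫⁻ r : Set.Ioi (0 : ℝ), w (r.1 ^ 2)
        ∂(Measure.volumeIoiPow (Module.finrank ℝ (Euc d) - 1)) := by
  have hfs : Measurable fun y : Sph d => f (y : Euc d).ofLp := hf.comp measurable_sphere_coe
  have hwr : Measurable fun r : Set.Ioi (0 : ℝ) => w (r.1 ^ 2) := hw.comp (by fun_prop)
  calc ∫⁻ z : Fin (d + 1) → ℝ, f (radialProj z) * w (sqNorm z)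
      = ∫⁻ x : Euc d, f (radialProj x.ofLp) * w (sqNorm x.ofLp) :=
        ((PiLp.volume_preserving_ofLp (Fin (d + 1))).lintegral_comp
          ((hf.comp measurable_radialProj).mul
            (hw.comp continuous_sqNorm.measurable))).symm
    _ = ∫⁻ x : ({0}ᶜ : Set (Euc d)), f (radialProj x.1.ofLp) * w (sqNorm x.1.ofLp)
          ∂((volume : Measure (Euc d)).comap Subtype.val) := by
        rw [lintegral_subtype_comap (measurableSet_singleton (0 : Euc d)).compl
          (fun x : Euc d => f (radialProj x.ofLp) * w (sqNorm x.ofLp)), restrict_compl_singleton]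
    _ = ∫⁻ p : Sph d × Set.Ioi (0 : ℝ), f (p.1 : Euc d).ofLp * w (p.2.1 ^ 2)
          ∂((volume : Measure (Euc d)).toSphere.prod
            (Measure.volumeIoiPow (Module.finrank ℝ (Euc d) - 1))) := by
        refine Eq.trans (lintegral_congr fun x => ?_)
          ((volume : Measure (Euc d)).measurePreserving_homeomorphUnitSphereProd.lintegral_comp
            ((hfs.comp measurable_fst).mul (hwr.comp measurable_snd)))
        rw [radialProj_ofLp, sqNorm_ofLp]
        simp [homeomorphUnitSphereProd]
    _ = _ := lintegral_prod_mul hfs.aemeasurable hwr.aemeasurable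

lemma lintegral_radialProj_mul {f : (Fin (d + 1) → ℝ) → ℝ≥0∞} (hf : Measurable f)
    {w : ℝ → ℝ≥0∞} (hw : Measurable w) :
    ∫⁻ z : Fin (d + 1) → ℝ, f (radialProj z) * w (sqNorm z) =
      (∫⁻ z : Fin (d + 1) → ℝ, w (sqNorm z)) * ∫⁻ y, f y ∂sphereMeasure d := by
  have hone := lintegral_radialProj_mul_toSphere (d := d) (f := fun _ => 1) measurable_const hw
  simp only [one_mul, lintegral_one] at hone
  rw [lintegral_radialProj_mul_toSphere hf hw, hone, sphereMeasure,
    lintegral_map hf measurable_sphere_coe]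
  conv_lhs => rw [toSphere_eq_smul_muSph, lintegral_smul_measure, smul_eq_mul]
  ring

lemma setLIntegral_radialProj {f : (Fin (d + 1) → ℝ) → ℝ≥0∞} (hf : Measurable f) (R : ℝ) :
    ∫⁻ z in {z : Fin (d + 1) → ℝ | sqNorm z ≤ R}, f (radialProj z) =
      volume {z : Fin (d + 1) → ℝ | sqNorm z ≤ R} * ∫⁻ y, f y ∂sphereMeasure d := by
  have hball := measurableSet_sqNorm_le (ι := Fin (d + 1)) R
  have hind (z : Fin (d + 1) → ℝ) : (Set.Iic R).indicator (1 : ℝ → ℝ≥0∞) (sqNorm z) =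
      {z : Fin (d + 1) → ℝ | sqNorm z ≤ R}.indicator 1 z := by
    simp [Set.indicator]
  have hpolar := lintegral_radialProj_mul hf
    (measurable_one.indicator (measurableSet_Iic (a := R)))
  simp only [hind, lintegral_indicator_one hball] at hpolar
  rw [← hpolar, ← lintegral_indicator hball]
  refine lintegral_congr fun z => ?_
  by_cases hz : z ∈ {z : Fin (d + 1) → ℝ | sqNorm z ≤ R} <;> simp [hz]

end SphereMeasure

/-! ### Rotations of coordinate planes -/

section PolynomialCalculus

variable {ι : Type*}

lemma hasDerivAt_eval_comp [Fintype ι] (P : MvPolynomial ι ℝ) {γ : ℝ → ι → ℝ} {γ' : ι → ℝ} {t : ℝ}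
    (hγ : ∀ i, HasDerivAt (fun s => γ s i) (γ' i) t) :
    HasDerivAt (fun s => eval (γ s) P) (∑ i, eval (γ t) (pderiv i P) * γ' i) t := by
  classical
  induction P using MvPolynomial.induction_on with
  | C c => simpa using hasDerivAt_const t c
  | add P Q hP hQ =>
    simp only [map_add, add_mul, Finset.sum_add_distrib]
    exact hP.add hQ
  | mul_X P i hP =>
    simp only [map_mul, MvPolynomial.eval_X]
    refine (hP.mul (hγ i)).congr_deriv ?_
    simp only [Derivation.leibniz, MvPolynomial.pderiv_X, Pi.single_apply, smul_eq_mul, map_add,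
      map_mul, MvPolynomial.eval_X, add_mul, Finset.sum_add_distrib]
    simp only [apply_ite, map_one, map_zero, mul_one, mul_zero, ite_mul, zero_mul,
      Finset.sum_ite_eq, Finset.mem_univ, if_true, Finset.sum_mul]
    rw [add_comm]
    exact congrArg _ (Finset.sum_congr rfl fun j _ => by ring)

lemma totalDegree_X_mul_pderiv_le (P : MvPolynomial ι ℝ) (a b : ι) :
    (MvPolynomial.X a * pderiv b P).totalDegree ≤ P.totalDegree := by
  classical
  refine Finset.sup_le fun m hm => ?_
  rw [mul_comm, MvPolynomial.mem_support_iff, MvPolynomial.coeff_mul_X', ite_ne_right_iff,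
    MvPolynomial.coeff_pderiv] at hm
  obtain ⟨ha, hcoeff⟩ := hm
  have hle := MvPolynomial.le_totalDegree
    (MvPolynomial.mem_support_iff.2 (left_ne_zero_of_mul hcoeff))
  have hsplit : m = m - Finsupp.single a 1 + Finsupp.single a 1 :=
    (tsub_add_cancel_of_le (Finsupp.single_le_iff.2
      (Nat.one_le_iff_ne_zero.2 (Finsupp.mem_support_iff.1 ha)))).symm
  rw [Finsupp.sum_add_index' (fun _ => rfl) (fun _ _ _ => rfl)] at hle
  rw [hsplit, Finsupp.sum_add_index' (fun _ => rfl) (fun _ _ _ => rfl)]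
  simpa using hle

/-- The derivation `x_a ∂_b - x_b ∂_a`, which generates the rotations of the `(a, b)`-plane. On
the sphere these are the directional derivatives along a spanning family of tangent fields. -/
noncomputable def angularDeriv (a b : ι) :
    Derivation ℝ (MvPolynomial ι ℝ) (MvPolynomial ι ℝ) :=
  (MvPolynomial.X a : MvPolynomial ι ℝ) • pderiv b -
    (MvPolynomial.X b : MvPolynomial ι ℝ) • pderiv a

lemma eval_angularDeriv (a b : ι) (z : ι → ℝ) (P : MvPolynomial ι ℝ) :
    eval z (angularDeriv a b P) = z a * eval z (pderiv b P) - z b * eval z (pderiv a P) := by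
  simp [angularDeriv]

lemma totalDegree_angularDeriv_le (a b : ι) (P : MvPolynomial ι ℝ) :
    (angularDeriv a b P).totalDegree ≤ P.totalDegree :=
  (MvPolynomial.totalDegree_sub _ _).trans
    (max_le (totalDegree_X_mul_pderiv_le P a b) (totalDegree_X_mul_pderiv_le P b a))

end PolynomialCalculus

section PlaneRotation

variable {ι : Type*} [DecidableEq ι] {a b : ι}

/-- Rotation by the angle `t` in the coordinate plane of `a` and `b`, for `a ≠ b`. -/
noncomputable def planeRot (a b : ι) (t : ℝ) (z : ι → ℝ) : ι → ℝ := fun i =>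
  if i = a then Real.cos t * z a - Real.sin t * z b
  else if i = b then Real.sin t * z a + Real.cos t * z b else z i

lemma planeRot_planeRot (hab : a ≠ b) (s t : ℝ) (z : ι → ℝ) :
    planeRot a b s (planeRot a b t z) = planeRot a b (s + t) z := by
  funext i
  simp only [planeRot, Real.cos_add, Real.sin_add, hab.symm, if_true, if_false]
  split_ifs <;> ring

lemma planeRot_zero (z : ι → ℝ) : planeRot a b 0 z = z := by
  funext i
  simp only [planeRot, Real.cos_zero, Real.sin_zero, one_mul, zero_mul, sub_zero, zero_add]
  split_ifs with ha hb
  · rw [ha]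
  · rw [hb]
  · rfl

lemma planeRot_smul (t r : ℝ) (z : ι → ℝ) : planeRot a b t (r • z) = r • planeRot a b t z := by
  funext i
  simp only [planeRot, Pi.smul_apply, smul_eq_mul]
  split_ifs <;> ring

lemma measurable_planeRot (t : ℝ) : Measurable (planeRot a b t) := by
  refine measurable_pi_lambda _ fun i => ?_
  unfold planeRot
  split_ifs <;> fun_prop

lemma hasDerivAt_eval_planeRot [Finite ι] (hab : a ≠ b) (z : ι → ℝ) (t : ℝ) (P : MvPolynomial ι ℝ) :
    HasDerivAt (fun s => eval (planeRot a b s z) P)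
      (eval (planeRot a b t z) (angularDeriv a b P)) t := by
  cases nonempty_fintype ι
  have hcurve (i : ι) : HasDerivAt (fun s => planeRot a b s z i)
      ((if i = b then planeRot a b t z a else 0) - if i = a then planeRot a b t z b else 0) t := by
    have hcos (c : ℝ) := (Real.hasDerivAt_cos t).mul_const c
    have hsin (c : ℝ) := (Real.hasDerivAt_sin t).mul_const c
    by_cases ha : i = a
    · subst ha
      simp only [planeRot, hab, hab.symm, if_true, if_false]
      exact ((hcos _).sub (hsin _)).congr_deriv (by ring)
    · by_cases hb : i = b
      · subst hb
        simp only [planeRot, ha, if_true, if_false]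
        exact ((hsin _).add (hcos _)).congr_deriv (by ring)
      · simpa [planeRot, ha, hb] using hasDerivAt_const t (z i)
  refine (hasDerivAt_eval_comp P hcurve).congr_deriv ?_
  simp only [mul_sub, mul_ite, mul_zero, Finset.sum_sub_distrib, Finset.sum_ite_eq',
    Finset.mem_univ, if_true, eval_angularDeriv]
  ring

variable [Fintype ι]

lemma sqNorm_planeRot (hab : a ≠ b) (t : ℝ) (z : ι → ℝ) : sqNorm (planeRot a b t z) = sqNorm z := by
  have hsq (i : ι) : planeRot a b t z i ^ 2 = z i ^ 2 +
      (if i = a then (Real.cos t * z a - Real.sin t * z b) ^ 2 - z a ^ 2 else 0) +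
      (if i = b then (Real.sin t * z a + Real.cos t * z b) ^ 2 - z b ^ 2 else 0) := by
    by_cases ha : i = a
    · subst ha
      simp [planeRot, hab]
    · by_cases hb : i = b
      · subst hb
        simp [planeRot, ha]
      · simp [planeRot, ha, hb]
  simp only [sqNorm, hsq, Finset.sum_add_distrib, Finset.sum_ite_eq', Finset.mem_univ, if_true]
  linear_combination (z a ^ 2 + z b ^ 2) * Real.sin_sq_add_cos_sq t

lemma planeRot_radialProj (hab : a ≠ b) (t : ℝ) (z : ι → ℝ) :
    planeRot a b t (radialProj z) = radialProj (planeRot a b t z) := by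
  have hproj (w : ι → ℝ) : radialProj w = (√(sqNorm w))⁻¹ • w := by
    funext i
    simp [radialProj, div_eq_inv_mul]
  rw [hproj, hproj, planeRot_smul, sqNorm_planeRot hab]

/-- `planeRot` as a linear isometry of Euclidean space. -/
noncomputable def planeRotIsometry (hab : a ≠ b) (t : ℝ) :
    EuclideanSpace ℝ ι ≃ₗᵢ[ℝ] EuclideanSpace ℝ ι where
  toFun x := WithLp.toLp 2 (planeRot a b t x.ofLp)
  invFun x := WithLp.toLp 2 (planeRot a b (-t) x.ofLp)
  map_add' x y := by
    ext i
    simp only [planeRot, PiLp.add_apply]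
    split_ifs <;> ring
  map_smul' r x := by
    ext i
    simp [planeRot_smul]
  left_inv x := by simp [planeRot_planeRot hab, planeRot_zero]
  right_inv x := by simp [planeRot_planeRot hab, planeRot_zero]
  norm_map' x := by
    refine (pow_left_inj₀ (norm_nonneg _) (norm_nonneg _) two_ne_zero).1 ?_
    rw [← sqNorm_ofLp, ← sqNorm_ofLp]
    exact sqNorm_planeRot hab t x.ofLp

lemma measurePreserving_planeRot_volume (hab : a ≠ b) (t : ℝ) :
    MeasurePreserving (planeRot a b t) (volume : Measure (ι → ℝ)) volume :=
  ((PiLp.volume_preserving_ofLp ι).comp (planeRotIsometry hab t).measurePreserving).comp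
    (PiLp.volume_preserving_toLp ι)

end PlaneRotation

section SphereRotation

variable {d : ℕ} {a b : Fin (d + 1)}

lemma lintegral_planeRot (hab : a ≠ b) (t : ℝ) {f : (Fin (d + 1) → ℝ) → ℝ≥0∞}
    (hf : Measurable f) :
    ∫⁻ y, f (planeRot a b t y) ∂sphereMeasure d = ∫⁻ y, f y ∂sphereMeasure d := by
  set ball : Set (Fin (d + 1) → ℝ) := {z | sqNorm z ≤ 1} with hball
  have hpre : planeRot a b t ⁻¹' ball = ball := by
    ext z
    simp [hball, sqNorm_planeRot hab]
  refine (ENNReal.mul_right_inj (volume_sqNorm_le_pos one_pos).ne'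
    (volume_sqNorm_le_lt_top (ι := Fin (d + 1)) 1).ne).1 ?_
  calc volume ball * ∫⁻ y, f (planeRot a b t y) ∂sphereMeasure d
      = ∫⁻ z in ball, f (planeRot a b t (radialProj z)) :=
        (setLIntegral_radialProj (hf.comp (measurable_planeRot t)) 1).symm
    _ = ∫⁻ z in planeRot a b t ⁻¹' ball, f (radialProj (planeRot a b t z)) := by
        rw [hpre]
        exact lintegral_congr fun z => by rw [planeRot_radialProj hab]
    _ = ∫⁻ z in ball, f (radialProj z) :=
        (measurePreserving_planeRot_volume hab t).setLIntegral_comp_preimage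
          (measurableSet_sqNorm_le 1) (hf.comp measurable_radialProj)
    _ = volume ball * ∫⁻ y, f y ∂sphereMeasure d := setLIntegral_radialProj hf 1

lemma measurePreserving_planeRot (hab : a ≠ b) (t : ℝ) :
    MeasurePreserving (planeRot a b t) (sphereMeasure d) (sphereMeasure d) := by
  refine ⟨measurable_planeRot t, Measure.ext_of_lintegral _ fun f hf => ?_⟩
  rw [lintegral_map hf (measurable_planeRot t), lintegral_planeRot hab t hf]

end SphereRotation

/-! ### Trigonometric polynomials and Riesz interpolation -/

section TrigPolynomial

/-- The character `t ↦ exp (i j t)`. -/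
noncomputable def trigMonomial (j : ℤ) (t : ℝ) : ℂ := Complex.exp (Complex.I * j * t)

/-- The complex trigonometric polynomials of degree at most `n`. -/
noncomputable def trigPoly (n : ℕ) : Submodule ℂ (ℝ → ℂ) :=
  Submodule.span ℂ (trigMonomial '' {j | |j| ≤ n})

lemma trigMonomial_add_index (j k : ℤ) (t : ℝ) :
    trigMonomial (j + k) t = trigMonomial j t * trigMonomial k t := by
  simp only [trigMonomial, ← Complex.exp_add]
  push_cast
  ring_nf

lemma trigMonomial_add_angle (j : ℤ) (s t : ℝ) :
    trigMonomial j (s + t) = trigMonomial j s * trigMonomial j t := by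
  simp only [trigMonomial, ← Complex.exp_add]
  push_cast
  ring_nf

lemma trigMonomial_zero_index (t : ℝ) : trigMonomial 0 t = 1 := by
  simp [trigMonomial]

lemma hasDerivAt_trigMonomial_zero (j : ℤ) :
    HasDerivAt (trigMonomial j) (Complex.I * j) 0 := by
  have hlin := (Complex.ofRealCLM.hasDerivAt (x := (0 : ℝ))).const_mul (Complex.I * j)
  have hexp := (Complex.hasDerivAt_exp (Complex.I * j * ((0 : ℝ) : ℂ))).comp_of_eq (0 : ℝ) hlin rfl
  exact hexp.congr_deriv (by simp)

lemma trigMonomial_mem_trigPoly {n : ℕ} {j : ℤ} (hj : |j| ≤ n) : trigMonomial j ∈ trigPoly n :=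
  Submodule.subset_span ⟨j, hj, rfl⟩

lemma trigPoly_mono {m n : ℕ} (h : m ≤ n) : trigPoly m ≤ trigPoly n :=
  Submodule.span_mono (Set.image_mono fun j (hj : |j| ≤ m) =>
    (hj.trans (by exact_mod_cast h) : |j| ≤ n))

lemma mul_mem_trigPoly {m n : ℕ} {f g : ℝ → ℂ} (hf : f ∈ trigPoly m) (hg : g ∈ trigPoly n) :
    f * g ∈ trigPoly (m + n) := by
  have hmul : f * g ∈ trigPoly m * trigPoly n := Submodule.mul_mem_mul hf hg
  rw [trigPoly, trigPoly, Submodule.span_mul_span] at hmul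
  refine Submodule.span_mono ?_ hmul
  rintro _ ⟨_, ⟨j, hj, rfl⟩, _, ⟨k, hk, rfl⟩, rfl⟩
  refine ⟨j + k, ?_, funext fun t => trigMonomial_add_index j k t⟩
  rw [Set.mem_ofPred_eq, Nat.cast_add]
  exact (abs_add_le j k).trans (add_le_add hj hk)

lemma const_mem_trigPoly (n : ℕ) (c : ℂ) : (fun _ => c) ∈ trigPoly n := by
  have hone : trigMonomial 0 ∈ trigPoly n := trigMonomial_mem_trigPoly (by simp)
  convert Submodule.smul_mem _ c hone using 1
  funext t
  simp [trigMonomial_zero_index]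

lemma cos_mem_trigPoly : (fun t : ℝ => (Real.cos t : ℂ)) ∈ trigPoly 1 := by
  have hpos : trigMonomial 1 ∈ trigPoly 1 := trigMonomial_mem_trigPoly (by simp)
  have hneg : trigMonomial (-1) ∈ trigPoly 1 := trigMonomial_mem_trigPoly (by simp)
  convert Submodule.smul_mem _ (1 / 2 : ℂ) (Submodule.add_mem _ hpos hneg) using 1
  funext t
  simp only [Complex.ofReal_cos, Complex.cos, neg_mul, one_div, Int.reduceNeg, Pi.smul_apply,
    Pi.add_apply, trigMonomial, Int.cast_one, mul_one, Int.cast_neg, mul_neg, smul_eq_mul]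
  ring_nf

lemma sin_mem_trigPoly : (fun t : ℝ => (Real.sin t : ℂ)) ∈ trigPoly 1 := by
  have hpos : trigMonomial 1 ∈ trigPoly 1 := trigMonomial_mem_trigPoly (by simp)
  have hneg : trigMonomial (-1) ∈ trigPoly 1 := trigMonomial_mem_trigPoly (by simp)
  convert Submodule.smul_mem _ (Complex.I / 2 : ℂ) (Submodule.sub_mem _ hneg hpos) using 1
  funext t
  simp only [Complex.ofReal_sin, Complex.sin, neg_mul, Int.reduceNeg, Pi.smul_apply,
    Pi.sub_apply, trigMonomial, Int.cast_neg, Int.cast_one, mul_neg, mul_one, smul_eq_mul]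
  ring_nf

lemma planeRot_apply_mem_trigPoly {ι : Type*} [DecidableEq ι] (a b : ι) (z : ι → ℝ) (i : ι) :
    (fun t : ℝ => (planeRot a b t z i : ℂ)) ∈ trigPoly 1 := by
  have hcos (c : ℝ) := Submodule.smul_mem _ (c : ℂ) cos_mem_trigPoly
  have hsin (c : ℝ) := Submodule.smul_mem _ (c : ℂ) sin_mem_trigPoly
  unfold planeRot
  split_ifs
  · convert Submodule.sub_mem _ (hcos (z a)) (hsin (z b)) using 1
    funext t
    simp [mul_comm]
  · convert Submodule.add_mem _ (hsin (z a)) (hcos (z b)) using 1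
    funext t
    simp [mul_comm]
  · exact const_mem_trigPoly 1 _

lemma eval_planeRot_mem_trigPoly {ι : Type*} [DecidableEq ι] (a b : ι) (z : ι → ℝ)
    (P : MvPolynomial ι ℝ) :
    (fun t : ℝ => (eval (planeRot a b t z) P : ℂ)) ∈ trigPoly P.totalDegree := by
  have hpow (i : ι) (k : ℕ) : (fun t : ℝ => (planeRot a b t z i : ℂ) ^ k) ∈ trigPoly k := by
    induction k with
    | zero => simpa using const_mem_trigPoly 0 1
    | succ k ih =>
      simp only [pow_succ]
      exact mul_mem_trigPoly ih (planeRot_apply_mem_trigPoly a b z i)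
  have hprod (m : ι →₀ ℕ) (s : Finset ι) :
      (fun t : ℝ => ∏ i ∈ s, (planeRot a b t z i : ℂ) ^ m i) ∈ trigPoly (∑ i ∈ s, m i) := by
    induction s using Finset.induction_on with
    | empty => simpa using const_mem_trigPoly 0 1
    | insert i s hi ih =>
      simp only [Finset.prod_insert hi, Finset.sum_insert hi]
      exact mul_mem_trigPoly (hpow i _) ih
  have hexpand : (fun t : ℝ => (eval (planeRot a b t z) P : ℂ)) =
      ∑ m ∈ P.support, ((MvPolynomial.coeff m P : ℝ) : ℂ) •
        fun t : ℝ => ∏ i ∈ m.support, (planeRot a b t z i : ℂ) ^ m i := by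
    funext t
    simp [MvPolynomial.eval_eq]
  rw [hexpand]
  exact Submodule.sum_mem _ fun m hm => Submodule.smul_mem _ _
    (trigPoly_mono (MvPolynomial.le_totalDegree hm) (hprod m m.support))

end TrigPolynomial

section Riesz

/-- The angle of the `k`-th power of the first `M`-th root of unity. -/
noncomputable def rootAngle (M k : ℕ) : ℝ := 2 * Real.pi * k / M

lemma sum_trigMonomial_rootAngle {M : ℕ} {l : ℤ} (hl : |l| < M) :
    ∑ k ∈ range M, trigMonomial l (rootAngle M k) = if l = 0 then (M : ℂ) else 0 := by
  have hM : (M : ℂ) ≠ 0 := by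
    have : 0 < (M : ℤ) := (abs_nonneg l).trans_lt hl
    exact_mod_cast this.ne'
  set x := Complex.exp (2 * Real.pi * Complex.I * (l / M)) with hx
  have hpow (k : ℕ) : trigMonomial l (rootAngle M k) = x ^ k := by
    rw [hx, ← Complex.exp_nat_mul, trigMonomial, rootAngle]
    push_cast
    ring_nf
  simp only [hpow]
  split_ifs with hl0
  · simp [hx, hl0]
  have hx1 : x ≠ 1 := by
    rw [hx, Ne, Complex.exp_eq_one_iff]
    rintro ⟨m, hm⟩
    rw [mul_comm, mul_left_inj' Complex.two_pi_I_ne_zero, div_eq_iff hM] at hm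
    have hdvd : (M : ℤ) ∣ l := ⟨m, by rw [mul_comm]; exact_mod_cast hm⟩
    exact hl0 (Int.eq_zero_of_abs_lt_dvd hdvd hl)
  have hxM : x ^ M = 1 := by
    rw [hx, ← Complex.exp_nat_mul, Complex.exp_eq_one_iff]
    exact ⟨l, by field_simp⟩
  rw [geom_sum_eq hx1, hxM, sub_self, zero_div]

lemma sum_rootAngle_add {n N : ℕ} (hN : n < N) {f : ℝ → ℂ} (hf : f ∈ trigPoly n) (s : ℝ) :
    ∑ k ∈ range N, f (rootAngle N k + s) = ∑ k ∈ range N, f (rootAngle N k) := by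
  induction hf using Submodule.span_induction with
  | mem f hf =>
    obtain ⟨j, hj, rfl⟩ := hf
    simp only [trigMonomial_add_angle, ← Finset.sum_mul,
      sum_trigMonomial_rootAngle (lt_of_le_of_lt hj (by exact_mod_cast hN))]
    split_ifs with hj0
    · simp [hj0, trigMonomial_zero_index]
    · simp
  | zero => simp
  | add f g _ _ hf hg => simp only [Pi.add_apply, Finset.sum_add_distrib, hf, hg]
  | smul c f _ hf => simp only [Pi.smul_apply, ← Finset.smul_sum, hf]

/-- The (unnormalized) Fejér kernel `|∑_{p < n} exp (i p t)|²`. -/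
noncomputable def fejer (n : ℕ) (t : ℝ) : ℝ :=
  Complex.normSq (∑ p ∈ range n, trigMonomial p t)

lemma fejer_nonneg (n : ℕ) (t : ℝ) : 0 ≤ fejer n t := Complex.normSq_nonneg _

lemma ofReal_fejer (n : ℕ) (t : ℝ) :
    (fejer n t : ℂ) = ∑ x ∈ range n ×ˢ range n, trigMonomial (x.1 - x.2) t := by
  rw [fejer, Complex.normSq_eq_conj_mul_self, mul_comm, map_sum, Finset.sum_mul_sum,
    ← Finset.sum_product']
  refine Finset.sum_congr rfl fun x _ => ?_
  rw [sub_eq_add_neg, trigMonomial_add_index]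
  simp [trigMonomial, ← Complex.exp_conj]

lemma card_filter_sub_add_eq_zero (n : ℕ) (l : ℤ) :
    #{x ∈ range n ×ˢ range n | l + ((x.1 : ℤ) - x.2) = 0} = n - l.natAbs := by
  have hcard (f : ℕ → ℕ × ℕ) (hf : f.Injective)
      (hmem : ∀ x : ℕ × ℕ, (x ∈ range n ×ˢ range n ∧ l + ((x.1 : ℤ) - x.2) = 0) ↔
        ∃ r < n - l.natAbs, f r = x) :
      #{x ∈ range n ×ˢ range n | l + ((x.1 : ℤ) - x.2) = 0} = n - l.natAbs := by
    rw [show ({x ∈ range n ×ˢ range n | l + ((x.1 : ℤ) - x.2) = 0} : Finset (ℕ × ℕ)) =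
      (range (n - l.natAbs)).image f by ext x; simp [← hmem],
      card_image_of_injective _ hf, card_range]
  obtain ⟨k, rfl | rfl⟩ := Int.eq_nat_or_neg l
  · refine hcard (fun r => (r, r + k)) (fun r s h => (Prod.ext_iff.1 h).1) fun x => ?_
    simp only [mem_product, mem_range, Prod.ext_iff]
    exact ⟨fun h => ⟨x.1, by omega, by omega, by omega⟩, by rintro ⟨r, hr, h₁, h₂⟩; omega⟩
  · refine hcard (fun r => (r + k, r)) (fun r s h => (Prod.ext_iff.1 h).2) fun x => ?_
    simp only [mem_product, mem_range, Prod.ext_iff]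
    exact ⟨fun h => ⟨x.2, by omega, by omega, by omega⟩, by rintro ⟨r, hr, h₁, h₂⟩; omega⟩

lemma sum_trigMonomial_mul_fejer {n : ℕ} {l : ℤ} (hl : |l| ≤ 2 * n) :
    ∑ k ∈ range (4 * n), trigMonomial l (rootAngle (4 * n) k) * fejer n (rootAngle (4 * n) k) =
      4 * n * (n - l.natAbs : ℕ) := by
  simp only [ofReal_fejer, Finset.mul_sum, ← trigMonomial_add_index]
  rw [Finset.sum_comm]
  have hroots (x : ℕ × ℕ) (hx : x ∈ range n ×ˢ range n) :
      ∑ k ∈ range (4 * n), trigMonomial (l + (x.1 - x.2)) (rootAngle (4 * n) k) =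
        if l + ((x.1 : ℤ) - x.2) = 0 then (4 * n : ℂ) else 0 := by
    rw [mem_product, mem_range, mem_range] at hx
    rw [sum_trigMonomial_rootAngle (by rw [abs_le] at hl; rw [abs_lt]; omega)]
    push_cast
    rfl
  rw [Finset.sum_congr rfl hroots, ← Finset.sum_filter, Finset.sum_const,
    card_filter_sub_add_eq_zero, nsmul_eq_mul, mul_comm]

/-- The weights of M. Riesz's formula `f'(0) = ∑ w_k f(θ_k)` for trigonometric polynomials of
degree at most `n`, with nodes `θ_k = rootAngle (4 * n) k`. They sample `2 sin (n t)` times the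
Fejér kernel, whose `j`-th Fourier coefficient is `i j` for `|j| ≤ n`. -/
noncomputable def rieszWeight (n k : ℕ) : ℝ :=
  (4 * n : ℝ)⁻¹ * (2 * Real.sin (n * rootAngle (4 * n) k)) * fejer n (rootAngle (4 * n) k)

lemma sum_abs_rieszWeight_le {n : ℕ} (hn : 1 ≤ n) :
    ∑ k ∈ range (4 * n), |rieszWeight n k| ≤ 2 * n := by
  have hfejer : ∑ k ∈ range (4 * n), fejer n (rootAngle (4 * n) k) = 4 * n * n := by
    have h := sum_trigMonomial_mul_fejer (n := n) (l := 0) (by simp)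
    simp only [trigMonomial_zero_index, one_mul, Int.natAbs_zero, Nat.sub_zero] at h
    exact_mod_cast h
  have hn0 : (0 : ℝ) < n := by exact_mod_cast hn
  calc ∑ k ∈ range (4 * n), |rieszWeight n k|
      ≤ ∑ k ∈ range (4 * n), (4 * n : ℝ)⁻¹ * 2 * fejer n (rootAngle (4 * n) k) := by
        refine Finset.sum_le_sum fun k _ => ?_
        have hsin := Real.abs_sin_le_one (n * rootAngle (4 * n) k)
        rw [rieszWeight, abs_mul, abs_of_nonneg (fejer_nonneg n _), abs_mul,
          abs_of_nonneg (by positivity : (0 : ℝ) ≤ (4 * n : ℝ)⁻¹), abs_mul, abs_two]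
        gcongr
        · exact fejer_nonneg n _
        · linarith
    _ = 2 * n := by
        rw [← Finset.mul_sum, hfejer]
        field_simp [hn0.ne']

lemma rieszWeight_mul_trigMonomial (n k : ℕ) (j : ℤ) :
    (rieszWeight n k : ℂ) * trigMonomial j (rootAngle (4 * n) k) = (4 * n : ℂ)⁻¹ * (-Complex.I) *
      (trigMonomial (n + j) (rootAngle (4 * n) k) * fejer n (rootAngle (4 * n) k) -
        trigMonomial (-n + j) (rootAngle (4 * n) k) * fejer n (rootAngle (4 * n) k)) := by
  set t := rootAngle (4 * n) k with ht
  have hsin : (2 * Real.sin (n * t) : ℂ) =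
      -Complex.I * (trigMonomial n t - trigMonomial (-n) t) := by
    simp only [trigMonomial]
    push_cast
    rw [Complex.sin]
    ring_nf
  rw [trigMonomial_add_index, trigMonomial_add_index, rieszWeight, ← ht]
  push_cast at hsin ⊢
  rw [hsin]
  ring

lemma sum_rieszWeight_mul_trigMonomial {n : ℕ} (hn : 1 ≤ n) {j : ℤ} (hj : |j| ≤ n) :
    ∑ k ∈ range (4 * n), (rieszWeight n k : ℂ) * trigMonomial j (rootAngle (4 * n) k) =
      Complex.I * j := by
  have hn0 : (n : ℂ) ≠ 0 := by exact_mod_cast (by omega : n ≠ 0)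
  rw [abs_le] at hj
  have hcount : ((n - ((n : ℤ) + j).natAbs : ℕ) : ℂ) - (n - (-(n : ℤ) + j).natAbs : ℕ) = -j := by
    have : ((n - ((n : ℤ) + j).natAbs : ℕ) : ℤ) - (n - (-(n : ℤ) + j).natAbs : ℕ) = -j := by omega
    exact_mod_cast this
  rw [Finset.sum_congr rfl fun k _ => rieszWeight_mul_trigMonomial n k j, ← Finset.mul_sum,
    Finset.sum_sub_distrib, sum_trigMonomial_mul_fejer (by rw [abs_le]; omega),
    sum_trigMonomial_mul_fejer (by rw [abs_le]; omega), ← mul_sub, hcount]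
  field_simp [hn0]

lemma hasDerivAt_zero_of_mem_trigPoly {n : ℕ} (hn : 1 ≤ n) {f : ℝ → ℂ} (hf : f ∈ trigPoly n) :
    HasDerivAt f (∑ k ∈ range (4 * n), (rieszWeight n k : ℂ) * f (rootAngle (4 * n) k)) 0 := by
  induction hf using Submodule.span_induction with
  | mem f hf =>
    obtain ⟨j, hj, rfl⟩ := hf
    rw [sum_rieszWeight_mul_trigMonomial hn hj]
    exact hasDerivAt_trigMonomial_zero j
  | zero => simp [hasDerivAt_zero]
  | add f g _ _ hf hg =>
    simpa only [Pi.add_apply, mul_add, Finset.sum_add_distrib] using hf.add hg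
  | smul c f _ hf =>
    refine (hf.const_smul c).congr_deriv ?_
    simp only [Pi.smul_apply, smul_eq_mul, Finset.mul_sum]
    exact Finset.sum_congr rfl fun _ _ => by ring

lemma eval_angularDeriv_eq_sum_planeRot {ι : Type*} [Finite ι] [DecidableEq ι] {a b : ι}
    (hab : a ≠ b) {n : ℕ} (hn : 1 ≤ n) (z : ι → ℝ) {P : MvPolynomial ι ℝ}
    (hP : P.totalDegree ≤ n) :
    eval z (angularDeriv a b P) = ∑ k ∈ range (4 * n),
      rieszWeight n k * eval (planeRot a b (rootAngle (4 * n) k) z) P := by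
  have hriesz := hasDerivAt_zero_of_mem_trigPoly hn
    (trigPoly_mono hP (eval_planeRot_mem_trigPoly a b z P))
  have hderiv := hriesz.unique (hasDerivAt_eval_planeRot hab z 0 P).ofReal_comp
  rw [planeRot_zero] at hderiv
  exact_mod_cast hderiv.symm

end Riesz

/-! ### The `L¹` Bernstein inequality and designs on the circle -/

section Bernstein

variable {d : ℕ}

lemma measurable_eval {ι : Type*} (P : MvPolynomial ι ℝ) :
    Measurable fun z : ι → ℝ => eval z P := by
  induction P using MvPolynomial.induction_on with
  | C c => simp
  | add P Q hP hQ => simpa using! hP.add hQ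
  | mul_X P i hP => simpa using! hP.mul (measurable_pi_apply i)

/-- The `L¹` norm of a polynomial on the sphere. -/
noncomputable def sphereL1 (P : MvPolynomial (Fin (d + 1)) ℝ) : ℝ≥0∞ :=
  ∫⁻ y, ENNReal.ofReal |eval y P| ∂sphereMeasure d

lemma sphereL1_angularDeriv_le {n : ℕ} (hn : 1 ≤ n) (a b : Fin (d + 1))
    {P : MvPolynomial (Fin (d + 1)) ℝ} (hP : P.totalDegree ≤ n) :
    sphereL1 (angularDeriv a b P) ≤ ENNReal.ofReal (2 * n) * sphereL1 P := by
  obtain rfl | hab := eq_or_ne a b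
  · simp [angularDeriv, sphereL1]
  have habs : Measurable fun y : Fin (d + 1) → ℝ => ENNReal.ofReal |eval y P| :=
    (measurable_eval P).abs.ennreal_ofReal
  have hrot (k : ℕ) : Measurable fun y : Fin (d + 1) → ℝ =>
      ENNReal.ofReal |eval (planeRot a b (rootAngle (4 * n) k) y) P| :=
    habs.comp (measurable_planeRot _)
  calc sphereL1 (angularDeriv a b P)
      ≤ ∫⁻ y, ∑ k ∈ range (4 * n), ENNReal.ofReal |rieszWeight n k| *
          ENNReal.ofReal |eval (planeRot a b (rootAngle (4 * n) k) y) P| ∂sphereMeasure d := by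
        refine lintegral_mono fun y => ?_
        simp only [← ENNReal.ofReal_mul (abs_nonneg _), ← abs_mul]
        rw [eval_angularDeriv_eq_sum_planeRot hab hn y hP,
          ← ENNReal.ofReal_sum_of_nonneg fun _ _ => abs_nonneg _]
        exact ENNReal.ofReal_le_ofReal (Finset.abs_sum_le_sum_abs _ _)
    _ = ∑ k ∈ range (4 * n), ENNReal.ofReal |rieszWeight n k| * sphereL1 P := by
        rw [lintegral_finsetSum _ fun k _ => (hrot k).const_mul _]
        refine Finset.sum_congr rfl fun k _ => ?_
        rw [lintegral_const_mul _ (hrot k), lintegral_planeRot hab _ habs, sphereL1]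
    _ ≤ ENNReal.ofReal (2 * n) * sphereL1 P := by
        rw [← Finset.sum_mul, ← ENNReal.ofReal_sum_of_nonneg fun _ _ => abs_nonneg _]
        gcongr
        exact sum_abs_rieszWeight_le hn

end Bernstein

section SpherePoints

variable {d : ℕ}

lemma integrable_eval (P : MvPolynomial (Fin (d + 1)) ℝ) :
    Integrable (fun z => eval z P) (sphereMeasure d) := by
  rw [sphereMeasure, integrable_map_measure (measurable_eval P).aestronglyMeasurable
    measurable_sphere_coe.aemeasurable]
  have hcont : Continuous ((fun z => eval z P) ∘ fun y : Sph d => (y : Euc d).ofLp) :=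
    (MvPolynomial.continuous_eval P).comp (by fun_prop)
  exact hcont.integrable_of_hasCompactSupport (HasCompactSupport.of_compactSpace _)

lemma integral_muSph_eval (P : MvPolynomial (Fin (d + 1)) ℝ) :
    ∫ y, eval (fun j => (y : Euc d) j) P ∂muSph d = ∫ z, eval z P ∂sphereMeasure d := by
  rw [sphereMeasure, integral_map measurable_sphere_coe.aemeasurable
    (measurable_eval P).aestronglyMeasurable]

/-- The point of the sphere with given coordinates. -/
noncomputable def spherePoint (z : Fin (d + 1) → ℝ) (hz : sqNorm z = 1) : Sph d :=
  ⟨WithLp.toLp 2 z, by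
    rw [mem_sphere_zero_iff_norm, ← pow_left_inj₀ (norm_nonneg _) zero_le_one two_ne_zero,
      ← sqNorm_ofLp, one_pow]
    exact hz⟩

lemma integral_eval_planeRot {a b : Fin (d + 1)} (hab : a ≠ b) (t : ℝ)
    (P : MvPolynomial (Fin (d + 1)) ℝ) :
    ∫ y, eval (planeRot a b t y) P ∂sphereMeasure d = ∫ y, eval y P ∂sphereMeasure d := by
  have hrot := measurePreserving_planeRot hab t
  rw [← integral_map hrot.measurable.aemeasurable (measurable_eval P).aestronglyMeasurable,
    hrot.map_eq]

end SpherePoints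

section Circle

lemma exists_eq_planeRot {y : Fin 2 → ℝ} (hy : sqNorm y = 1) :
    ∃ s, y = planeRot 0 1 s ![1, 0] := by
  set w : ℂ := ⟨y 0, y 1⟩ with hw
  have hnorm : ‖w‖ = 1 := by
    rw [sqNorm, Fin.sum_univ_two] at hy
    rw [Complex.norm_def, Complex.normSq_mk, ← pow_two, ← pow_two, hy, Real.sqrt_one]
  have hw0 : w ≠ 0 := norm_ne_zero_iff.1 (hnorm ▸ one_ne_zero)
  have hcos : Real.cos w.arg = y 0 := by rw [Complex.cos_arg hw0, hnorm, div_one]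
  have hsin : Real.sin w.arg = y 1 := by rw [Complex.sin_arg, hnorm, div_one]
  refine ⟨w.arg, funext fun i => ?_⟩
  fin_cases i <;> simp [planeRot, hcos, hsin]

lemma sum_eval_planeRot_rootAngle {n N : ℕ} (hN : n < N) {P : MvPolynomial (Fin 2) ℝ}
    (hP : P.totalDegree ≤ n) {y : Fin 2 → ℝ} (hy : sqNorm y = 1) :
    ∑ k ∈ range N, eval (planeRot 0 1 (rootAngle N k) y) P =
      ∑ k ∈ range N, eval (planeRot 0 1 (rootAngle N k) ![1, 0]) P := by
  obtain ⟨s, rfl⟩ := exists_eq_planeRot hy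
  simp only [planeRot_planeRot (zero_ne_one (α := Fin 2))]
  exact_mod_cast sum_rootAngle_add hN
    (trigPoly_mono hP (eval_planeRot_mem_trigPoly 0 1 ![1, 0] P)) s

lemma exists_isSphericalDesign_circle {n N : ℕ} (hN : n < N) :
    ∃ x : Fin N → Sph 1, IsSphericalDesign 1 n N x := by
  have h01 : (0 : Fin 2) ≠ 1 := zero_ne_one
  have hbase : sqNorm ![(1 : ℝ), 0] = 1 := by simp [sqNorm]
  refine ⟨fun k => spherePoint (planeRot 0 1 (rootAngle N k) ![1, 0])
    (by rw [sqNorm_planeRot h01, hbase]), fun P hP => ?_⟩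
  have hN0 : (N : ℝ) ≠ 0 := by exact_mod_cast (by omega : N ≠ 0)
  have haverage : (N : ℝ) * ∫ y, eval y P ∂sphereMeasure 1 =
      ∑ k ∈ range N, eval (planeRot 0 1 (rootAngle N k) ![1, 0]) P :=
    calc (N : ℝ) * ∫ y, eval y P ∂sphereMeasure 1
        = ∑ k ∈ range N, ∫ y, eval (planeRot 0 1 (rootAngle N k) y) P ∂sphereMeasure 1 := by
          simp [integral_eval_planeRot h01]
      _ = ∫ y, ∑ k ∈ range N, eval (planeRot 0 1 (rootAngle N k) y) P ∂sphereMeasure 1 :=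
          (integral_finsetSum _ fun k _ =>
            (measurePreserving_planeRot h01 _).integrable_comp_of_integrable
              (integrable_eval P)).symm
      _ = ∫ _, ∑ k ∈ range N, eval (planeRot 0 1 (rootAngle N k) ![1, 0]) P ∂sphereMeasure 1 :=
          integral_congr_ae (ae_sqNorm_eq_one.mono fun y hy => sum_eval_planeRot_rootAngle hN hP hy)
      _ = ∑ k ∈ range N, eval (planeRot 0 1 (rootAngle N k) ![1, 0]) P := by simp
  rw [integral_muSph_eval, ← mul_right_inj' hN0, haverage, mul_inv_cancel_left₀ hN0]
  exact (Fin.sum_univ_eq_sum_range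
    (fun k => eval (planeRot 0 1 (rootAngle N k) ![1, 0]) P) N).symm

end Circle

/-! ### Radial extensions and their derivatives -/

section RadialExtension

variable {ι : Type*} [Fintype ι] (P : MvPolynomial ι ℝ)

/-- The extension of the restriction of `P` to the sphere that is constant along rays. -/
noncomputable def radialExt (z : ι → ℝ) : ℝ := eval (radialProj z) P

/-- The gradient of `radialExt P`, written through angular derivatives; see
`hasDerivAt_radialExt_comp`. -/
noncomputable def radialGrad (z : ι → ℝ) (a : ι) : ℝ :=
  ∑ b, z b / sqNorm z * radialExt (angularDeriv b a P) z

/-- The `ℓ¹`-size of the first angular derivatives of `P`, extended along rays. -/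
noncomputable def gradAbs (z : ι → ℝ) : ℝ :=
  ∑ a, ∑ b, |radialExt (angularDeriv a b P) z|

/-- The `ℓ¹`-size of the second angular derivatives of `P`, extended along rays. -/
noncomputable def hessAbs (z : ι → ℝ) : ℝ :=
  ∑ a, ∑ b, gradAbs (angularDeriv a b P) z

variable {z : ι → ℝ}

lemma gradAbs_nonneg (z : ι → ℝ) : 0 ≤ gradAbs P z :=
  Finset.sum_nonneg fun _ _ => Finset.sum_nonneg fun _ _ => abs_nonneg _

lemma hessAbs_nonneg (z : ι → ℝ) : 0 ≤ hessAbs P z :=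
  Finset.sum_nonneg fun _ _ => Finset.sum_nonneg fun _ _ => gradAbs_nonneg _ _

lemma sqrt_sqNorm_mul_radialProj (hz : sqNorm z ≠ 0) (i : ι) :
    √(sqNorm z) * radialProj z i = z i :=
  mul_div_cancel₀ _ (Real.sqrt_pos.2 (sqNorm_pos hz)).ne'

lemma radialGrad_eq (hz : sqNorm z ≠ 0) (a : ι) :
    radialGrad P z a = (eval (radialProj z) (pderiv a P) - radialProj z a *
      ∑ c, radialProj z c * eval (radialProj z) (pderiv c P)) / √(sqNorm z) := by
  have hunit : ∑ b, radialProj z b ^ 2 = 1 := sqNorm_radialProj hz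
  have hterm (b : ι) : z b / sqNorm z * radialExt (angularDeriv b a P) z =
      (radialProj z b ^ 2 * eval (radialProj z) (pderiv a P) -
        radialProj z a * (radialProj z b * eval (radialProj z) (pderiv b P))) / √(sqNorm z) := by
    have hscale : z b / sqNorm z = radialProj z b / √(sqNorm z) := by
      rw [radialProj, div_div, Real.mul_self_sqrt (sqNorm_nonneg z)]
    rw [radialExt, eval_angularDeriv, hscale]
    ring
  simp only [radialGrad, hterm]
  rw [← Finset.sum_div, Finset.sum_sub_distrib, ← Finset.sum_mul, hunit, one_mul, ← Finset.mul_sum]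

lemma radialExt_angularDeriv (hz : sqNorm z ≠ 0) (a b : ι) :
    radialExt (angularDeriv a b P) z = z a * radialGrad P z b - z b * radialGrad P z a := by
  have hpos := Real.sqrt_pos.2 (sqNorm_pos hz)
  rw [radialGrad_eq P hz, radialGrad_eq P hz, radialExt, eval_angularDeriv,
    ← sqrt_sqNorm_mul_radialProj hz a, ← sqrt_sqNorm_mul_radialProj hz b]
  field_simp
  ring

lemma sum_mul_radialGrad (hz : sqNorm z ≠ 0) : ∑ a, z a * radialGrad P z a = 0 := by
  have hpos := Real.sqrt_pos.2 (sqNorm_pos hz)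
  have hunit : ∑ b, radialProj z b ^ 2 = 1 := sqNorm_radialProj hz
  have hterm (a : ι) : z a * radialGrad P z a =
      radialProj z a * eval (radialProj z) (pderiv a P) -
        radialProj z a ^ 2 * ∑ c, radialProj z c * eval (radialProj z) (pderiv c P) := by
    rw [radialGrad_eq P hz, ← sqrt_sqNorm_mul_radialProj hz a]
    field_simp
  simp only [hterm]
  rw [Finset.sum_sub_distrib, ← Finset.sum_mul, hunit, one_mul, sub_self]

section Curve

variable {γ : ℝ → ι → ℝ} {γ' : ι → ℝ} {t : ℝ}

lemma hasDerivAt_sqNorm_comp (hγ : ∀ i, HasDerivAt (fun s => γ s i) (γ' i) t) :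
    HasDerivAt (fun s => sqNorm (γ s)) (2 * ∑ i, γ t i * γ' i) t := by
  unfold sqNorm
  refine (HasDerivAt.fun_sum fun i _ => (hγ i).pow 2).congr_deriv ?_
  rw [Finset.mul_sum]
  exact Finset.sum_congr rfl fun i _ => by simp [mul_assoc]

lemma hasDerivAt_radialProj_comp (hγ : ∀ i, HasDerivAt (fun s => γ s i) (γ' i) t)
    (hz : sqNorm (γ t) ≠ 0) (i : ι) :
    HasDerivAt (fun s => radialProj (γ s) i)
      ((γ' i - radialProj (γ t) i * ∑ j, radialProj (γ t) j * γ' j) / √(sqNorm (γ t))) t := by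
  have hpos := Real.sqrt_pos.2 (sqNorm_pos hz)
  refine ((hγ i).div ((hasDerivAt_sqNorm_comp hγ).sqrt hz) hpos.ne').congr_deriv ?_
  have hinner : ∑ j, γ t j * γ' j = √(sqNorm (γ t)) * ∑ j, radialProj (γ t) j * γ' j := by
    simp only [Finset.mul_sum, ← mul_assoc, sqrt_sqNorm_mul_radialProj hz]
  rw [hinner, ← sqrt_sqNorm_mul_radialProj hz i]
  field_simp

lemma hasDerivAt_radialExt_comp (hγ : ∀ i, HasDerivAt (fun s => γ s i) (γ' i) t)
    (hz : sqNorm (γ t) ≠ 0) :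
    HasDerivAt (fun s => radialExt P (γ s)) (∑ a, γ' a * radialGrad P (γ t) a) t := by
  refine (hasDerivAt_eval_comp P (hasDerivAt_radialProj_comp hγ hz)).congr_deriv ?_
  simp only [radialGrad_eq P hz, mul_div_assoc', ← Finset.sum_div, mul_sub, Finset.sum_sub_distrib]
  congr 2
  · exact Finset.sum_congr rfl fun i _ => mul_comm _ _
  · rw [Finset.sum_congr rfl fun i _ => (mul_assoc _ _ _).symm,
      Finset.sum_congr rfl fun i _ => (mul_assoc (γ' i) _ _).symm, ← Finset.sum_mul,
      ← Finset.sum_mul, mul_comm]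
    congr 1 <;> exact Finset.sum_congr rfl fun i _ => mul_comm _ _

end Curve

section Bounds

lemma abs_div_sqNorm_le (z : ι → ℝ) (b : ι) : |z b / sqNorm z| ≤ (√(sqNorm z))⁻¹ := by
  rw [abs_div, abs_of_nonneg (sqNorm_nonneg z), ← Real.sqrt_div_self, div_eq_mul_inv,
    div_eq_mul_inv]
  exact mul_le_mul_of_nonneg_right (Real.abs_le_sqrt (sq_apply_le_sqNorm z b))
    (inv_nonneg.2 (sqNorm_nonneg z))

lemma sum_abs_radialGrad_le_inv_sqrt_mul (z : ι → ℝ) :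
    ∑ a, |radialGrad P z a| ≤ (√(sqNorm z))⁻¹ * gradAbs P z := by
  rw [gradAbs, Finset.sum_comm, Finset.mul_sum]
  refine Finset.sum_le_sum fun a _ => (Finset.abs_sum_le_sum_abs _ _).trans ?_
  rw [Finset.mul_sum]
  refine Finset.sum_le_sum fun b _ => ?_
  rw [abs_mul]
  exact mul_le_mul_of_nonneg_right (abs_div_sqNorm_le z b) (abs_nonneg _)

lemma inv_sqrt_sqNorm_le_one (hz : 1 ≤ sqNorm z) : (√(sqNorm z))⁻¹ ≤ 1 :=
  inv_le_one_of_one_le₀ (Real.one_le_sqrt.2 hz)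

lemma abs_div_sqNorm_le_one (hz : 1 ≤ sqNorm z) (b : ι) : |z b / sqNorm z| ≤ 1 :=
  (abs_div_sqNorm_le z b).trans (inv_sqrt_sqNorm_le_one hz)

lemma sum_abs_radialGrad_le (hz : 1 ≤ sqNorm z) : ∑ a, |radialGrad P z a| ≤ gradAbs P z :=
  (sum_abs_radialGrad_le_inv_sqrt_mul P z).trans
    (mul_le_of_le_one_left (gradAbs_nonneg P z) (inv_sqrt_sqNorm_le_one hz))

lemma abs_sum_mul_radialGrad_le_mul_sum {w : ι → ℝ} {K : ℝ} (hw : ∀ a, |w a| ≤ K) (z : ι → ℝ) :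
    |∑ a, w a * radialGrad P z a| ≤ K * ∑ a, |radialGrad P z a| := by
  rw [Finset.mul_sum]
  refine (Finset.abs_sum_le_sum_abs _ _).trans (Finset.sum_le_sum fun a _ => ?_)
  rw [abs_mul]
  exact mul_le_mul_of_nonneg_right (hw a) (abs_nonneg _)

lemma abs_sum_mul_radialGrad_le (hz : 1 ≤ sqNorm z) (w : ι → ℝ) :
    |∑ a, w a * radialGrad P z a| ≤ ‖w‖ * gradAbs P z :=
  (abs_sum_mul_radialGrad_le_mul_sum P (norm_le_pi_norm w) z).trans
    (mul_le_mul_of_nonneg_left (sum_abs_radialGrad_le P hz) (norm_nonneg w))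

end Bounds

/-- Since `radialGrad` is orthogonal to `z`, on a face `|z i| = 1` of the cube it is controlled by
its components tangential to the face. -/
lemma gradAbs_le_of_abs_apply_eq_one [DecidableEq ι] {i : ι} (hi : |z i| = 1)
    (hz : ∀ a, |z a| ≤ 3) :
    gradAbs P z ≤ 24 * Fintype.card ι * ∑ a ∈ univ.erase i, |radialGrad P z a| := by
  have hone := sq_apply_le_sqNorm z i
  rw [← sq_abs, hi] at hone
  have hne : sqNorm z ≠ 0 := by linarith
  set S := ∑ a ∈ univ.erase i, |radialGrad P z a| with hS
  have hnormal : |radialGrad P z i| ≤ 3 * S := by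
    have horth := sum_mul_radialGrad P hne
    rw [← Finset.add_sum_erase _ _ (Finset.mem_univ i)] at horth
    rw [← one_mul |_|, ← hi, ← abs_mul, eq_neg_of_add_eq_zero_left horth, abs_neg, hS,
      Finset.mul_sum]
    refine (Finset.abs_sum_le_sum_abs _ _).trans (Finset.sum_le_sum fun a _ => ?_)
    rw [abs_mul]
    exact mul_le_mul_of_nonneg_right (hz a) (abs_nonneg _)
  have htotal : ∑ a, |radialGrad P z a| ≤ 4 * S := by
    rw [← Finset.add_sum_erase _ _ (Finset.mem_univ i)]
    linarith
  have hcoord : ∑ a, |z a| ≤ 3 * Fintype.card ι :=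
    (Finset.sum_le_sum fun a _ => hz a).trans (by simp [mul_comm])
  calc gradAbs P z ≤ ∑ a, ∑ b, (|z a| * |radialGrad P z b| + |radialGrad P z a| * |z b|) := by
        refine Finset.sum_le_sum fun a _ => Finset.sum_le_sum fun b _ => ?_
        rw [radialExt_angularDeriv P hne, ← abs_mul, ← abs_mul, mul_comm (radialGrad P z a)]
        exact abs_sub _ _
    _ = 2 * ((∑ a, |z a|) * ∑ b, |radialGrad P z b|) := by
        simp only [Finset.sum_add_distrib, ← Finset.mul_sum, ← Finset.sum_mul]
        ring
    _ ≤ 2 * (3 * Fintype.card ι * (4 * S)) := by gcongr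
    _ = 24 * Fintype.card ι * S := by ring

end RadialExtension

section Segment

lemma hasDerivAt_segment_apply {ι : Type*} (z w : ι → ℝ) (t : ℝ) (i : ι) :
    HasDerivAt (fun s : ℝ => (z + s • w) i) (w i) t := by
  simpa using ((hasDerivAt_id t).mul_const (w i)).const_add (z i)

variable {ι : Type*} [Fintype ι] (P : MvPolynomial ι ℝ) {z w : ι → ℝ} {t K : ℝ}

lemma abs_sub_le_of_hasDerivAt_Icc {f f' : ℝ → ℝ} {C : ℝ}
    (hf : ∀ t ∈ Set.Icc (0 : ℝ) 1, HasDerivAt f (f' t) t)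
    (hC : ∀ t ∈ Set.Icc (0 : ℝ) 1, |f' t| ≤ C) (ht : t ∈ Set.Icc (0 : ℝ) 1) :
    |f t - f 0| ≤ C := by
  have hmean := (convex_Icc (0 : ℝ) 1).norm_image_sub_le_of_norm_hasDerivWithin_le
    (fun x hx => (hf x hx).hasDerivWithinAt) hC (Set.left_mem_Icc.2 zero_le_one) ht
  refine hmean.trans ?_
  rw [sub_zero, Real.norm_of_nonneg ht.1]
  exact mul_le_of_le_one_right ((abs_nonneg _).trans (hC t ht)) ht.2

lemma abs_deriv_div_sqNorm_le {u : ι → ℝ} (hu : 1 ≤ sqNorm u) (w : ι → ℝ) (b : ι) :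
    |(w b * sqNorm u - u b * (2 * ∑ i, u i * w i)) / sqNorm u ^ 2| ≤
      ‖w‖ * (2 * Fintype.card ι + 1) := by
  have hpos : 0 < sqNorm u := by linarith
  have hfirst : |w b / sqNorm u| ≤ ‖w‖ := by
    rw [abs_div, abs_of_pos hpos]
    exact (div_le_self (abs_nonneg _) hu).trans (norm_le_pi_norm w b)
  have hinner : |∑ i, u i / sqNorm u * w i| ≤ Fintype.card ι * ‖w‖ := by
    refine (Finset.abs_sum_le_sum_abs _ _).trans
      ((Finset.sum_le_card_nsmul _ _ ‖w‖ fun i _ => ?_).trans_eq (by simp))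
    rw [abs_mul]
    exact (mul_le_of_le_one_left (abs_nonneg _) (abs_div_sqNorm_le_one hu i)).trans
      (norm_le_pi_norm w i)
  have hsplit : (w b * sqNorm u - u b * (2 * ∑ i, u i * w i)) / sqNorm u ^ 2 =
      w b / sqNorm u - u b / sqNorm u * (2 * ∑ i, u i / sqNorm u * w i) := by
    simp only [div_mul_eq_mul_div, ← Finset.sum_div]
    field_simp
  have hsecond : |u b / sqNorm u * (2 * ∑ i, u i / sqNorm u * w i)| ≤
      2 * (Fintype.card ι * ‖w‖) := by
    rw [abs_mul, abs_mul, abs_two]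
    refine (mul_le_of_le_one_left (by positivity) (abs_div_sqNorm_le_one hu b)).trans ?_
    linarith
  rw [hsplit]
  linarith [abs_sub (w b / sqNorm u) (u b / sqNorm u * (2 * ∑ i, u i / sqNorm u * w i))]

lemma exists_hasDerivAt_sum_mul_radialGrad (hz : 1 ≤ sqNorm (z + t • w)) :
    ∃ D, HasDerivAt (fun s : ℝ => ∑ a, w a * radialGrad P (z + s • w) a) D t ∧
      |D| ≤ ‖w‖ ^ 2 * ((2 * Fintype.card ι + 1) * gradAbs P (z + t • w) +
        hessAbs P (z + t • w)) := by
  have hne : sqNorm (z + t • w) ≠ 0 := by linarith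
  have hline := hasDerivAt_segment_apply z w t
  have hterm (a b : ι) := ((hline b).div (hasDerivAt_sqNorm_comp hline) hne).mul
    (hasDerivAt_radialExt_comp (angularDeriv b a P) hline hne)
  refine ⟨_, HasDerivAt.fun_sum fun a _ =>
    (HasDerivAt.fun_sum fun b _ => hterm a b).const_mul (w a), ?_⟩
  set u := z + t • w
  have hbound (a b : ι) : |(w b * sqNorm u - u b * (2 * ∑ i, u i * w i)) / sqNorm u ^ 2 *
        radialExt (angularDeriv b a P) u +
        u b / sqNorm u * ∑ c, w c * radialGrad (angularDeriv b a P) u c| ≤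
      ‖w‖ * ((2 * Fintype.card ι + 1) * |radialExt (angularDeriv b a P) u| +
        gradAbs (angularDeriv b a P) u) := by
    refine (abs_add_le _ _).trans ?_
    rw [abs_mul, abs_mul, mul_add, ← mul_assoc ‖w‖]
    exact add_le_add
      (mul_le_mul_of_nonneg_right (abs_deriv_div_sqNorm_le hz w b) (abs_nonneg _))
      ((mul_le_of_le_one_left (abs_nonneg _) (abs_div_sqNorm_le_one hz b)).trans
        (abs_sum_mul_radialGrad_le _ hz w))
  calc _ ≤ ∑ a, ‖w‖ * ∑ b, ‖w‖ * ((2 * Fintype.card ι + 1) *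
          |radialExt (angularDeriv b a P) u| + gradAbs (angularDeriv b a P) u) := by
        refine (Finset.abs_sum_le_sum_abs _ _).trans (Finset.sum_le_sum fun a _ => ?_)
        rw [abs_mul]
        exact mul_le_mul (norm_le_pi_norm w a) ((Finset.abs_sum_le_sum_abs _ _).trans
          (Finset.sum_le_sum fun b _ => hbound a b)) (abs_nonneg _) (norm_nonneg w)
    _ = _ := by
        rw [gradAbs, hessAbs, Finset.sum_comm (f := fun a b => |radialExt (angularDeriv a b P) u|),
          Finset.sum_comm (f := fun a b => gradAbs (angularDeriv a b P) u)]
        simp only [← Finset.mul_sum, Finset.sum_add_distrib]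
        ring

lemma abs_radialExt_add_sub_le (hz : ∀ t ∈ Set.Icc (0 : ℝ) 1, 1 ≤ sqNorm (z + t • w))
    (hK : ∀ t ∈ Set.Icc (0 : ℝ) 1, gradAbs P (z + t • w) ≤ K) :
    |radialExt P (z + w) - radialExt P z| ≤ ‖w‖ * K := by
  have hmean := abs_sub_le_of_hasDerivAt_Icc
    (fun t ht => hasDerivAt_radialExt_comp P (hasDerivAt_segment_apply z w t)
      (by linarith [hz t ht] : sqNorm (z + t • w) ≠ 0))
    (fun t ht => (abs_sum_mul_radialGrad_le P (hz t ht) w).trans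
      (mul_le_mul_of_nonneg_left (hK t ht) (norm_nonneg w))) (Set.right_mem_Icc.2 zero_le_one)
  simpa only [one_smul, zero_smul, add_zero] using hmean

lemma abs_radialExt_add_sub_sub_le (hz : ∀ t ∈ Set.Icc (0 : ℝ) 1, 1 ≤ sqNorm (z + t • w))
    (hK : ∀ t ∈ Set.Icc (0 : ℝ) 1, gradAbs P (z + t • w) + hessAbs P (z + t • w) ≤ K) :
    |radialExt P (z + w) - radialExt P z - ∑ a, w a * radialGrad P z a| ≤
      ‖w‖ ^ 2 * (2 * Fintype.card ι + 1) * K := by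
  choose! D hD hDle using fun t ht => exists_hasDerivAt_sum_mul_radialGrad P (hz t ht)
  have hDK (t) (ht : t ∈ Set.Icc (0 : ℝ) 1) :
      |D t| ≤ ‖w‖ ^ 2 * (2 * Fintype.card ι + 1) * K := by
    have hcard : (0 : ℝ) ≤ Fintype.card ι := by positivity
    have hhess := hessAbs_nonneg P (z + t • w)
    refine (hDle t ht).trans ?_
    rw [mul_assoc]
    refine mul_le_mul_of_nonneg_left ?_ (sq_nonneg _)
    nlinarith [mul_nonneg hcard hhess, mul_le_mul_of_nonneg_left (hK t ht) hcard, hK t ht]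
  have hslope (t) (ht : t ∈ Set.Icc (0 : ℝ) 1) := abs_sub_le_of_hasDerivAt_Icc hD hDK ht
  have hmean := abs_sub_le_of_hasDerivAt_Icc
    (f := fun t : ℝ => radialExt P (z + t • w) - t * ∑ a, w a * radialGrad P z a)
    (fun t ht => ((hasDerivAt_radialExt_comp P (hasDerivAt_segment_apply z w t)
      (by linarith [hz t ht] : sqNorm (z + t • w) ≠ 0)).sub
        ((hasDerivAt_id t).mul_const _)).congr_deriv (by rw [one_mul]))
    (fun t ht => by simpa only [zero_smul, add_zero] using hslope t ht)
    (Set.right_mem_Icc.2 zero_le_one)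
  simp only [one_smul, zero_smul, add_zero, one_mul, zero_mul, sub_zero] at hmean
  rwa [sub_right_comm]

end Segment

/-! ### A Sobolev inequality on boxes -/

section Continuity

variable {ι : Type*} [Fintype ι] (P : MvPolynomial ι ℝ) {z : ι → ℝ}

lemma measurable_radialExt : Measurable (radialExt P) :=
  (measurable_eval P).comp measurable_radialProj

lemma continuousAt_radialExt (hz : sqNorm z ≠ 0) : ContinuousAt (radialExt P) z := by
  refine (MvPolynomial.continuous_eval P).continuousAt.comp (continuousAt_pi.2 fun i => ?_)
  exact (continuous_apply i).continuousAt.div continuous_sqNorm.sqrt.continuousAt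
    (Real.sqrt_pos.2 (sqNorm_pos hz)).ne'

lemma continuousAt_radialGrad (hz : sqNorm z ≠ 0) (a : ι) :
    ContinuousAt (fun z => radialGrad P z a) z :=
  tendsto_finsetSum _ fun b _ => ((continuous_apply b).continuousAt.div
    continuous_sqNorm.continuousAt hz).mul (continuousAt_radialExt _ hz)

lemma continuousAt_gradAbs (hz : sqNorm z ≠ 0) : ContinuousAt (gradAbs P) z :=
  tendsto_finsetSum _ fun _ _ => tendsto_finsetSum _ fun _ _ => (continuousAt_radialExt _ hz).abs

lemma continuousAt_hessAbs (hz : sqNorm z ≠ 0) : ContinuousAt (hessAbs P) z :=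
  tendsto_finsetSum _ fun _ _ => tendsto_finsetSum _ fun _ _ => continuousAt_gradAbs _ hz

end Continuity

section Interval

lemma ofReal_abs_sub_le_setLIntegral_deriv {f f' : ℝ → ℝ} {a b : ℝ}
    (hf : ∀ t ∈ Set.Icc a b, HasDerivAt f (f' t) t) (hf' : ContinuousOn f' (Set.Icc a b)) {s t : ℝ}
    (hs : s ∈ Set.Icc a b) (ht : t ∈ Set.Icc a b) :
    ENNReal.ofReal |f t - f s| ≤ ∫⁻ x in Set.Icc a b, ENNReal.ofReal |f' x| := by
  wlog hst : s ≤ t generalizing s t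
  · rw [abs_sub_comm]
    exact this ht hs (le_of_not_ge hst)
  have hsub : Set.uIcc s t ⊆ Set.Icc a b := by
    rw [Set.uIcc_of_le hst]
    exact Set.Icc_subset_Icc hs.1 ht.2
  rw [← intervalIntegral.integral_eq_sub_of_hasDerivAt (fun x hx => hf x (hsub hx))
    (hf'.mono hsub).intervalIntegrable, intervalIntegral.integral_of_le hst]
  have hnorm := enorm_integral_le_lintegral_enorm (μ := volume.restrict (Set.Ioc s t)) f'
  simp only [← ofReal_norm, Real.norm_eq_abs] at hnorm
  exact hnorm.trans
    (lintegral_mono_set (Set.Ioc_subset_Icc_self.trans (Set.Icc_subset_Icc hs.1 ht.2)))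

lemma ofReal_abs_le_setLIntegral_add {f f' : ℝ → ℝ} {a ℓ : ℝ} (hℓ : 0 < ℓ)
    (hf : ∀ t ∈ Set.Icc a (a + ℓ), HasDerivAt f (f' t) t)
    (hf' : ContinuousOn f' (Set.Icc a (a + ℓ))) {s : ℝ} (hs : s ∈ Set.Icc a (a + ℓ)) :
    ENNReal.ofReal |f s| ≤ ENNReal.ofReal ℓ⁻¹ *
      ((∫⁻ x in Set.Icc a (a + ℓ), ENNReal.ofReal |f x|) +
        ENNReal.ofReal ℓ * ∫⁻ x in Set.Icc a (a + ℓ), ENNReal.ofReal |f' x|) := by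
  set J := ∫⁻ x in Set.Icc a (a + ℓ), ENNReal.ofReal |f' x|
  have hconst (r : ℝ≥0∞) : ENNReal.ofReal ℓ * r = ∫⁻ _ in Set.Icc a (a + ℓ), r := by
    rw [setLIntegral_const, Real.volume_Icc, add_sub_cancel_left, mul_comm]
  have hmean : ENNReal.ofReal ℓ * ENNReal.ofReal |f s| ≤
      (∫⁻ x in Set.Icc a (a + ℓ), ENNReal.ofReal |f x|) + ENNReal.ofReal ℓ * J := by
    rw [hconst, hconst, ← lintegral_add_right _ measurable_const]
    refine setLIntegral_mono' measurableSet_Icc fun t ht => ?_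
    refine le_trans ?_ (add_le_add_right (ofReal_abs_sub_le_setLIntegral_deriv hf hf' ht hs) _)
    rw [← ENNReal.ofReal_add (abs_nonneg _) (abs_nonneg _)]
    exact ENNReal.ofReal_le_ofReal (by simpa using abs_add_le (f t) (f s - f t))
  calc ENNReal.ofReal |f s| = ENNReal.ofReal ℓ⁻¹ * (ENNReal.ofReal ℓ * ENNReal.ofReal |f s|) := by
        rw [← mul_assoc, ← ENNReal.ofReal_mul (by positivity), inv_mul_cancel₀ hℓ.ne',
          ENNReal.ofReal_one, one_mul]
    _ ≤ _ := by gcongr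

end Interval

/-- The sum of the absolute values of the angular derivatives of `Q` of order at most `k`, each
weighted by the power of `h` equal to its order (and a combinatorial multiplicity). -/
noncomputable def jetAbs {ι : Type*} [Fintype ι] (h : ℝ) :
    ℕ → MvPolynomial ι ℝ → (ι → ℝ) → ℝ≥0∞
  | 0, Q, y => ENNReal.ofReal |eval y Q|
  | k + 1, Q, y => jetAbs h k Q y + ENNReal.ofReal h * ∑ a, ∑ b, jetAbs h k (angularDeriv a b Q) y

lemma measurable_jetAbs {ι : Type*} [Fintype ι] (h : ℝ) (k : ℕ) (Q : MvPolynomial ι ℝ) :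
    Measurable (jetAbs h k Q) := by
  induction k generalizing Q with
  | zero => exact (measurable_eval Q).abs.ennreal_ofReal
  | succ k ih =>
    exact (ih Q).add ((Finset.measurable_fun_sum _ fun a _ =>
      Finset.measurable_fun_sum _ fun b _ => ih _).const_mul _)

lemma lintegral_jetAbs_le {d n : ℕ} (hn : 1 ≤ n) {h : ℝ} (hh : 0 ≤ h) (k : ℕ)
    {Q : MvPolynomial (Fin (d + 1)) ℝ} (hQ : Q.totalDegree ≤ n) :
    ∫⁻ y, jetAbs h k Q y ∂sphereMeasure d ≤
      ENNReal.ofReal ((1 + h * (d + 1) ^ 2 * (2 * n)) ^ k) * sphereL1 Q := by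
  induction k generalizing Q with
  | zero => simp [jetAbs, sphereL1]
  | succ k ih =>
    set A := ENNReal.ofReal ((1 + h * (d + 1) ^ 2 * (2 * n)) ^ k) with hA
    have hderiv (a b : Fin (d + 1)) : ∫⁻ y, jetAbs h k (angularDeriv a b Q) y ∂sphereMeasure d ≤
        A * (ENNReal.ofReal (2 * n) * sphereL1 Q) :=
      (ih ((totalDegree_angularDeriv_le a b Q).trans hQ)).trans
        (mul_le_mul_right (sphereL1_angularDeriv_le hn a b hQ) _)
    have hmeas (a : Fin (d + 1)) : Measurable fun y => ∑ b, jetAbs h k (angularDeriv a b Q) y :=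
      Finset.measurable_fun_sum _ fun b _ => measurable_jetAbs _ _ _
    calc ∫⁻ y, jetAbs h (k + 1) Q y ∂sphereMeasure d
        = ∫⁻ y, jetAbs h k Q y ∂sphereMeasure d + ENNReal.ofReal h *
            ∑ a, ∑ b, ∫⁻ y, jetAbs h k (angularDeriv a b Q) y ∂sphereMeasure d := by
          simp only [jetAbs]
          rw [lintegral_add_left (measurable_jetAbs _ _ _),
            lintegral_const_mul' _ _ ENNReal.ofReal_ne_top,
            lintegral_finsetSum _ fun a _ => hmeas a]
          simp only [lintegral_finsetSum _ fun _ _ => measurable_jetAbs _ _ _]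
      _ ≤ A * sphereL1 Q + ENNReal.ofReal h * ∑ _a : Fin (d + 1), ∑ _b : Fin (d + 1),
            A * (ENNReal.ofReal (2 * n) * sphereL1 Q) := by
          gcongr with a _ b _
          · exact ih hQ
          · exact hderiv a b
      _ = _ := by
          have hcast : ((d + 1 : ℕ) : ℝ≥0∞) = ENNReal.ofReal (d + 1 : ℝ) := by
            rw [← ENNReal.ofReal_natCast, Nat.cast_succ]
          have hfactor : ENNReal.ofReal ((1 + h * (d + 1) ^ 2 * (2 * n)) ^ (k + 1)) =
              A * (1 + ENNReal.ofReal h * (d + 1 : ℕ) ^ 2 * ENNReal.ofReal (2 * n)) := by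
            rw [pow_succ, ENNReal.ofReal_mul (by positivity), ← hA, hcast,
              ENNReal.ofReal_add (by positivity) (by positivity),
              ENNReal.ofReal_mul (by positivity), ENNReal.ofReal_mul hh,
              ENNReal.ofReal_pow (by positivity), ENNReal.ofReal_one]
          rw [hfactor]
          simp only [Finset.sum_const, Finset.card_univ, Fintype.card_fin, nsmul_eq_mul]
          ring

section Box

lemma one_le_sqNorm_of_one_le_abs {ι : Type*} [Fintype ι] {z : ι → ℝ} {i : ι} (hi : 1 ≤ |z i|) :
    1 ≤ sqNorm z := by
  have hsq := sq_apply_le_sqNorm z i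
  rw [← sq_abs] at hsq
  nlinarith

variable {ι : Type*} [Fintype ι] [DecidableEq ι] (Q : MvPolynomial ι ℝ)

lemma hasDerivAt_radialExt_update {u : ι → ℝ} {j : ι} {t : ℝ}
    (hu : sqNorm (Function.update u j t) ≠ 0) :
    HasDerivAt (fun t => radialExt Q (Function.update u j t))
      (radialGrad Q (Function.update u j t) j) t := by
  refine (hasDerivAt_radialExt_comp Q (γ' := Pi.single j 1) (fun c => ?_) hu).congr_deriv ?_
  · obtain rfl | hc := eq_or_ne c j
    · simpa using hasDerivAt_id' t
    · simpa [Function.update_of_ne hc, hc] using hasDerivAt_const t (u c)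
  · simp [Pi.single_apply]

lemma ofReal_abs_radialExt_le_setLIntegral_update {h ℓ a : ℝ} (hℓ : 0 < ℓ) (hℓh : ℓ ≤ h)
    {u : ι → ℝ} {j : ι} (hu : ∀ t, 1 ≤ sqNorm (Function.update u j t))
    (huj : u j ∈ Set.Icc a (a + ℓ)) :
    ENNReal.ofReal |radialExt Q u| ≤ ENNReal.ofReal ℓ⁻¹ * ∫⁻ t in Set.Icc a (a + ℓ),
      jetAbs h 1 Q (radialProj (Function.update u j t)) := by
  have hne (t : ℝ) : sqNorm (Function.update u j t) ≠ 0 := by linarith [hu t]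
  have hcont : Continuous fun t => radialGrad Q (Function.update u j t) j :=
    continuous_iff_continuousAt.2 fun t => ContinuousAt.comp (g := fun z => radialGrad Q z j)
      (continuousAt_radialGrad Q (hne t) j) (continuous_const.update j continuous_id).continuousAt
  have hsobolev := ofReal_abs_le_setLIntegral_add hℓ
    (fun t _ => hasDerivAt_radialExt_update Q (hne t)) hcont.continuousOn huj
  rw [Function.update_eq_self] at hsobolev
  refine hsobolev.trans (mul_le_mul_right ?_ _)
  have hmeas : Measurable fun t => ENNReal.ofReal |radialExt Q (Function.update u j t)| :=
    ((measurable_radialExt Q).comp (measurable_update u)).abs.ennreal_ofReal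
  rw [← lintegral_const_mul' _ _ ENNReal.ofReal_ne_top, ← lintegral_add_left hmeas]
  refine lintegral_mono fun t => add_le_add le_rfl ?_
  refine mul_le_mul' (ENNReal.ofReal_le_ofReal hℓh) ?_
  simp only [jetAbs]
  simp_rw [← ENNReal.ofReal_sum_of_nonneg fun _ _ => abs_nonneg _]
  rw [← ENNReal.ofReal_sum_of_nonneg fun _ _ => Finset.sum_nonneg fun _ _ => abs_nonneg _]
  exact ENNReal.ofReal_le_ofReal ((Finset.single_le_sum (fun a _ => abs_nonneg _)
    (Finset.mem_univ j)).trans (sum_abs_radialGrad_le Q (hu t)))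

lemma lmarginal_jetAbs_succ (μ : ι → Measure ℝ) [∀ i, SigmaFinite (μ i)] (h : ℝ) (s : Finset ι)
    (k : ℕ) (v : ι → ℝ) :
    lmarginal μ s (fun z => jetAbs h (k + 1) Q (radialProj z)) v =
      lmarginal μ s (fun z => jetAbs h k Q (radialProj z)) v + ENNReal.ofReal h *
        ∑ a, ∑ b, lmarginal μ s (fun z => jetAbs h k (angularDeriv a b Q) (radialProj z)) v := by
  have hmeas (R : MvPolynomial ι ℝ) :
      Measurable fun y : s → ℝ => jetAbs h k R (radialProj (Function.updateFinset v s y)) :=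
    (measurable_jetAbs _ _ _).comp (measurable_radialProj.comp measurable_updateFinset)
  simp only [lmarginal, jetAbs]
  rw [lintegral_add_left (hmeas _), lintegral_const_mul' _ _ ENNReal.ofReal_ne_top,
    lintegral_finsetSum _ fun a _ => Finset.measurable_fun_sum _ fun _ _ => hmeas _]
  simp only [lintegral_finsetSum _ fun _ _ => hmeas _]

lemma ofReal_abs_radialExt_le_lmarginal {h ℓ : ℝ} (hℓ : 0 < ℓ) (hℓh : ℓ ≤ h) (α : ι → ℝ) {i : ι}
    {s : Finset ι} (his : i ∉ s) {u : ι → ℝ} (hi : 1 ≤ |u i|)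
    (hu : ∀ j ∈ s, u j ∈ Set.Icc (α j) (α j + ℓ)) :
    ENNReal.ofReal |radialExt Q u| ≤ ENNReal.ofReal ℓ⁻¹ ^ s.card *
      lmarginal (fun j => volume.restrict (Set.Icc (α j) (α j + ℓ))) s
        (fun z => jetAbs h s.card Q (radialProj z)) u := by
  induction s using Finset.induction_on generalizing Q u with
  | empty => simp [jetAbs, radialExt]
  | insert j s hj ih =>
    obtain ⟨hij, his⟩ : i ≠ j ∧ i ∉ s := by simpa [not_or] using his
    have hface (t : ℝ) : 1 ≤ |Function.update u j t i| := by rwa [Function.update_of_ne hij]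
    have hbox (t : ℝ) : ∀ c ∈ s, Function.update u j t c ∈ Set.Icc (α c) (α c + ℓ) := by
      intro c hc
      rw [Function.update_of_ne (ne_of_mem_of_not_mem hc hj)]
      exact hu c (Finset.mem_insert_of_mem hc)
    refine (ofReal_abs_radialExt_le_setLIntegral_update Q hℓ hℓh
      (fun t => one_le_sqNorm_of_one_le_abs (hface t)) (hu j (Finset.mem_insert_self _ _))).trans ?_
    have hmeas : Measurable fun z => jetAbs h (insert j s).card Q (radialProj z) :=
      (measurable_jetAbs _ _ _).comp measurable_radialProj
    rw [lmarginal_insert _ hmeas hj, Finset.card_insert_of_notMem hj, pow_succ', mul_assoc]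
    refine mul_le_mul_right ?_ _
    rw [← lintegral_const_mul' _ _ (by finiteness)]
    refine lintegral_mono fun t => ?_
    rw [lmarginal_jetAbs_succ, mul_add]
    refine add_le_add (ih Q his (hface t) (hbox t)) ?_
    rw [mul_left_comm]
    refine mul_le_mul_right ?_ _
    simp only [Finset.mul_sum]
    gcongr with a _ b _
    exact ih (angularDeriv a b Q) his (hface t) (hbox t)

end Box

/-! ### Boxes on the faces of a cube and the cones over them -/

section FaceBox

variable {ι : Type*}

/-- The box of side `ℓ` with corner `β` inside the affine hyperplane `u i = σ`. -/
def faceBox (i : ι) (σ : ℝ) (β : ι → ℝ) (ℓ : ℝ) : Set (ι → ℝ) :=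
  {u | u i = σ ∧ ∀ j, j ≠ i → u j ∈ Set.Icc (β j) (β j + ℓ)}

/-- The part of the cone over `faceBox i σ β ℓ` at the heights `σ * x i ∈ T`. It is meant for
`σ = ±1`, when the height of a point of the face box is `1`. -/
def faceCone (i : ι) (σ : ℝ) (β : ι → ℝ) (ℓ : ℝ) (T : Set ℝ) : Set (ι → ℝ) :=
  {x | σ * x i ∈ T ∧ ∀ j, j ≠ i → x j ∈ Set.Icc (σ * x i * β j) (σ * x i * β j + σ * x i * ℓ)}

variable {i : ι} {σ ℓ : ℝ} {β : ι → ℝ} {T : Set ℝ}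

lemma faceBox_eq_pi [DecidableEq ι] (i : ι) (σ : ℝ) (β : ι → ℝ) (ℓ : ℝ) :
    faceBox i σ β ℓ =
      Set.univ.pi fun j => if j = i then {σ} else Set.Icc (β j) (β j + ℓ) := by
  ext u
  simp only [faceBox, Set.mem_ofPred_eq, Set.mem_univ_pi]
  refine ⟨fun hu j => ?_, fun hu => ⟨by simpa using hu i, fun j hj => by simpa [hj] using hu j⟩⟩
  obtain rfl | hj := eq_or_ne j i
  · simpa using hu.1
  · simpa [hj] using hu.2 j hj

lemma isCompact_faceBox (i : ι) (σ : ℝ) (β : ι → ℝ) (ℓ : ℝ) : IsCompact (faceBox i σ β ℓ) := by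
  classical
  rw [faceBox_eq_pi]
  refine isCompact_univ_pi fun j => ?_
  split_ifs
  exacts [isCompact_singleton, isCompact_Icc]

lemma convex_faceBox (i : ι) (σ : ℝ) (β : ι → ℝ) (ℓ : ℝ) : Convex ℝ (faceBox i σ β ℓ) := by
  classical
  rw [faceBox_eq_pi]
  refine convex_pi fun j _ => ?_
  split_ifs
  exacts [convex_singleton σ, convex_Icc _ _]

lemma norm_sub_le_of_mem_faceBox [Fintype ι] (hℓ : 0 ≤ ℓ) {u v : ι → ℝ}
    (hu : u ∈ faceBox i σ β ℓ) (hv : v ∈ faceBox i σ β ℓ) : ‖v - u‖ ≤ ℓ := by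
  refine (pi_norm_le_iff_of_nonneg hℓ).2 fun j => ?_
  rw [Pi.sub_apply, Real.norm_eq_abs]
  obtain rfl | hj := eq_or_ne j i
  · rwa [hu.1, hv.1, sub_self, abs_zero]
  · obtain ⟨hu₁, hu₂⟩ := hu.2 j hj
    obtain ⟨hv₁, hv₂⟩ := hv.2 j hj
    exact abs_sub_le_iff.2 ⟨by linarith, by linarith⟩

lemma inv_smul_mem_faceBox (hσ : |σ| = 1) {x : ι → ℝ} (hx : x ∈ faceCone i σ β ℓ T)
    (hpos : 0 < σ * x i) : (σ * x i)⁻¹ • x ∈ faceBox i σ β ℓ := by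
  have hσσ : σ * σ = 1 := by rw [← abs_mul_abs_self, hσ, one_mul]
  refine ⟨?_, fun j hj => ?_⟩
  · rw [Pi.smul_apply, smul_eq_mul, inv_mul_eq_iff_eq_mul₀ hpos.ne']
    linear_combination -x i * hσσ
  · obtain ⟨hlo, hhi⟩ := hx.2 j hj
    rw [Pi.smul_apply, smul_eq_mul]
    refine ⟨(le_inv_mul_iff₀ hpos).2 hlo, (inv_mul_le_iff₀ hpos).2 (hhi.trans_eq ?_)⟩
    rw [mul_add]

lemma smul_mem_faceCone_Ioi {x : ι → ℝ} (hx : x ∈ faceCone i σ β ℓ (Set.Ioi 0)) {r : ℝ}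
    (hr : 0 < r) : r • x ∈ faceCone i σ β ℓ (Set.Ioi 0) := by
  have hheight : σ * (r • x) i = r * (σ * x i) := by rw [Pi.smul_apply, smul_eq_mul]; ring
  rw [faceCone, Set.mem_ofPred_eq, hheight]
  refine ⟨mul_pos hr hx.1, fun j hj => ?_⟩
  obtain ⟨hlo, hhi⟩ := hx.2 j hj
  rw [Pi.smul_apply, smul_eq_mul, mul_assoc, mul_assoc r, ← mul_add]
  exact ⟨mul_le_mul_of_nonneg_left hlo hr.le, mul_le_mul_of_nonneg_left hhi hr.le⟩

lemma volume_preimage_mul_of_abs_eq_one (hσ : |σ| = 1) (T : Set ℝ) :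
    volume ((σ * ·) ⁻¹' T) = volume T := by
  have hσ0 : σ ≠ 0 := abs_pos.1 (hσ ▸ one_pos)
  simpa [abs_inv, hσ] using Real.volume_preimage_mul_left hσ0 T

lemma measurableSet_faceCone [Countable ι] (hT : MeasurableSet T) :
    MeasurableSet (faceCone i σ β ℓ T) := by
  have hinter : faceCone i σ β ℓ T = {x | σ * x i ∈ T} ∩ ⋂ j, ⋂ (_ : j ≠ i),
      {x | σ * x i * β j ≤ x j} ∩ {x | x j ≤ σ * x i * β j + σ * x i * ℓ} := by
    ext x
    simp [faceCone]
  rw [hinter]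
  have hheight : Measurable fun x : ι → ℝ => σ * x i := by fun_prop
  refine (hheight hT).inter
    (MeasurableSet.iInter fun j => MeasurableSet.iInter fun _ => ?_)
  exact (measurableSet_le (by fun_prop) (by fun_prop)).inter
    (measurableSet_le (by fun_prop) (by fun_prop))

variable [Fintype ι] [DecidableEq ι]

lemma updateFinset_update_mem_faceCone_iff (u : ι → ℝ) (t : ℝ)
    (y : ↥(univ.erase i) → ℝ) :
    Function.updateFinset (Function.update u i t) (univ.erase i) y ∈ faceCone i σ β ℓ T ↔
      σ * t ∈ T ∧ y ∈ Set.univ.pi fun j : ↥(univ.erase i) =>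
        Set.Icc (σ * t * β j) (σ * t * β j + σ * t * ℓ) := by
  have hi : Function.updateFinset (Function.update u i t) (univ.erase i) y i = t := by
    simp [Function.updateFinset]
  simp only [faceCone, Set.mem_ofPred_eq, hi, Set.mem_univ_pi, Subtype.forall]
  refine and_congr_right fun _ => forall_congr' fun j => ?_
  constructor
  · intro h hj
    simpa [Function.updateFinset, (Finset.mem_erase.1 hj).1] using h (Finset.mem_erase.1 hj).1
  · intro h hj
    simpa [Function.updateFinset, hj] using h (by simpa using hj)

lemma setLIntegral_faceCone (hT : MeasurableSet T) {F : (ι → ℝ) → ℝ≥0∞} (hF : Measurable F)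
    (u : ι → ℝ) :
    ∫⁻ x in faceCone i σ β ℓ T, F x = ∫⁻ t in (σ * ·) ⁻¹' T,
      lmarginal (fun j => volume.restrict (Set.Icc (σ * t * β j) (σ * t * β j + σ * t * ℓ)))
        (univ.erase i) F (Function.update u i t) := by
  classical
  have hcone : MeasurableSet (faceCone i σ β ℓ T) := measurableSet_faceCone hT
  rw [← lintegral_indicator hcone, ← lintegral_indicator (measurable_const_mul σ hT),
    volume_pi, lintegral_eq_lmarginal_univ (μ := fun _ => volume) u,
    lmarginal_erase _ (hF.indicator hcone) (Finset.mem_univ i)]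
  refine lintegral_congr fun t => ?_
  simp only [lmarginal]
  by_cases ht : σ * t ∈ T
  · rw [Set.indicator_of_mem (by exact ht), ← Measure.restrict_pi_pi,
      ← lintegral_indicator (MeasurableSet.univ_pi fun _ => measurableSet_Icc)]
    refine lintegral_congr fun y => ?_
    simp only [Set.indicator_apply, updateFinset_update_mem_faceCone_iff, ht, true_and]
  · rw [Set.indicator_of_notMem (by exact ht)]
    simp only [Set.indicator_apply, updateFinset_update_mem_faceCone_iff, ht, false_and, if_false,
      lintegral_zero]

end FaceBox

lemma volume_faceCone_Ioc_le {d : ℕ} {i : Fin (d + 1)} {σ : ℝ} (hσ : |σ| = 1) {ℓ : ℝ} (hℓ : 0 ≤ ℓ)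
    (β : Fin (d + 1) → ℝ) :
    volume (faceCone i σ β ℓ (Set.Ioc 0 1)) ≤ ENNReal.ofReal ℓ ^ d := by
  have hmeas : MeasurableSet ((σ * ·) ⁻¹' Set.Ioc 0 1) :=
    measurable_const_mul σ measurableSet_Ioc
  rw [← setLIntegral_one, setLIntegral_faceCone measurableSet_Ioc measurable_const 0]
  calc _ ≤ ∫⁻ _t in (σ * ·) ⁻¹' Set.Ioc 0 1, ENNReal.ofReal ℓ ^ d := by
        refine setLIntegral_mono' hmeas fun t ht => ?_
        have hslice : σ * t * ℓ ≤ ℓ := mul_le_of_le_one_left hℓ ht.2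
        rw [lmarginal, lintegral_const, one_mul, Measure.pi_univ]
        simpa using pow_le_pow_left' (ENNReal.ofReal_le_ofReal hslice) d
    _ = ENNReal.ofReal ℓ ^ d := by
        rw [setLIntegral_const, volume_preimage_mul_of_abs_eq_one hσ, Real.volume_Ioc]
        norm_num

/-- By homogeneity, the Sobolev inequality on the dilate by `σ * t` of a face box through `u`
bounds `radialExt Q u`. -/
lemma ofReal_abs_radialExt_le_lmarginal_dilate {d : ℕ} (Q : MvPolynomial (Fin (d + 1)) ℝ)
    {h ℓ : ℝ} (hℓ : 0 < ℓ) (hℓh : 2 * ℓ ≤ h) {i : Fin (d + 1)} {σ : ℝ} (hσ : |σ| = 1)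
    {β u : Fin (d + 1) → ℝ} (hu : u ∈ faceBox i σ β ℓ) {t : ℝ} (ht : σ * t ∈ Set.Icc 1 2) :
    ENNReal.ofReal |radialExt Q u| ≤ ENNReal.ofReal ℓ⁻¹ ^ d *
      lmarginal (fun j => volume.restrict (Set.Icc (σ * t * β j) (σ * t * β j + σ * t * ℓ)))
        (univ.erase i) (fun x => jetAbs h d Q (radialProj x)) (Function.update u i t) := by
  have hσσ : σ * σ = 1 := by rw [← abs_mul_abs_self, hσ, one_mul]
  have hcard : (univ.erase i).card = d := by simp
  set τ := σ * t
  have hτ1 : 1 ≤ τ := ht.1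
  have hτ0 : 0 < τ := by linarith
  have hface : (τ • u) i = t := by
    rw [Pi.smul_apply, smul_eq_mul, hu.1]
    linear_combination t * hσσ
  have hoff (j : Fin (d + 1)) (hj : j ∉ univ.erase i) :
      (τ • u) j = Function.update u i t j := by
    obtain rfl : j = i := by simpa using hj
    rw [hface, Function.update_self]
  have hface' : 1 ≤ |(τ • u) i| := by
    rwa [Pi.smul_apply, smul_eq_mul, hu.1, abs_mul, hσ, mul_one, abs_of_pos hτ0]
  have hsobolev := ofReal_abs_radialExt_le_lmarginal Q (h := h) (mul_pos hτ0 hℓ)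
    ((mul_le_mul_of_nonneg_right ht.2 hℓ.le).trans hℓh) (fun j => τ * β j)
    (Finset.notMem_erase i univ) hface' fun j hj => by
      obtain ⟨hlo, hhi⟩ := hu.2 j (Finset.mem_erase.1 hj).1
      rw [Pi.smul_apply, smul_eq_mul, ← mul_add]
      exact ⟨mul_le_mul_of_nonneg_left hlo hτ0.le, mul_le_mul_of_nonneg_left hhi hτ0.le⟩
  rw [radialExt, radialProj_smul hτ0, ← radialExt, hcard,
    lmarginal_congr (y := Function.update u i t) _ _ hoff] at hsobolev
  have hside : (τ * ℓ)⁻¹ ≤ ℓ⁻¹ := inv_anti₀ hℓ (le_mul_of_one_le_left hℓ.le hτ1)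
  exact hsobolev.trans
    (mul_le_mul' (pow_le_pow_left' (ENNReal.ofReal_le_ofReal hside) d) le_rfl)

lemma ofReal_abs_radialExt_le_setLIntegral_faceCone {d : ℕ} (Q : MvPolynomial (Fin (d + 1)) ℝ)
    {h ℓ : ℝ} (hℓ : 0 < ℓ) (hℓh : 2 * ℓ ≤ h) {i : Fin (d + 1)} {σ : ℝ} (hσ : |σ| = 1)
    {β u : Fin (d + 1) → ℝ} (hu : u ∈ faceBox i σ β ℓ) :
    ENNReal.ofReal |radialExt Q u| ≤ ENNReal.ofReal ℓ⁻¹ ^ d *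
      ∫⁻ x in faceCone i σ β ℓ (Set.Icc 1 2), jetAbs h d Q (radialProj x) := by
  have hmeas : Measurable fun x => jetAbs h d Q (radialProj x) :=
    (measurable_jetAbs _ _ _).comp measurable_radialProj
  have hheights : MeasurableSet ((σ * ·) ⁻¹' Set.Icc 1 2) :=
    measurable_const_mul σ measurableSet_Icc
  rw [setLIntegral_faceCone measurableSet_Icc hmeas u,
    ← lintegral_const_mul' _ _ (by finiteness)]
  calc ENNReal.ofReal |radialExt Q u|
      = ∫⁻ _t in (σ * ·) ⁻¹' Set.Icc 1 2, ENNReal.ofReal |radialExt Q u| := by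
        rw [setLIntegral_const, volume_preimage_mul_of_abs_eq_one hσ, Real.volume_Icc]
        norm_num
    _ ≤ _ := setLIntegral_mono' hheights fun t ht =>
        ofReal_abs_radialExt_le_lmarginal_dilate Q hℓ hℓh hσ hu ht

/-! ### Gain at a first-order critical point of a face box -/

section FaceBoxGain

variable {ι : Type*} {i : ι} {σ ℓ : ℝ} {β : ι → ℝ} {u z v : ι → ℝ}

/-- The face box of side `3 * ℓ` concentric with `faceBox i σ β ℓ`. -/
def enlargedFaceBox (i : ι) (σ : ℝ) (β : ι → ℝ) (ℓ : ℝ) : Set (ι → ℝ) :=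
  faceBox i σ (fun j => β j - ℓ) (3 * ℓ)

lemma faceBox_subset_enlargedFaceBox (hℓ : 0 ≤ ℓ) :
    faceBox i σ β ℓ ⊆ enlargedFaceBox i σ β ℓ := by
  refine fun u hu => ⟨hu.1, fun j hj => ?_⟩
  obtain ⟨hlo, hhi⟩ := hu.2 j hj
  exact ⟨by linarith, by linarith⟩

lemma segment_mem_enlargedFaceBox (hz : z ∈ enlargedFaceBox i σ β ℓ)
    (hv : v ∈ enlargedFaceBox i σ β ℓ) {t : ℝ} (ht : t ∈ Set.Icc (0 : ℝ) 1) :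
    z + t • (v - z) ∈ enlargedFaceBox i σ β ℓ :=
  (convex_faceBox _ _ _ _).add_smul_sub_mem hz hv ht

variable [Fintype ι]

lemma one_le_sqNorm_of_mem_enlargedFaceBox (hσ : |σ| = 1) (hu : u ∈ enlargedFaceBox i σ β ℓ) :
    1 ≤ sqNorm u :=
  one_le_sqNorm_of_one_le_abs (i := i) (by rw [hu.1, hσ])

/-- The first-order condition is tested at the corner of the enlarged box obtained by moving `v`
a distance `ℓ` against the sign of `g`. -/
lemma mul_sum_abs_le_sum_sub_mul [DecidableEq ι] (hℓ : 0 ≤ ℓ) {g : ι → ℝ}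
    (hcrit : ∀ u ∈ enlargedFaceBox i σ β ℓ, 0 ≤ ∑ a, (u a - z a) * g a)
    (hv : v ∈ faceBox i σ β ℓ) :
    ℓ * ∑ a ∈ univ.erase i, |g a| ≤ ∑ a, (v a - z a) * g a := by
  set u : ι → ℝ := fun a => if a = i then v a else v a - ℓ * SignType.sign (g a) with hu
  have hmem : u ∈ enlargedFaceBox i σ β ℓ := by
    refine ⟨by simp [hu, hv.1], fun j hj => ?_⟩
    obtain ⟨hlo, hhi⟩ := hv.2 j hj
    have hsign : |((SignType.sign (g j) : SignType) : ℝ)| ≤ 1 := by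
      rcases SignType.sign (g j) <;> simp
    obtain ⟨hs₁, hs₂⟩ := abs_le.1 hsign
    simp only [hu, if_neg hj]
    constructor <;> nlinarith
  have hterm (a : ι) : (u a - z a) * g a =
      (v a - z a) * g a - ℓ * if a = i then 0 else |g a| := by
    simp only [hu]
    split_ifs
    · ring
    · linear_combination (-ℓ) * sign_mul_self (g a)
  have herase : ∑ a, (if a = i then 0 else |g a|) = ∑ a ∈ univ.erase i, |g a| := by
    rw [← Finset.add_sum_erase univ _ (Finset.mem_univ i), if_pos rfl, zero_add]
    exact Finset.sum_congr rfl fun a ha => if_neg (Finset.ne_of_mem_erase ha)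
  have hnonneg := hcrit u hmem
  simp only [hterm, Finset.sum_sub_distrib, ← Finset.mul_sum, herase] at hnonneg
  linarith

variable (P : MvPolynomial ι ℝ)

lemma gradAbs_angularDeriv_le_hessAbs (a b : ι) (z : ι → ℝ) :
    gradAbs (angularDeriv a b P) z ≤ hessAbs P z :=
  (Finset.single_le_sum (f := fun b => gradAbs (angularDeriv a b P) z)
      (fun _ _ => gradAbs_nonneg _ _) (Finset.mem_univ b)).trans
    (Finset.single_le_sum (f := fun a => ∑ b, gradAbs (angularDeriv a b P) z)
      (fun _ _ => Finset.sum_nonneg fun _ _ => gradAbs_nonneg _ _) (Finset.mem_univ a))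

lemma gradAbs_add_le {w : ι → ℝ} {K : ℝ}
    (hz : ∀ t ∈ Set.Icc (0 : ℝ) 1, 1 ≤ sqNorm (z + t • w))
    (hK : ∀ t ∈ Set.Icc (0 : ℝ) 1, hessAbs P (z + t • w) ≤ K) :
    gradAbs P (z + w) ≤ gradAbs P z + (Fintype.card ι : ℝ) ^ 2 * (‖w‖ * K) := by
  have hentry (a b : ι) : |radialExt (angularDeriv a b P) (z + w)| ≤
      |radialExt (angularDeriv a b P) z| + ‖w‖ * K := by
    have hlip := abs_radialExt_add_sub_le (angularDeriv a b P) hz fun t ht =>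
      (gradAbs_angularDeriv_le_hessAbs P a b _).trans (hK t ht)
    linarith [abs_sub_abs_le_abs_sub (radialExt (angularDeriv a b P) (z + w))
      (radialExt (angularDeriv a b P) z)]
  calc gradAbs P (z + w) ≤ ∑ a, ∑ b, (|radialExt (angularDeriv a b P) z| + ‖w‖ * K) :=
        Finset.sum_le_sum fun a _ => Finset.sum_le_sum fun b _ => hentry a b
    _ = _ := by
        simp only [Finset.sum_add_distrib, Finset.sum_const, Finset.card_univ, nsmul_eq_mul,
          gradAbs]
        ring

lemma radialExt_add_sum_le_of_mem_enlargedFaceBox (hσ : |σ| = 1) (hℓ : 0 ≤ ℓ)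
    (hz : z ∈ enlargedFaceBox i σ β ℓ) (hv : v ∈ enlargedFaceBox i σ β ℓ) {M : ℝ}
    (hM : ∀ u ∈ enlargedFaceBox i σ β ℓ, gradAbs P u + hessAbs P u ≤ M) :
    radialExt P z + ∑ a, (v a - z a) * radialGrad P z a ≤
      radialExt P v + (3 * ℓ) ^ 2 * (2 * Fintype.card ι + 1) * M := by
  have hseg (t : ℝ) (ht : t ∈ Set.Icc (0 : ℝ) 1) := segment_mem_enlargedFaceBox hz hv ht
  have hM0 : 0 ≤ M := (add_nonneg (gradAbs_nonneg P z) (hessAbs_nonneg P z)).trans (hM z hz)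
  have htaylor := abs_radialExt_add_sub_sub_le P
    (fun t ht => one_le_sqNorm_of_mem_enlargedFaceBox hσ (hseg t ht)) fun t ht => hM _ (hseg t ht)
  simp only [add_sub_cancel, Pi.sub_apply] at htaylor
  have hrem : ‖v - z‖ ^ 2 * (2 * Fintype.card ι + 1) * M ≤
      (3 * ℓ) ^ 2 * (2 * Fintype.card ι + 1) * M := by
    gcongr
    exact norm_sub_le_of_mem_faceBox (by positivity) hz hv
  linarith [(abs_le.1 htaylor).1]

lemma gradAbs_le_of_mem_enlargedFaceBox (hσ : |σ| = 1) (hℓ : 0 ≤ ℓ)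
    (hz : z ∈ enlargedFaceBox i σ β ℓ) (hv : v ∈ enlargedFaceBox i σ β ℓ) {M : ℝ}
    (hM : ∀ u ∈ enlargedFaceBox i σ β ℓ, gradAbs P u + hessAbs P u ≤ M) :
    gradAbs P v ≤ gradAbs P z + (Fintype.card ι : ℝ) ^ 2 * (3 * ℓ * M) := by
  have hseg (t : ℝ) (ht : t ∈ Set.Icc (0 : ℝ) 1) := segment_mem_enlargedFaceBox hz hv ht
  have hM0 : 0 ≤ M := (add_nonneg (gradAbs_nonneg P z) (hessAbs_nonneg P z)).trans (hM z hz)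
  have hlip := gradAbs_add_le P
    (fun t ht => one_le_sqNorm_of_mem_enlargedFaceBox hσ (hseg t ht)) fun t ht =>
      (le_add_of_nonneg_left (gradAbs_nonneg P _)).trans (hM _ (hseg t ht))
  rw [add_sub_cancel] at hlip
  refine hlip.trans ?_
  gcongr
  exact norm_sub_le_of_mem_faceBox (by positivity) hz hv

/-- The linear gain of `gradAbs P v` against the quadratic Taylor remainder. -/
noncomputable def gainBound (ℓ M : ℝ) (v : ι → ℝ) : ℝ :=
  radialExt P v - 1 / (24 * Fintype.card ι) * ℓ * gradAbs P v +
    (9 * (2 * Fintype.card ι + 1) + 3 * (Fintype.card ι : ℝ) ^ 2) * ℓ ^ 2 * M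

lemma radialExt_le_gainBound (hσ : |σ| = 1) (hℓ : 0 ≤ ℓ)
    (hz : z ∈ enlargedFaceBox i σ β ℓ) (hz3 : ∀ a, |z a| ≤ 3)
    (hcrit : ∀ u ∈ enlargedFaceBox i σ β ℓ, 0 ≤ ∑ a, (u a - z a) * radialGrad P z a)
    {M : ℝ} (hM : ∀ u ∈ enlargedFaceBox i σ β ℓ, gradAbs P u + hessAbs P u ≤ M)
    (hv : v ∈ faceBox i σ β ℓ) :
    radialExt P z ≤ gainBound P ℓ M v := by
  classical
  have hvK := faceBox_subset_enlargedFaceBox hℓ hv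
  have hM0 : 0 ≤ M := (add_nonneg (gradAbs_nonneg P z) (hessAbs_nonneg P z)).trans (hM z hz)
  have htaylor := radialExt_add_sum_le_of_mem_enlargedFaceBox P hσ hℓ hz hvK hM
  have hlip := gradAbs_le_of_mem_enlargedFaceBox P hσ hℓ hz hvK hM
  have hD1 : (1 : ℝ) ≤ Fintype.card ι := by
    have : Nonempty ι := ⟨i⟩
    exact_mod_cast Fintype.card_pos (α := ι)
  have hfaceGrad := gradAbs_le_of_abs_apply_eq_one P (by rw [hz.1, hσ]) hz3
  rw [gainBound]
  generalize (Fintype.card ι : ℝ) = D at *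
  have hface : 1 / (24 * D) * gradAbs P z ≤ ∑ a ∈ univ.erase i, |radialGrad P z a| := by
    rw [one_div, inv_mul_le_iff₀ (by positivity)]
    exact hfaceGrad
  have hgain : ℓ * (1 / (24 * D) * gradAbs P z) ≤ ∑ a, (v a - z a) * radialGrad P z a :=
    (mul_le_mul_of_nonneg_left hface hℓ).trans (mul_sum_abs_le_sum_sub_mul hℓ hcrit hv)
  have hmove : 1 / (24 * D) * ℓ * gradAbs P v ≤
      ℓ * (1 / (24 * D) * gradAbs P z) + 1 * (3 * D ^ 2 * ℓ ^ 2 * M) := by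
    have hsmall : 1 / (24 * D) ≤ 1 := by rw [div_le_one (by positivity)]; linarith
    calc _ ≤ 1 / (24 * D) * ℓ * (gradAbs P z + D ^ 2 * (3 * ℓ * M)) := by gcongr
      _ = ℓ * (1 / (24 * D) * gradAbs P z) + 1 / (24 * D) * (3 * D ^ 2 * ℓ ^ 2 * M) := by ring
      _ ≤ _ := by gcongr
  linarith

end FaceBoxGain

/-! ### Cells on the surface of a cube -/

section Cells

/-- Labels of the cells of side `1 / m` on the surface of the cube `[-1, 1] ^ (d + 1)`: the
coordinate fixed on the face, and the lower corner in units of `1 / m`. -/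
abbrev CellLabel (d : ℕ) := Fin (d + 1) × (Fin (d + 1) → ℤ)

variable {d m : ℕ} {c : CellLabel d}

/-- The labels in use. Lower corners with a coordinate equal to `m` are kept: the resulting cells
stick out of the cube, which does no harm. -/
noncomputable def cellLabels (d m : ℕ) : Finset (CellLabel d) :=
  (univ ×ˢ Fintype.piFinset fun _ => Finset.Icc (-(m : ℤ)) m).filter fun c => |c.2 c.1| = m

/-- The constant value `± 1` of the coordinate `c.1` on the face of the cell `c`. -/
noncomputable def cellSign (m : ℕ) (c : CellLabel d) : ℝ := c.2 c.1 / m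

/-- The closed cell with label `c`. -/
def innerCell (m : ℕ) (c : CellLabel d) : Set (Fin (d + 1) → ℝ) :=
  faceBox c.1 (cellSign m c) (fun j => c.2 j / m) (m : ℝ)⁻¹

/-- The concentric cell of three times the side. -/
def outerCell (m : ℕ) (c : CellLabel d) : Set (Fin (d + 1) → ℝ) :=
  enlargedFaceBox c.1 (cellSign m c) (fun j => c.2 j / m) (m : ℝ)⁻¹

/-- The part at heights between `1` and `2` of the cone over `outerCell m c`. -/
def outerCellCone (m : ℕ) (c : CellLabel d) : Set (Fin (d + 1) → ℝ) :=
  faceCone c.1 (cellSign m c) (fun j => c.2 j / m - (m : ℝ)⁻¹) (3 * (m : ℝ)⁻¹) (Set.Icc 1 2)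

lemma mem_cellLabels : c ∈ cellLabels d m ↔ (∀ j, |c.2 j| ≤ m) ∧ |c.2 c.1| = m := by
  simp [cellLabels, abs_le]

lemma abs_cellSign (hm : 1 ≤ m) (hc : c ∈ cellLabels d m) : |cellSign m c| = 1 := by
  have hcm : |(c.2 c.1 : ℝ)| = m := by exact_mod_cast (mem_cellLabels.1 hc).2
  rw [cellSign, abs_div, hcm, Nat.abs_cast, div_self (by positivity)]

lemma label_mem_Icc_of_mem_outerCell (hm : 1 ≤ m) {u : Fin (d + 1) → ℝ}
    (hu : u ∈ outerCell m c) (j : Fin (d + 1)) :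
    (c.2 j : ℝ) ∈ Set.Icc (m * u j - 2) (m * u j + 1) := by
  have hm0 : (0 : ℝ) < m := by positivity
  have hlabel : m * ((c.2 j : ℝ) / m) = c.2 j := by field_simp
  by_cases hj : j = c.1
  · subst hj
    rw [hu.1, cellSign, hlabel]
    constructor <;> linarith
  · have hside : m * (m : ℝ)⁻¹ = 1 := mul_inv_cancel₀ hm0.ne'
    obtain ⟨hlo, hhi⟩ := hu.2 j hj
    constructor <;> nlinarith

lemma abs_apply_le_three_of_mem_outerCell (hm : 1 ≤ m) (hc : c ∈ cellLabels d m)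
    {u : Fin (d + 1) → ℝ} (hu : u ∈ outerCell m c) (j : Fin (d + 1)) : |u j| ≤ 3 := by
  have hm1 : (1 : ℝ) ≤ m := by exact_mod_cast hm
  have hcm : |(c.2 j : ℝ)| ≤ m := by exact_mod_cast (mem_cellLabels.1 hc).1 j
  obtain ⟨hclo, hchi⟩ := abs_le.1 hcm
  obtain ⟨hlo, hhi⟩ := label_mem_Icc_of_mem_outerCell hm hu j
  rw [abs_le]
  constructor <;> nlinarith

lemma height_eq_abs_of_mem_outerCellCone (hm : 1 ≤ m) (hc : c ∈ cellLabels d m)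
    {x : Fin (d + 1) → ℝ} (hx : x ∈ outerCellCone m c) : cellSign m c * x c.1 = |x c.1| := by
  have hheight : (1 : ℝ) ≤ cellSign m c * x c.1 := hx.1.1
  rw [← abs_of_nonneg (zero_le_one.trans hheight), abs_mul, abs_cellSign hm hc, one_mul]

lemma inv_abs_smul_mem_outerCell (hm : 1 ≤ m) (hc : c ∈ cellLabels d m)
    {x : Fin (d + 1) → ℝ} (hx : x ∈ outerCellCone m c) : |x c.1|⁻¹ • x ∈ outerCell m c := by
  rw [← height_eq_abs_of_mem_outerCellCone hm hc hx]
  exact inv_smul_mem_faceBox (abs_cellSign hm hc) hx (zero_lt_one.trans_le hx.1.1)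

lemma outerCellCone_subset (hm : 1 ≤ m) (hc : c ∈ cellLabels d m) :
    outerCellCone m c ⊆ {x | sqNorm x ≤ 36 * (d + 1)} := by
  intro x hx
  have hheight := height_eq_abs_of_mem_outerCellCone hm hc hx
  have hpos : 0 < |x c.1| := hheight ▸ zero_lt_one.trans_le hx.1.1
  have hle : |x c.1| ≤ 2 := hheight ▸ hx.1.2
  have hcoord (j : Fin (d + 1)) : x j ^ 2 ≤ 36 := by
    have hu := abs_apply_le_three_of_mem_outerCell hm hc (inv_abs_smul_mem_outerCell hm hc hx) j
    rw [Pi.smul_apply, smul_eq_mul, abs_mul, abs_inv, abs_abs, inv_mul_le_iff₀ hpos] at hu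
    rw [← sq_abs]
    nlinarith [abs_nonneg (x j)]
  calc sqNorm x ≤ ∑ _j : Fin (d + 1), (36 : ℝ) := Finset.sum_le_sum fun j _ => hcoord j
    _ = 36 * (d + 1) := by simp [mul_comm]

lemma card_Icc_ceil_sub_two_floor_add_one_le (y : ℝ) :
    (Finset.Icc ⌈y - 2⌉ ⌊y + 1⌋).card ≤ 4 := by
  have hlt : ⌊y + 1⌋ < ⌈y - 2⌉ + 4 := by
    rw [Int.floor_lt]
    push_cast
    linarith [Int.le_ceil (y - 2)]
  rw [Int.card_Icc]
  omega

open Classical in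
lemma card_filter_mem_outerCellCone_le (hm : 1 ≤ m) (x : Fin (d + 1) → ℝ) :
    ((cellLabels d m).filter fun c => x ∈ outerCellCone m c).card ≤ (d + 1) * 4 ^ (d + 1) := by
  set labelRange : Fin (d + 1) → Finset (Fin (d + 1) → ℤ) := fun i =>
    Fintype.piFinset fun j =>
      Finset.Icc ⌈m * (|x i|⁻¹ • x) j - 2⌉ ⌊m * (|x i|⁻¹ • x) j + 1⌋
  have hsubset : ((cellLabels d m).filter fun c => x ∈ outerCellCone m c) ⊆
      univ.biUnion fun i => (labelRange i).map (Function.Embedding.sectR i _) := by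
    intro c hc
    obtain ⟨hc, hx⟩ := Finset.mem_filter.1 hc
    simp only [Finset.mem_biUnion, Finset.mem_univ, true_and, Finset.mem_map]
    refine ⟨c.1, c.2, Fintype.mem_piFinset.2 fun j => ?_, rfl⟩
    rw [Finset.mem_Icc, Int.ceil_le, Int.le_floor]
    exact label_mem_Icc_of_mem_outerCell hm (inv_abs_smul_mem_outerCell hm hc hx) j
  have hcard (i : Fin (d + 1)) : (labelRange i).card ≤ 4 ^ (d + 1) := by
    rw [Fintype.card_piFinset]
    exact (Finset.prod_le_pow_card _ _ 4 fun j _ =>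
      card_Icc_ceil_sub_two_floor_add_one_le _).trans_eq (by simp)
  calc _ ≤ _ := Finset.card_le_card hsubset
    _ ≤ ∑ i, ((labelRange i).map (Function.Embedding.sectR i _)).card := Finset.card_biUnion_le
    _ ≤ ∑ _i : Fin (d + 1), 4 ^ (d + 1) :=
        Finset.sum_le_sum fun i _ => (Finset.card_map _).trans_le (hcard i)
    _ = _ := by simp

lemma sum_indicator_outerCellCone_le (hm : 1 ≤ m) (F : (Fin (d + 1) → ℝ) → ℝ≥0∞)
    (x : Fin (d + 1) → ℝ) :
    ∑ c ∈ cellLabels d m, (outerCellCone m c).indicator F x ≤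
      ((d + 1) * 4 ^ (d + 1) : ℕ) * {x | sqNorm x ≤ 36 * (d + 1)}.indicator F x := by
  classical
  by_cases hx : x ∈ {x : Fin (d + 1) → ℝ | sqNorm x ≤ 36 * (d + 1)}
  · simp only [Set.indicator_of_mem hx, Set.indicator_apply, ← Finset.sum_filter,
      Finset.sum_const, nsmul_eq_mul]
    gcongr
    exact card_filter_mem_outerCellCone_le hm x
  · rw [Finset.sum_eq_zero fun c hc =>
      Set.indicator_of_notMem (fun hxc => hx (outerCellCone_subset hm hc hxc)) F]
    exact zero_le

lemma sum_ofReal_abs_radialExt_le_lintegral_jetAbs (hm : 1 ≤ m)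
    {u : CellLabel d → Fin (d + 1) → ℝ} (hu : ∀ c ∈ cellLabels d m, u c ∈ outerCell m c)
    (Q : MvPolynomial (Fin (d + 1)) ℝ) :
    ∑ c ∈ cellLabels d m, ENNReal.ofReal |radialExt Q (u c)| ≤ ENNReal.ofReal m ^ d *
      (((d + 1) * 4 ^ (d + 1) : ℕ) *
        (volume {x : Fin (d + 1) → ℝ | sqNorm x ≤ 36 * (d + 1)} *
          ∫⁻ y, jetAbs (6 * (m : ℝ)⁻¹) d Q y ∂sphereMeasure d)) := by
  set F : (Fin (d + 1) → ℝ) → ℝ≥0∞ := fun x => jetAbs (6 * (m : ℝ)⁻¹) d Q (radialProj x)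
  have hm0 : (0 : ℝ) < m := by positivity
  have hFm : Measurable F := (measurable_jetAbs _ _ _).comp measurable_radialProj
  have hcone (c : CellLabel d) : MeasurableSet (outerCellCone m c) :=
    measurableSet_faceCone measurableSet_Icc
  have hside : (3 * (m : ℝ)⁻¹)⁻¹ ≤ m := by
    rw [mul_inv, inv_inv]
    linarith
  have hsobolev (c) (hc : c ∈ cellLabels d m) : ENNReal.ofReal |radialExt Q (u c)| ≤
      ENNReal.ofReal m ^ d * ∫⁻ x, (outerCellCone m c).indicator F x := by
    rw [lintegral_indicator (hcone c)]
    refine (ofReal_abs_radialExt_le_setLIntegral_faceCone Q (h := 6 * (m : ℝ)⁻¹) (by positivity)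
      (by linarith) (abs_cellSign hm hc) (hu c hc)).trans ?_
    gcongr
    exact le_rfl
  calc _ ≤ ∑ c ∈ cellLabels d m,
        ENNReal.ofReal m ^ d * ∫⁻ x, (outerCellCone m c).indicator F x :=
        Finset.sum_le_sum hsobolev
    _ = ENNReal.ofReal m ^ d *
        ∫⁻ x, ∑ c ∈ cellLabels d m, (outerCellCone m c).indicator F x := by
        rw [lintegral_finsetSum _ fun c _ => hFm.indicator (hcone c), Finset.mul_sum]
    _ ≤ ENNReal.ofReal m ^ d * ∫⁻ x, ((d + 1) * 4 ^ (d + 1) : ℕ) *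
        {x | sqNorm x ≤ 36 * (d + 1)}.indicator F x := by
        gcongr with x
        exact sum_indicator_outerCellCone_le hm F x
    _ = _ := by
        rw [lintegral_const_mul' _ _ (by finiteness),
          lintegral_indicator (measurableSet_sqNorm_le _),
          setLIntegral_radialProj (measurable_jetAbs _ _ _)]

/-- The constant in the Marcinkiewicz–Zygmund inequality `sum_ofReal_abs_radialExt_le`. -/
noncomputable def samplingConst (d : ℕ) : ℝ :=
  (d + 1) * 4 ^ (d + 1) * (volume.real {x : Fin (d + 1) → ℝ | sqNorm x ≤ 36 * (d + 1)} *
    (1 + 12 * (d + 1) ^ 2) ^ d)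

lemma samplingConst_nonneg (d : ℕ) : 0 ≤ samplingConst d := by
  unfold samplingConst
  positivity

lemma sum_ofReal_abs_radialExt_le {n : ℕ} (hn : 1 ≤ n) (hnm : n ≤ m)
    {u : CellLabel d → Fin (d + 1) → ℝ} (hu : ∀ c ∈ cellLabels d m, u c ∈ outerCell m c)
    {Q : MvPolynomial (Fin (d + 1)) ℝ} (hQ : Q.totalDegree ≤ n) :
    ∑ c ∈ cellLabels d m, ENNReal.ofReal |radialExt Q (u c)| ≤
      ENNReal.ofReal (samplingConst d * m ^ d) * sphereL1 Q := by
  have hm0 : (0 : ℝ) < m := by exact_mod_cast hn.trans hnm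
  have hbernstein : 1 + 6 * (m : ℝ)⁻¹ * (d + 1) ^ 2 * (2 * n) ≤ 1 + 12 * ((d : ℝ) + 1) ^ 2 := by
    have hratio : (m : ℝ)⁻¹ * n ≤ 1 := by
      rw [inv_mul_le_iff₀ hm0]
      exact_mod_cast hnm.trans_eq (mul_one m).symm
    nlinarith [sq_nonneg ((d : ℝ) + 1)]
  refine (sum_ofReal_abs_radialExt_le_lintegral_jetAbs (hn.trans hnm) hu Q).trans ?_
  calc _ ≤ ENNReal.ofReal m ^ d * (((d + 1) * 4 ^ (d + 1) : ℕ) *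
        (ENNReal.ofReal (volume.real {x : Fin (d + 1) → ℝ | sqNorm x ≤ 36 * (d + 1)}) *
          (ENNReal.ofReal ((1 + 12 * (d + 1) ^ 2) ^ d) * sphereL1 Q))) := by
        rw [ofReal_measureReal (volume_sqNorm_le_lt_top _).ne]
        gcongr
        refine (lintegral_jetAbs_le hn (by positivity) d hQ).trans ?_
        gcongr
    _ = _ := by
        rw [samplingConst, ENNReal.ofReal_mul (by positivity), ENNReal.ofReal_mul (by positivity),
          ENNReal.ofReal_mul (p := volume.real _) (by positivity), ENNReal.ofReal_pow hm0.le,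
          ← ENNReal.ofReal_natCast ((d + 1) * 4 ^ (d + 1))]
        push_cast
        ring

end Cells

/-! ### A partition of unity subordinate to the cells -/

section CellWeights

variable {d m : ℕ} {c : CellLabel d} {z : Fin (d + 1) → ℝ}

/-- The open cone with apex the origin over `innerCell m c`. -/
def cellCone (m : ℕ) (c : CellLabel d) : Set (Fin (d + 1) → ℝ) :=
  faceCone c.1 (cellSign m c) (fun j => c.2 j / m) (m : ℝ)⁻¹ (Set.Ioi 0)

lemma measurableSet_cellCone (m : ℕ) (c : CellLabel d) : MeasurableSet (cellCone m c) :=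
  measurableSet_faceCone measurableSet_Ioi

lemma exists_mem_innerCell_radialProj_eq (hm : 1 ≤ m) (hc : c ∈ cellLabels d m)
    (hz : z ∈ cellCone m c) : ∃ v ∈ innerCell m c, radialProj v = radialProj z :=
  ⟨_, inv_smul_mem_faceBox (abs_cellSign hm hc) hz hz.1, radialProj_smul (inv_pos.2 hz.1) z⟩

lemma exists_forall_abs_apply_le_abs_apply (z : Fin (d + 1) → ℝ) : ∃ i, ∀ j, |z j| ≤ |z i| := by
  simpa using Finset.exists_max_image univ (fun j => |z j|) univ_nonempty

lemma mem_Icc_floor_div {τ : ℝ} (hτ : 0 < τ) (hm : 1 ≤ m) (x : ℝ) :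
    x ∈ Set.Icc (τ * (⌊m * (x / τ)⌋ / m)) (τ * (⌊m * (x / τ)⌋ / m) + τ * (m : ℝ)⁻¹) := by
  have hm0 : (0 : ℝ) < m := by positivity
  have hlo := Int.floor_le (m * (x / τ))
  have hhi := Int.lt_floor_add_one (m * (x / τ))
  rw [← mul_div_assoc] at hlo hhi ⊢
  rw [le_div_iff₀ hτ] at hlo
  rw [div_lt_iff₀ hτ] at hhi
  refine ⟨?_, ?_⟩
  · rw [← mul_div_assoc, div_le_iff₀ hm0]
    linarith
  · rw [← div_eq_mul_inv, ← mul_div_assoc, ← add_div, le_div_iff₀ hm0]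
    linarith

lemma abs_floor_mul_le {x : ℝ} (hx : |x| ≤ 1) (m : ℕ) : |⌊m * x⌋| ≤ (m : ℤ) := by
  obtain ⟨hlo, hhi⟩ := abs_le.1 hx
  rw [abs_le]
  constructor
  · rw [Int.le_floor]
    push_cast
    nlinarith [m.cast_nonneg (α := ℝ)]
  · rw [← Int.cast_le (R := ℝ)]
    push_cast
    exact (Int.floor_le _).trans (by nlinarith [m.cast_nonneg (α := ℝ)])

lemma exists_mem_cellCone (hm : 1 ≤ m) (hz : sqNorm z ≠ 0) :
    ∃ c ∈ cellLabels d m, z ∈ cellCone m c := by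
  obtain ⟨i, hi⟩ := exists_forall_abs_apply_le_abs_apply z
  have hzi : z i ≠ 0 := fun h => hz <| Finset.sum_eq_zero fun j _ => by
    simpa [h] using hi j
  have hpos : 0 < |z i| := abs_pos.2 hzi
  set s : ℤ := SignType.cast (SignType.sign (z i))
  have hs : |s| = 1 := by
    rcases lt_or_gt_of_ne hzi with h | h <;> simp [s, sign_neg, sign_pos, h]
  have hsz : (s : ℝ) * z i = |z i| := by simp [s, sign_mul_self]
  set c : CellLabel d := (i, Function.update (fun j => ⌊m * (z j / |z i|)⌋) i (s * m))
  have hci : c.2 c.1 = s * m := by simp [c]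
  have hcj (j) (hj : j ≠ i) : c.2 j = ⌊m * (z j / |z i|)⌋ := by simp [c, hj]
  have hsign : cellSign m c = s := by
    rw [cellSign, hci]
    push_cast
    field_simp
  have hcm : |c.2 c.1| = m := by rw [hci, abs_mul, hs, one_mul, Nat.abs_cast]
  refine ⟨c, mem_cellLabels.2 ⟨fun j => ?_, hcm⟩, ?_, fun j hj => ?_⟩
  · by_cases hj : j = i
    · rw [hj]
      exact hcm.le
    · rw [hcj j hj]
      refine abs_floor_mul_le ?_ m
      rw [abs_div, abs_abs, div_le_one hpos]
      exact hi j
  · rw [hsign, hsz]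
    exact hpos
  · simp only [hsign, hcj j hj]
    rw [hsz]
    exact mem_Icc_floor_div hpos hm (z j)

lemma volume_cellCone_inter_sqNorm_le (hm : 1 ≤ m) (hc : c ∈ cellLabels d m) :
    volume (cellCone m c ∩ {z | sqNorm z ≤ 1}) ≤ ENNReal.ofReal (m : ℝ)⁻¹ ^ d := by
  refine (measure_mono ?_).trans
    (volume_faceCone_Ioc_le (abs_cellSign hm hc) (inv_nonneg.2 m.cast_nonneg)
      (i := c.1) fun j => c.2 j / m)
  rintro z ⟨hz, hz1⟩
  refine ⟨⟨hz.1, ?_⟩, hz.2⟩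
  have hle : |z c.1| ≤ 1 := (sq_le_one_iff_abs_le_one _).1 ((sq_apply_le_sqNorm z c.1).trans hz1)
  calc cellSign m c * z c.1 ≤ |cellSign m c * z c.1| := le_abs_self _
    _ ≤ 1 := by rwa [abs_mul, abs_cellSign hm hc, one_mul]

lemma radialProj_mem_cellCone_iff : radialProj z ∈ cellCone m c ↔ z ∈ cellCone m c := by
  by_cases hz : sqNorm z = 0
  · have hzc : z c.1 = 0 := by
      simpa [hz, sq_nonpos_iff] using sq_apply_le_sqNorm z c.1
    constructor <;> intro h <;> simpa [radialProj, hzc] using h.1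
  · have hr : 0 < √(sqNorm z) := Real.sqrt_pos.2 (sqNorm_pos hz)
    have hproj : radialProj z = (√(sqNorm z))⁻¹ • z := funext fun i => div_eq_inv_mul _ _
    rw [hproj]
    exact ⟨fun h => by simpa [smul_smul, hr.ne'] using! smul_mem_faceCone_Ioi h hr,
      fun h => smul_mem_faceCone_Ioi h (inv_pos.2 hr)⟩

/-- The constant in `measureReal_cellCone_le`: the reciprocal of the volume of the unit
ball. -/
noncomputable def cellMassConst (d : ℕ) : ℝ :=
  (volume.real {z : Fin (d + 1) → ℝ | sqNorm z ≤ 1})⁻¹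

lemma cellMassConst_nonneg (d : ℕ) : 0 ≤ cellMassConst d := inv_nonneg.2 measureReal_nonneg

lemma measureReal_cellCone_le (hm : 1 ≤ m) (hc : c ∈ cellLabels d m) :
    (sphereMeasure d).real (cellCone m c) ≤ cellMassConst d * (m : ℝ)⁻¹ ^ d := by
  have hpolar := setLIntegral_radialProj (d := d)
    (measurable_one.indicator (measurableSet_cellCone m c)) 1
  have hpre : (fun z => (cellCone m c).indicator (1 : (Fin (d + 1) → ℝ) → ℝ≥0∞) (radialProj z)) =
      (cellCone m c).indicator 1 := by
    classical
    ext z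
    simp only [Set.indicator_apply, radialProj_mem_cellCone_iff]
    rfl
  rw [hpre, lintegral_indicator_one (measurableSet_cellCone m c),
    lintegral_indicator_one (measurableSet_cellCone m c), Measure.restrict_apply
    (measurableSet_cellCone m c)] at hpolar
  have hle := volume_cellCone_inter_sqNorm_le hm hc
  rw [hpolar] at hle
  have hreal := ENNReal.toReal_mono (by finiteness) hle
  rw [ENNReal.toReal_mul, ENNReal.toReal_pow, ENNReal.toReal_ofReal (by positivity)] at hreal
  rw [cellMassConst, le_inv_mul_iff₀]
  · exact hreal
  · exact ENNReal.toReal_pos (volume_sqNorm_le_pos one_pos).ne' (volume_sqNorm_le_lt_top _).ne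

/-- Partition of unity subordinate to the (overlapping) cones `cellCone m c`: the indicator of the
cone divided by the number of cones containing the point. -/
noncomputable def cellWeight (m : ℕ) (c : CellLabel d) (z : Fin (d + 1) → ℝ) : ℝ :=
  (cellCone m c).indicator 1 z / ∑ c ∈ cellLabels d m, (cellCone m c).indicator 1 z

lemma measurable_cellWeight (m : ℕ) (c : CellLabel d) : Measurable (cellWeight m c) :=
  (measurable_one.indicator (measurableSet_cellCone m c)).div
    (Finset.measurable_fun_sum _ fun c _ => measurable_one.indicator (measurableSet_cellCone m c))

lemma indicator_cellCone_nonneg (m : ℕ) (c : CellLabel d) (z : Fin (d + 1) → ℝ) :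
    0 ≤ (cellCone m c).indicator (1 : (Fin (d + 1) → ℝ) → ℝ) z :=
  Set.indicator_nonneg (fun _ _ => zero_le_one) z

lemma cellWeight_nonneg (m : ℕ) (c : CellLabel d) (z : Fin (d + 1) → ℝ) : 0 ≤ cellWeight m c z :=
  div_nonneg (indicator_cellCone_nonneg m c z)
    (Finset.sum_nonneg fun c _ => indicator_cellCone_nonneg m c z)

lemma one_le_sum_indicator_cellCone (hc : c ∈ cellLabels d m) (hz : z ∈ cellCone m c) :
    1 ≤ ∑ c ∈ cellLabels d m, (cellCone m c).indicator (1 : (Fin (d + 1) → ℝ) → ℝ) z :=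
  calc 1 = (cellCone m c).indicator (1 : (Fin (d + 1) → ℝ) → ℝ) z :=
        by rw [Set.indicator_of_mem hz, Pi.one_apply]
    _ ≤ _ := Finset.single_le_sum
        (f := fun c => (cellCone m c).indicator (1 : (Fin (d + 1) → ℝ) → ℝ) z)
        (fun c _ => indicator_cellCone_nonneg m c z) hc

lemma cellWeight_eq_zero (hz : z ∉ cellCone m c) : cellWeight m c z = 0 := by
  rw [cellWeight, Set.indicator_of_notMem hz, zero_div]

lemma cellWeight_le_indicator (hc : c ∈ cellLabels d m) (z : Fin (d + 1) → ℝ) :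
    cellWeight m c z ≤ (cellCone m c).indicator 1 z := by
  by_cases hz : z ∈ cellCone m c
  · exact div_le_self (indicator_cellCone_nonneg m c z) (one_le_sum_indicator_cellCone hc hz)
  · rw [cellWeight_eq_zero hz]
    exact indicator_cellCone_nonneg m c z

lemma sum_cellWeight (hm : 1 ≤ m) (hz : sqNorm z ≠ 0) :
    ∑ c ∈ cellLabels d m, cellWeight m c z = 1 := by
  obtain ⟨c, hc, hzc⟩ := exists_mem_cellCone hm hz
  simp only [cellWeight]
  rw [← Finset.sum_div, div_self (by linarith [one_le_sum_indicator_cellCone hc hzc])]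

end CellWeights

/-! ### The `L¹` Poincaré inequality -/

section PairRotation

variable {ι : Type*}

/-- The rotation by the angle `t` of a pair of vectors, which leads from `x` to `y` in its first
component as `t` runs from `0` to `π / 2`. It preserves the product of two Gaussian measures. -/
noncomputable def pairRot (t : ℝ) (p : (ι → ℝ) × (ι → ℝ)) : (ι → ℝ) × (ι → ℝ) :=
  (Real.cos t • p.1 + Real.sin t • p.2, -Real.sin t • p.1 + Real.cos t • p.2)

lemma continuous_pairRot : Continuous fun q : ((ι → ℝ) × (ι → ℝ)) × ℝ => pairRot q.2 q.1 := by
  unfold pairRot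
  fun_prop

lemma measurePreserving_rotation_prod (t : ℝ) : MeasurePreserving fun p : ℝ × ℝ =>
    (Real.cos t * p.1 + Real.sin t * p.2, -Real.sin t * p.1 + Real.cos t * p.2) := by
  have hcoord := Complex.volume_preserving_equiv_real_prod
  have hrot : MeasurePreserving fun z : ℂ => rotation (Circle.exp (-t)) z :=
    (rotation (Circle.exp (-t))).measurePreserving
  convert (hcoord.comp hrot).comp (hcoord.symm _) using 1
  funext p
  change _ = ((rotation (Circle.exp (-t)) ⟨p.1, p.2⟩).re,
    (rotation (Circle.exp (-t)) ⟨p.1, p.2⟩).im)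
  rw [rotation_apply, Circle.coe_exp, Complex.mul_re, Complex.mul_im,
    Complex.exp_ofReal_mul_I_re, Complex.exp_ofReal_mul_I_im]
  simp only [Real.cos_neg, Real.sin_neg]
  refine Prod.ext ?_ ?_ <;> simp only <;> ring

lemma mem_span_singleton_of_pairRot_eq_zero {t : ℝ} {x y : ι → ℝ} (hx : x ≠ 0)
    (h : (pairRot t (x, y)).1 = 0) : y ∈ Submodule.span ℝ {x} := by
  have hcomb : Real.cos t • x + Real.sin t • y = 0 := h
  have hsin : Real.sin t ≠ 0 := fun hsin => by
    have hcos : Real.cos t ≠ 0 := fun hcos => by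
      simpa [hsin, hcos] using Real.sin_sq_add_cos_sq t
    simp [hsin, hcos, hx] at hcomb
  refine Submodule.mem_span_singleton.2 ⟨-(Real.sin t)⁻¹ * Real.cos t, ?_⟩
  rw [mul_smul, eq_neg_of_add_eq_zero_left hcomb, neg_smul, smul_neg, neg_neg,
    inv_smul_smul₀ hsin]

variable [Fintype ι]

lemma measurePreserving_pairRot (t : ℝ) :
    MeasurePreserving (pairRot t : (ι → ℝ) × (ι → ℝ) → (ι → ℝ) × (ι → ℝ)) := by
  have hswap := volume_measurePreserving_arrowProdEquivProdArrow ℝ ℝ ι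
  have hpi := volume_preserving_pi fun _ : ι => measurePreserving_rotation_prod t
  exact (hswap.comp hpi).comp (hswap.symm _)

lemma lintegral_lintegral_setLIntegral_pairRot {Φ : (ι → ℝ) × (ι → ℝ) → ℝ≥0∞}
    (hΦ : Measurable Φ) (a b : ℝ) :
    ∫⁻ x, ∫⁻ y, ∫⁻ t in Set.Icc a b, Φ (pairRot t (x, y)) =
      ENNReal.ofReal (b - a) * ∫⁻ p, Φ p := by
  have hjoint : Measurable fun q : ((ι → ℝ) × (ι → ℝ)) × ℝ => Φ (pairRot q.2 q.1) :=
    hΦ.comp continuous_pairRot.measurable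
  calc ∫⁻ x, ∫⁻ y, ∫⁻ t in Set.Icc a b, Φ (pairRot t (x, y))
      = ∫⁻ p, ∫⁻ t in Set.Icc a b, Φ (pairRot t p) := by
        rw [Measure.volume_eq_prod, lintegral_prod _ hjoint.lintegral_prod_right'.aemeasurable]
    _ = ∫⁻ t in Set.Icc a b, ∫⁻ p, Φ (pairRot t p) :=
        lintegral_lintegral_swap hjoint.aemeasurable
    _ = ∫⁻ _ in Set.Icc a b, ∫⁻ p, Φ p :=
        lintegral_congr fun t => (measurePreserving_pairRot t).lintegral_comp hΦ
    _ = ENNReal.ofReal (b - a) * ∫⁻ p, Φ p := by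
        rw [lintegral_const, Measure.restrict_apply_univ, Real.volume_Icc, mul_comm]

lemma sqNorm_pairRot_add (t : ℝ) (p : (ι → ℝ) × (ι → ℝ)) :
    sqNorm (pairRot t p).1 + sqNorm (pairRot t p).2 = sqNorm p.1 + sqNorm p.2 := by
  simp only [sqNorm, pairRot, ← Finset.sum_add_distrib]
  refine Finset.sum_congr rfl fun i _ => ?_
  simp only [Pi.add_apply, Pi.smul_apply, smul_eq_mul]
  linear_combination (p.1 i ^ 2 + p.2 i ^ 2) * Real.sin_sq_add_cos_sq t

lemma sqNorm_eq_zero {z : ι → ℝ} : sqNorm z = 0 ↔ z = 0 := by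
  simp [sqNorm, Finset.sum_eq_zero_iff_of_nonneg, sq_nonneg, funext_iff]

lemma ae_ae_sqNorm_pairRot_ne_zero (hι : 1 < Fintype.card ι) :
    ∀ᵐ x : ι → ℝ, ∀ᵐ y : ι → ℝ, ∀ t, sqNorm (pairRot t (x, y)).1 ≠ 0 := by
  have : Nonempty ι := Fintype.card_pos_iff.1 (by omega)
  filter_upwards [Measure.ae_ne volume (0 : ι → ℝ)] with x hx
  have hspan : Submodule.span ℝ {x} ≠ ⊤ := fun h => by
    have hrank := finrank_span_singleton (K := ℝ) hx
    rw [h, finrank_top, Module.finrank_fintype_fun_eq_card] at hrank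
    omega
  refine measure_mono_null (fun y hy => ?_) (Measure.addHaar_submodule volume _ hspan)
  simp only [Set.mem_compl_iff, Set.mem_ofPred_eq, not_forall, ne_eq, not_not] at hy
  obtain ⟨t, ht⟩ := hy
  exact mem_span_singleton_of_pairRot_eq_zero hx (sqNorm_eq_zero.1 ht)

lemma hasDerivAt_radialExt_pairRot (P : MvPolynomial ι ℝ) {t : ℝ} {x y : ι → ℝ}
    (ht : sqNorm (pairRot t (x, y)).1 ≠ 0) :
    HasDerivAt (fun s => radialExt P (pairRot s (x, y)).1)
      (∑ a, (pairRot t (x, y)).2 a * radialGrad P (pairRot t (x, y)).1 a) t := by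
  refine hasDerivAt_radialExt_comp P (γ := fun s => (pairRot s (x, y)).1) (fun i => ?_) ht
  simp only [pairRot, Pi.add_apply, Pi.smul_apply, smul_eq_mul]
  exact ((Real.hasDerivAt_cos t).mul_const (x i)).add ((Real.hasDerivAt_sin t).mul_const (y i))

lemma continuous_sum_mul_radialGrad_pairRot (P : MvPolynomial ι ℝ) {x y : ι → ℝ}
    (hxy : ∀ t, sqNorm (pairRot t (x, y)).1 ≠ 0) :
    Continuous fun t => ∑ a, (pairRot t (x, y)).2 a * radialGrad P (pairRot t (x, y)).1 a := by
  have hcurve : Continuous fun t => pairRot t (x, y) := by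
    unfold pairRot
    fun_prop
  refine continuous_finsetSum _ fun a _ => ((continuous_apply a).comp hcurve.snd).mul ?_
  exact continuous_iff_continuousAt.2 fun t =>
    ContinuousAt.comp (f := fun t => (pairRot t (x, y)).1) (g := fun z => radialGrad P z a)
      (continuousAt_radialGrad P (hxy t) a) hcurve.fst.continuousAt

lemma ofReal_abs_radialExt_sub_le_setLIntegral_pairRot (P : MvPolynomial ι ℝ) {x y : ι → ℝ}
    (hxy : ∀ t, sqNorm (pairRot t (x, y)).1 ≠ 0) :
    ENNReal.ofReal |radialExt P y - radialExt P x| ≤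
      ∫⁻ t in Set.Icc 0 (Real.pi / 2), ENNReal.ofReal (√(sqNorm (pairRot t (x, y)).2) *
        ((√(sqNorm (pairRot t (x, y)).1))⁻¹ * gradAbs P (pairRot t (x, y)).1)) := by
  have hpi : (0 : ℝ) ≤ Real.pi / 2 := by positivity
  have hftc := ofReal_abs_sub_le_setLIntegral_deriv
    (fun t _ => hasDerivAt_radialExt_pairRot P (hxy t))
    (continuous_sum_mul_radialGrad_pairRot P hxy).continuousOn
    (Set.left_mem_Icc.2 hpi) (Set.right_mem_Icc.2 hpi)
  have hstart : (pairRot 0 (x, y)).1 = x := by simp [pairRot]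
  have hend : (pairRot (Real.pi / 2) (x, y)).1 = y := by simp [pairRot]
  rw [hstart, hend] at hftc
  refine hftc.trans (lintegral_mono fun t => ENNReal.ofReal_le_ofReal ?_)
  exact (abs_sum_mul_radialGrad_le_mul_sum P
    (fun a => Real.abs_le_sqrt (sq_apply_le_sqNorm _ a)) _).trans
      (mul_le_mul_of_nonneg_left (sum_abs_radialGrad_le_inv_sqrt_mul P _) (Real.sqrt_nonneg _))

lemma radialProj_radialProj (z : ι → ℝ) : radialProj (radialProj z) = radialProj z := by
  obtain hz | hz := eq_or_ne (sqNorm z) 0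
  · have : radialProj z = 0 := funext fun i => by simp [radialProj, hz]
    rw [this]
    exact funext fun i => by simp [radialProj]
  · exact radialProj_of_sqNorm_eq_one (sqNorm_radialProj hz)

lemma gradAbs_radialProj (P : MvPolynomial ι ℝ) (z : ι → ℝ) :
    gradAbs P (radialProj z) = gradAbs P z := by
  simp only [gradAbs, radialExt, radialProj_radialProj]

lemma measurable_gradAbs (P : MvPolynomial ι ℝ) : Measurable (gradAbs P) :=
  Finset.measurable_fun_sum _ fun _ _ => Finset.measurable_fun_sum _ fun _ _ =>
    (measurable_radialExt _).abs

end PairRotation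

section Gaussian

/-- The weight `|z| ^ s * exp (-|z| ^ 2)`, as a function of `r = |z| ^ 2`. -/
noncomputable def gaussianWeight (s r : ℝ) : ℝ≥0∞ := ENNReal.ofReal (√r ^ s * Real.exp (-r))

/-- The Gaussian moment `∫ |z| ^ s * exp (-|z| ^ 2) dz` over a space of dimension `d + 1`. -/
noncomputable def gaussianMoment (d : ℕ) (s : ℝ) : ℝ≥0∞ :=
  ∫⁻ z : Fin (d + 1) → ℝ, gaussianWeight s (sqNorm z)

lemma measurable_gaussianWeight (s : ℝ) : Measurable (gaussianWeight s) := by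
  unfold gaussianWeight
  fun_prop

lemma measurable_gaussianWeight_sqNorm {ι : Type*} [Fintype ι] (s : ℝ) :
    Measurable fun z : ι → ℝ => gaussianWeight s (sqNorm z) :=
  (measurable_gaussianWeight s).comp continuous_sqNorm.measurable

lemma gaussianWeight_zero_mul (r s : ℝ) :
    gaussianWeight 0 r * gaussianWeight 0 s = ENNReal.ofReal (Real.exp (-(r + s))) := by
  simp only [gaussianWeight, Real.rpow_zero, one_mul]
  rw [← ENNReal.ofReal_mul (Real.exp_pos _).le, ← Real.exp_add, neg_add]

variable {d : ℕ}

lemma gaussianMoment_lt_top {s : ℝ} (hs : -(d + 1) < s) : gaussianMoment d s < ⊤ := by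
  have hradial : Integrable fun x : Euc d => (fun r : ℝ => r ^ s * Real.exp (-r ^ 2)) ‖x‖ := by
    rw [integrable_fun_norm_addHaar volume (f := fun r : ℝ => r ^ s * Real.exp (-r ^ 2))]
    refine (integrableOn_rpow_mul_exp_neg_mul_sq one_pos (s := d + s) (by linarith)).congr_fun
      (fun r (hr : 0 < r) => ?_) measurableSet_Ioi
    simp [Real.rpow_add hr, mul_assoc]
  rw [gaussianMoment, ← (PiLp.volume_preserving_ofLp (Fin (d + 1))).lintegral_comp
    (measurable_gaussianWeight_sqNorm s)]
  simpa only [gaussianWeight, sqNorm_ofLp, Real.sqrt_sq (norm_nonneg _)]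
    using hradial.lintegral_lt_top

lemma gaussianMoment_zero_ne_zero : gaussianMoment d 0 ≠ 0 := by
  refine ((lintegral_pos_iff_support (measurable_gaussianWeight_sqNorm 0)).2 ?_).ne'
  have hsupport :
      Function.support (fun z : Fin (d + 1) → ℝ => gaussianWeight 0 (sqNorm z)) = Set.univ := by
    ext z
    simp [gaussianWeight, Real.exp_pos]
  rw [hsupport]
  exact isOpen_univ.measure_pos _ Set.univ_nonempty

lemma lintegral_radialProj_mul_gaussianWeight {f : (Fin (d + 1) → ℝ) → ℝ≥0∞} (hf : Measurable f)
    (s : ℝ) : ∫⁻ z : Fin (d + 1) → ℝ, f (radialProj z) * gaussianWeight s (sqNorm z) =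
      gaussianMoment d s * ∫⁻ y, f y ∂sphereMeasure d :=
  lintegral_radialProj_mul hf (measurable_gaussianWeight s)

end Gaussian

section Poincare

variable {d : ℕ} (P : MvPolynomial (Fin (d + 1)) ℝ)

/-- The `L¹` norm on the sphere of the gradient of `P`, measured by its angular derivatives. -/
noncomputable def gradL1 : ℝ≥0∞ := ∑ a, ∑ b, sphereL1 (angularDeriv a b P)

lemma lintegral_gradAbs : ∫⁻ y, ENNReal.ofReal (gradAbs P y) ∂sphereMeasure d = gradL1 P := by
  have hsum : ∀ᵐ y ∂sphereMeasure d, ENNReal.ofReal (gradAbs P y) =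
      ∑ a, ∑ b, ENNReal.ofReal |eval y (angularDeriv a b P)| := by
    filter_upwards [ae_sqNorm_eq_one] with y hy
    rw [gradAbs, ENNReal.ofReal_sum_of_nonneg fun _ _ => Finset.sum_nonneg fun _ _ => abs_nonneg _]
    refine Finset.sum_congr rfl fun a _ => ?_
    rw [ENNReal.ofReal_sum_of_nonneg fun _ _ => abs_nonneg _]
    simp only [radialExt, radialProj_of_sqNorm_eq_one hy]
  have hmeas (a b : Fin (d + 1)) : Measurable fun y : Fin (d + 1) → ℝ =>
      ENNReal.ofReal |eval y (angularDeriv a b P)| := (measurable_eval _).abs.ennreal_ofReal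
  rw [lintegral_congr_ae hsum, lintegral_finsetSum _ fun a _ =>
    Finset.measurable_fun_sum _ fun b _ => hmeas a b]
  exact Finset.sum_congr rfl fun a _ => lintegral_finsetSum _ fun b _ => hmeas a b

/-- Integrand to which the rotation trick is applied: a bound for the speed of `radialExt P` along
the path `t ↦ (pairRot t p).1`, times the Gaussian density of the pair. -/
noncomputable def gaussianSpeed (p : (Fin (d + 1) → ℝ) × (Fin (d + 1) → ℝ)) : ℝ≥0∞ :=
  ENNReal.ofReal (gradAbs P p.1) * gaussianWeight (-1) (sqNorm p.1) * gaussianWeight 1 (sqNorm p.2)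

lemma measurable_gaussianSpeed : Measurable (gaussianSpeed P) :=
  (((measurable_gradAbs P).ennreal_ofReal.comp measurable_fst).mul
    ((measurable_gaussianWeight_sqNorm (-1)).comp measurable_fst)).mul
      ((measurable_gaussianWeight_sqNorm 1).comp measurable_snd)

lemma gaussianSpeed_eq (p : (Fin (d + 1) → ℝ) × (Fin (d + 1) → ℝ)) :
    gaussianSpeed P p = ENNReal.ofReal (√(sqNorm p.2) * ((√(sqNorm p.1))⁻¹ * gradAbs P p.1)) *
      ENNReal.ofReal (Real.exp (-(sqNorm p.1 + sqNorm p.2))) := by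
  have hgrad := gradAbs_nonneg P p.1
  simp only [gaussianSpeed, gaussianWeight, Real.rpow_one, Real.rpow_neg_one]
  rw [← ENNReal.ofReal_mul hgrad, ← ENNReal.ofReal_mul (by positivity),
    ← ENNReal.ofReal_mul (by positivity), neg_add, Real.exp_add]
  congr 1
  ring

lemma lintegral_gaussianSpeed :
    ∫⁻ p, gaussianSpeed P p = gaussianMoment d 1 * gaussianMoment d (-1) * gradL1 P := by
  have hgrad : Measurable fun z : Fin (d + 1) → ℝ =>
      ENNReal.ofReal (gradAbs P z) * gaussianWeight (-1) (sqNorm z) :=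
    (measurable_gradAbs P).ennreal_ofReal.mul (measurable_gaussianWeight_sqNorm (-1))
  have hpolar :=
    lintegral_radialProj_mul_gaussianWeight (measurable_gradAbs P).ennreal_ofReal (-1)
  simp only [gradAbs_radialProj, lintegral_gradAbs] at hpolar
  rw [Measure.volume_eq_prod]
  refine (lintegral_prod_mul hgrad.aemeasurable
    (measurable_gaussianWeight_sqNorm 1).aemeasurable).trans ?_
  rw [hpolar, ← gaussianMoment]
  ring

lemma lintegral_abs_radialExt_sub_le (hd : 1 ≤ d) :
    ∫⁻ x : Fin (d + 1) → ℝ, ∫⁻ y, ENNReal.ofReal |radialExt P y - radialExt P x| *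
        (gaussianWeight 0 (sqNorm x) * gaussianWeight 0 (sqNorm y)) ≤
      ENNReal.ofReal (Real.pi / 2) * (gaussianMoment d 1 * gaussianMoment d (-1) * gradL1 P) := by
  rw [← lintegral_gaussianSpeed P, ← sub_zero (Real.pi / 2),
    ← lintegral_lintegral_setLIntegral_pairRot (measurable_gaussianSpeed P)]
  refine lintegral_mono_ae ?_
  filter_upwards [ae_ae_sqNorm_pairRot_ne_zero (ι := Fin (d + 1)) (by simp; omega)] with x hx
  refine lintegral_mono_ae ?_
  filter_upwards [hx] with y hxy
  simp only [gaussianSpeed_eq, sqNorm_pairRot_add, gaussianWeight_zero_mul]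
  rw [lintegral_mul_const' _ _ ENNReal.ofReal_ne_top]
  gcongr
  exact ofReal_abs_radialExt_sub_le_setLIntegral_pairRot P hxy

variable {P}

lemma ofReal_abs_le_lintegral_abs_sub (hP : ∫ y, eval y P ∂sphereMeasure d = 0) (c : ℝ) :
    ENNReal.ofReal |c| ≤ ∫⁻ y, ENNReal.ofReal |eval y P - c| ∂sphereMeasure d := by
  have h := enorm_integral_le_lintegral_enorm (μ := sphereMeasure d) fun y => eval y P - c
  rw [integral_sub (integrable_eval P) (integrable_const _), hP] at h
  simpa [← ofReal_norm] using h

lemma sphereL1_le_lintegral_abs_radialExt_sub (hP : ∫ y, eval y P ∂sphereMeasure d = 0) :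
    gaussianMoment d 0 * gaussianMoment d 0 * sphereL1 P ≤
      ∫⁻ x : Fin (d + 1) → ℝ, ∫⁻ y, ENNReal.ofReal |radialExt P y - radialExt P x| *
        (gaussianWeight 0 (sqNorm x) * gaussianWeight 0 (sqNorm y)) := by
  have hinner (x : Fin (d + 1) → ℝ) : gaussianMoment d 0 * ENNReal.ofReal |radialExt P x| ≤
      ∫⁻ y, ENNReal.ofReal |radialExt P y - radialExt P x| * gaussianWeight 0 (sqNorm y) := by
    have hpolar := lintegral_radialProj_mul_gaussianWeight
      ((measurable_eval P).sub_const (radialExt P x)).abs.ennreal_ofReal 0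
    refine le_of_le_of_eq ?_ hpolar.symm
    gcongr
    exact ofReal_abs_le_lintegral_abs_sub hP _
  have houter := lintegral_radialProj_mul_gaussianWeight (measurable_eval P).abs.ennreal_ofReal 0
  have hfinite : gaussianMoment d 0 ≠ ⊤ := (gaussianMoment_lt_top (by linarith)).ne
  rw [sphereL1, mul_assoc, ← houter, ← lintegral_const_mul' _ _ hfinite]
  refine lintegral_mono fun x => ?_
  have hweight : gaussianWeight 0 (sqNorm x) ≠ ⊤ := ENNReal.ofReal_ne_top
  simp only [mul_left_comm _ (gaussianWeight 0 (sqNorm x))]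
  rw [lintegral_const_mul' _ _ hweight, mul_comm (gaussianWeight 0 _), ← mul_assoc]
  gcongr
  exact hinner x

/-- The constant of the Poincaré inequality `sphereL1_le_poincareConst_mul_gradL1`. -/
noncomputable def poincareConst (d : ℕ) : ℝ≥0∞ :=
  ENNReal.ofReal (Real.pi / 2) * (gaussianMoment d 1 * gaussianMoment d (-1)) /
    (gaussianMoment d 0 * gaussianMoment d 0)

lemma poincareConst_ne_top (hd : 1 ≤ d) : poincareConst d ≠ ⊤ := by
  have hd' : (1 : ℝ) ≤ d := by exact_mod_cast hd
  have hpos := gaussianMoment_lt_top (d := d) (s := 1) (by linarith)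
  have hneg := gaussianMoment_lt_top (d := d) (s := -1) (by linarith)
  exact ENNReal.div_ne_top (by finiteness)
    (mul_ne_zero gaussianMoment_zero_ne_zero gaussianMoment_zero_ne_zero)

lemma sphereL1_le_poincareConst_mul_gradL1 (hd : 1 ≤ d)
    (hP : ∫ y, eval y P ∂sphereMeasure d = 0) :
    sphereL1 P ≤ poincareConst d * gradL1 P := by
  have hne := gaussianMoment_zero_ne_zero (d := d)
  have hfinite := gaussianMoment_lt_top (d := d) (s := 0) (by linarith)
  have hle := (sphereL1_le_lintegral_abs_radialExt_sub hP).trans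
    (lintegral_abs_radialExt_sub_le P hd)
  calc sphereL1 P
      ≤ ENNReal.ofReal (Real.pi / 2) * (gaussianMoment d 1 * gaussianMoment d (-1) * gradL1 P) /
          (gaussianMoment d 0 * gaussianMoment d 0) := by
        rw [ENNReal.le_div_iff_mul_le (Or.inl (mul_ne_zero hne hne)) (Or.inl (by finiteness)),
          mul_comm]
        exact hle
    _ = poincareConst d * gradL1 P := by
        simp only [poincareConst, div_eq_mul_inv]
        ring

end Poincare

/-! ### Sampling derivatives at points of the cells -/

section Sampling

variable {d n m : ℕ} {P : MvPolynomial (Fin (d + 1)) ℝ}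
  {u : CellLabel d → Fin (d + 1) → ℝ}

lemma sphereL1_ne_top (P : MvPolynomial (Fin (d + 1)) ℝ) : sphereL1 P ≠ ⊤ :=
  (integrable_eval P).abs.lintegral_lt_top.ne

lemma gradL1_ne_top (P : MvPolynomial (Fin (d + 1)) ℝ) : gradL1 P ≠ ⊤ :=
  ENNReal.sum_ne_top.2 fun _ _ => ENNReal.sum_ne_top.2 fun _ _ => sphereL1_ne_top _

lemma gradL1_le (hn : 1 ≤ n) (hP : P.totalDegree ≤ n) :
    gradL1 P ≤ ENNReal.ofReal ((d + 1) ^ 2 * (2 * n)) * sphereL1 P :=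
  calc gradL1 P
      ≤ ∑ _a : Fin (d + 1), ∑ _b : Fin (d + 1), ENNReal.ofReal (2 * n) * sphereL1 P :=
        Finset.sum_le_sum fun a _ => Finset.sum_le_sum fun b _ =>
          sphereL1_angularDeriv_le hn a b hP
    _ = ENNReal.ofReal ((d + 1) ^ 2 * (2 * n)) * sphereL1 P := by
        rw [ENNReal.ofReal_mul (p := (d + 1 : ℝ) ^ 2) (by positivity),
          ENNReal.ofReal_pow (by positivity), ENNReal.ofReal_add (by positivity) zero_le_one,
          ENNReal.ofReal_natCast, ENNReal.ofReal_one]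
        simp only [Finset.sum_const, Finset.card_univ, Fintype.card_fin, nsmul_eq_mul]
        push_cast
        ring

lemma sum_ofReal_gradAbs_le (hn : 1 ≤ n) (hnm : n ≤ m)
    (hu : ∀ c ∈ cellLabels d m, u c ∈ outerCell m c) (hP : P.totalDegree ≤ n) :
    ∑ c ∈ cellLabels d m, ENNReal.ofReal (gradAbs P (u c)) ≤
      ENNReal.ofReal (samplingConst d * m ^ d) * gradL1 P := by
  simp only [gradAbs, gradL1, Finset.mul_sum,
    ENNReal.ofReal_sum_of_nonneg fun _ _ => Finset.sum_nonneg fun _ _ => abs_nonneg _,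
    ENNReal.ofReal_sum_of_nonneg fun _ _ => abs_nonneg _]
  rw [Finset.sum_comm]
  refine Finset.sum_le_sum fun a _ => ?_
  rw [Finset.sum_comm]
  exact Finset.sum_le_sum fun b _ => sum_ofReal_abs_radialExt_le hn hnm hu
    ((totalDegree_angularDeriv_le a b P).trans hP)

lemma sum_ofReal_hessAbs_le (hn : 1 ≤ n) (hnm : n ≤ m)
    (hu : ∀ c ∈ cellLabels d m, u c ∈ outerCell m c) (hP : P.totalDegree ≤ n) :
    ∑ c ∈ cellLabels d m, ENNReal.ofReal (hessAbs P (u c)) ≤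
      ENNReal.ofReal (samplingConst d * m ^ d) *
        (ENNReal.ofReal ((d + 1) ^ 2 * (2 * n)) * gradL1 P) := by
  simp only [hessAbs, gradL1, Finset.mul_sum,
    ENNReal.ofReal_sum_of_nonneg fun _ _ => Finset.sum_nonneg fun _ _ => gradAbs_nonneg _ _,
    ENNReal.ofReal_sum_of_nonneg fun _ _ => gradAbs_nonneg _ _]
  rw [Finset.sum_comm]
  refine Finset.sum_le_sum fun a _ => ?_
  rw [Finset.sum_comm]
  refine Finset.sum_le_sum fun b _ => ?_
  have hdeg := (totalDegree_angularDeriv_le a b P).trans hP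
  refine (sum_ofReal_gradAbs_le hn hnm hu hdeg).trans ?_
  gcongr
  exact gradL1_le hn hdeg

lemma sum_le_mul_toReal_of_sum_ofReal_le {α : Type*} {s : Finset α} {f : α → ℝ} {A : ℝ} {B : ℝ≥0∞}
    (hA : 0 ≤ A) (hB : B ≠ ⊤) (hf : ∀ c ∈ s, 0 ≤ f c)
    (h : ∑ c ∈ s, ENNReal.ofReal (f c) ≤ ENNReal.ofReal A * B) : ∑ c ∈ s, f c ≤ A * B.toReal := by
  rw [← ENNReal.ofReal_sum_of_nonneg hf, ← ENNReal.ofReal_toReal hB, ← ENNReal.ofReal_mul hA] at h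
  exact (ENNReal.ofReal_le_ofReal_iff (by positivity)).1 h

lemma sum_gradAbs_le (hn : 1 ≤ n) (hnm : n ≤ m)
    (hu : ∀ c ∈ cellLabels d m, u c ∈ outerCell m c) (hP : P.totalDegree ≤ n) :
    ∑ c ∈ cellLabels d m, gradAbs P (u c) ≤ samplingConst d * m ^ d * (gradL1 P).toReal :=
  sum_le_mul_toReal_of_sum_ofReal_le (by have := samplingConst_nonneg d; positivity)
    (gradL1_ne_top P) (fun c _ => gradAbs_nonneg P (u c)) (sum_ofReal_gradAbs_le hn hnm hu hP)

/-- The growth rate in the degree `n` of `gradAbs + hessAbs` relative to `gradAbs`: by Bernstein's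
inequality, each of the `(d + 1) ^ 2` angular derivatives costs a factor `2 * n`. -/
noncomputable def derivConst (d : ℕ) : ℝ := 1 + 2 * (d + 1) ^ 2

lemma derivConst_pos (d : ℕ) : 0 < derivConst d := by unfold derivConst; positivity

lemma sum_gradAbs_add_hessAbs_le (hn : 1 ≤ n) (hnm : n ≤ m)
    (hu : ∀ c ∈ cellLabels d m, u c ∈ outerCell m c) (hP : P.totalDegree ≤ n) :
    ∑ c ∈ cellLabels d m, (gradAbs P (u c) + hessAbs P (u c)) ≤
      samplingConst d * m ^ d * (derivConst d * n * (gradL1 P).toReal) := by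
  have hconst := samplingConst_nonneg d
  have hhess := sum_le_mul_toReal_of_sum_ofReal_le (by positivity)
    (ENNReal.mul_ne_top ENNReal.ofReal_ne_top (gradL1_ne_top P))
    (fun c _ => hessAbs_nonneg P (u c)) (sum_ofReal_hessAbs_le hn hnm hu hP)
  rw [ENNReal.toReal_mul, ENNReal.toReal_ofReal (by positivity)] at hhess
  have hn' : (1 : ℝ) ≤ n := by exact_mod_cast hn
  calc ∑ c ∈ cellLabels d m, (gradAbs P (u c) + hessAbs P (u c))
      ≤ samplingConst d * m ^ d * (1 * (gradL1 P).toReal) +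
        samplingConst d * m ^ d * ((d + 1) ^ 2 * (2 * n) * (gradL1 P).toReal) := by
        rw [Finset.sum_add_distrib, one_mul]
        exact add_le_add (sum_gradAbs_le hn hnm hu hP) hhess
    _ ≤ samplingConst d * m ^ d * (n * (gradL1 P).toReal) +
        samplingConst d * m ^ d * ((d + 1) ^ 2 * (2 * n) * (gradL1 P).toReal) := by gcongr
    _ = samplingConst d * m ^ d * (derivConst d * n * (gradL1 P).toReal) := by
        rw [derivConst]; ring

lemma sum_abs_radialExt_le (hd : 1 ≤ d) (hn : 1 ≤ n) (hnm : n ≤ m)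
    (hu : ∀ c ∈ cellLabels d m, u c ∈ outerCell m c) (hP : P.totalDegree ≤ n)
    (hmean : ∫ y, eval y P ∂sphereMeasure d = 0) :
    ∑ c ∈ cellLabels d m, |radialExt P (u c)| ≤
      samplingConst d * m ^ d * ((poincareConst d).toReal * (gradL1 P).toReal) := by
  have hconst := samplingConst_nonneg d
  rw [← ENNReal.toReal_mul]
  refine sum_le_mul_toReal_of_sum_ofReal_le (by positivity)
    (ENNReal.mul_ne_top (poincareConst_ne_top hd) (gradL1_ne_top P)) (fun _ _ => abs_nonneg _) ?_
  refine (sum_ofReal_abs_radialExt_le hn hnm hu hP).trans ?_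
  gcongr
  exact sphereL1_le_poincareConst_mul_gradL1 hd hmean

lemma integrable_gradAbs (P : MvPolynomial (Fin (d + 1)) ℝ) :
    Integrable (gradAbs P) (sphereMeasure d) :=
  (lintegral_ofReal_ne_top_iff_integrable (measurable_gradAbs P).aestronglyMeasurable
    (Filter.Eventually.of_forall (gradAbs_nonneg P))).1
      (lintegral_gradAbs P ▸ gradL1_ne_top P)

lemma integral_gradAbs (P : MvPolynomial (Fin (d + 1)) ℝ) :
    ∫ y, gradAbs P y ∂sphereMeasure d = (gradL1 P).toReal := by
  rw [integral_eq_lintegral_of_nonneg_ae (Filter.Eventually.of_forall (gradAbs_nonneg P))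
    (measurable_gradAbs P).aestronglyMeasurable, lintegral_gradAbs]

end Sampling

/-! ### Distributing points among the cells -/

section Rounding

variable {α : Type*}

lemma exists_nat_abs_sub_le_one_sum_eq_floor (s : Finset α) {x : α → ℝ}
    (hx : ∀ c ∈ s, 0 ≤ x c) :
    ∃ k : α → ℕ, (∀ c ∈ s, |(k c : ℝ) - x c| ≤ 1) ∧ ∑ c ∈ s, k c = ⌊∑ c ∈ s, x c⌋₊ := by
  classical
  induction s using Finset.induction_on with
  | empty => exact ⟨fun _ => 0, by simp, by simp⟩
  | insert a s ha ih =>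
    obtain ⟨k, hk, hsum⟩ := ih fun c hc => hx c (mem_insert_of_mem hc)
    set S := ∑ c ∈ s, x c
    have hS : 0 ≤ S := Finset.sum_nonneg fun c hc => hx c (mem_insert_of_mem hc)
    have hxa : 0 ≤ x a := hx a (mem_insert_self _ _)
    have hle : ⌊S⌋₊ ≤ ⌊x a + S⌋₊ := Nat.floor_mono (by linarith)
    have hne {c : α} (hc : c ∈ s) : c ≠ a := fun h => ha (h ▸ hc)
    refine ⟨Function.update k a (⌊x a + S⌋₊ - ⌊S⌋₊), fun c hc => ?_, ?_⟩
    · obtain rfl | hcs := Finset.mem_insert.1 hc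
      · rw [Function.update_self, Nat.cast_sub hle, abs_le]
        have := Nat.floor_le hS
        have := Nat.lt_floor_add_one S
        have := Nat.floor_le (add_nonneg hxa hS)
        have := Nat.lt_floor_add_one (x c + S)
        constructor <;> linarith
      · rw [Function.update_of_ne (hne hcs)]
        exact hk c hcs
    · rw [Finset.sum_insert ha, Finset.sum_insert ha, Function.update_self,
        Finset.sum_congr rfl fun c hc => Function.update_of_ne (hne hc) _ _, hsum]
      exact Nat.sub_add_cancel hle

variable [DecidableEq α]

lemma exists_forall_card_filter_eq {N : ℕ} {s : Finset α} {k : α → ℕ} (hk : ∑ c ∈ s, k c = N) :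
    ∃ label : Fin N → α, (∀ j, label j ∈ s) ∧ ∀ c ∈ s, #{j | label j = c} = k c := by
  have hcard : Fintype.card (Σ c : s, Fin (k c)) = N := by
    rw [Fintype.card_sigma, ← hk, ← Finset.sum_coe_sort s k]
    simp only [Fintype.card_fin]
  let e : Fin N ≃ Σ c : s, Fin (k c) := (Fintype.equivFinOfCardEq hcard).symm
  refine ⟨fun j => (e j).1, fun j => (e j).1.2, fun c hc => ?_⟩
  rw [← Fintype.card_subtype, ← Fintype.card_fin (k c)]
  exact Fintype.card_congr ((e.subtypeEquiv fun j => (Subtype.ext_iff (a2 := ⟨c, hc⟩)).symm).trans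
    (Equiv.sigmaSubtype (⟨c, hc⟩ : s)))

lemma exists_forall_abs_card_filter_sub_le_one {s : Finset α} {p : α → ℝ}
    (hp : ∀ c ∈ s, 0 ≤ p c) (hsum : ∑ c ∈ s, p c = 1) (N : ℕ) :
    ∃ label : Fin N → α, (∀ j, label j ∈ s) ∧
      ∀ c ∈ s, |(#{j | label j = c} : ℝ) - N * p c| ≤ 1 := by
  obtain ⟨k, hk, hfloor⟩ := exists_nat_abs_sub_le_one_sum_eq_floor s
    fun c hc => mul_nonneg (Nat.cast_nonneg N) (hp c hc)
  rw [← Finset.mul_sum, hsum, mul_one, Nat.floor_natCast] at hfloor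
  obtain ⟨label, hmem, hcount⟩ := exists_forall_card_filter_eq hfloor
  exact ⟨label, hmem, fun c hc => by rw [hcount c hc]; exact hk c hc⟩

lemma sum_le_of_abs_card_filter_sub_le_one {N : ℕ} {s : Finset α} {label : Fin N → α}
    (hlabel : ∀ j, label j ∈ s) {p : α → ℝ}
    (hcount : ∀ c ∈ s, |(#{j | label j = c} : ℝ) - N * p c| ≤ 1) {g : Fin N → ℝ} {x : α → ℝ}
    (hg : ∀ j, g j ≤ x (label j)) :
    ∑ j, g j ≤ N * ∑ c ∈ s, p c * x c + ∑ c ∈ s, |x c| := by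
  have hcell (c : α) (hc : c ∈ s) : #{j | label j = c} * x c ≤ N * (p c * x c) + |x c| := by
    have herror : (#{j | label j = c} - N * p c) * x c ≤ |x c| :=
      calc (#{j | label j = c} - N * p c) * x c
          ≤ |(#{j | label j = c} : ℝ) - N * p c| * |x c| := (le_abs_self _).trans (abs_mul _ _).le
        _ ≤ |x c| := mul_le_of_le_one_left (abs_nonneg _) (hcount c hc)
    linarith
  calc ∑ j, g j ≤ ∑ j, x (label j) := Finset.sum_le_sum fun j _ => hg j
    _ = ∑ c ∈ s, #{j | label j = c} * x c := by
        rw [← Finset.sum_fiberwise_of_maps_to' fun j _ => hlabel j]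
        simp only [Finset.sum_const, nsmul_eq_mul]
    _ ≤ ∑ c ∈ s, (N * (p c * x c) + |x c|) := Finset.sum_le_sum hcell
    _ = N * ∑ c ∈ s, p c * x c + ∑ c ∈ s, |x c| := by
        rw [Finset.sum_add_distrib, Finset.mul_sum]

end Rounding

/-! ### Minimising the energy of a configuration -/

section Energy

variable {ι J κ : Type*} [Fintype ι] [Fintype J] {T : Finset κ} {e : κ → MvPolynomial ι ℝ}

/-- The sum of squares of the discrepancies `∑ j, e α (z j)` of the points `z`, taken after radial
projection to the sphere. -/
noncomputable def energy (T : Finset κ) (e : κ → MvPolynomial ι ℝ) (z : J → ι → ℝ) : ℝ :=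
  ∑ α ∈ T, (∑ j, radialExt (e α) (z j)) ^ 2

/-- The combination of the polynomials `e α` with the discrepancies of `z` as coefficients; it
represents half the differential of the energy at `z`. -/
noncomputable def energyPoly (T : Finset κ) (e : κ → MvPolynomial ι ℝ) (z : J → ι → ℝ) :
    MvPolynomial ι ℝ :=
  ∑ α ∈ T, (∑ j, radialExt (e α) (z j)) • e α

lemma radialExt_sum_smul (s : κ → ℝ) (z : ι → ℝ) :
    radialExt (∑ α ∈ T, s α • e α) z = ∑ α ∈ T, s α * radialExt (e α) z := by
  simp only [radialExt, map_sum, MvPolynomial.smul_eval]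

lemma radialGrad_sum_smul (s : κ → ℝ) (z : ι → ℝ) (a : ι) :
    radialGrad (∑ α ∈ T, s α • e α) z a = ∑ α ∈ T, s α * radialGrad (e α) z a := by
  simp only [radialGrad, map_sum, Derivation.map_smul, radialExt_sum_smul, Finset.mul_sum]
  rw [Finset.sum_comm]
  exact Finset.sum_congr rfl fun α _ => Finset.sum_congr rfl fun b _ => mul_left_comm _ _ _

lemma sum_radialExt_energyPoly (z : J → ι → ℝ) :
    ∑ j, radialExt (energyPoly T e z) (z j) = energy T e z := by
  simp only [energyPoly, radialExt_sum_smul, energy]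
  rw [Finset.sum_comm]
  exact Finset.sum_congr rfl fun α _ => by rw [← Finset.mul_sum, pow_two]

lemma continuousAt_energy {z : J → ι → ℝ} (hz : ∀ j, sqNorm (z j) ≠ 0) :
    ContinuousAt (energy T e) z := by
  refine tendsto_finsetSum _ fun α _ => (tendsto_finsetSum _ fun j _ => ?_).pow 2
  exact (continuousAt_radialExt (e α) (hz j)).comp (f := fun z : J → ι → ℝ => z j)
    (continuous_apply j).continuousAt

lemma hasDerivAt_energy_comp {γ : ℝ → J → ι → ℝ} {γ' : J → ι → ℝ} {t : ℝ}
    (hγ : ∀ j a, HasDerivAt (fun s => γ s j a) (γ' j a) t) (hz : ∀ j, sqNorm (γ t j) ≠ 0) :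
    HasDerivAt (fun s => energy T e (γ s))
      (2 * ∑ j, ∑ a, γ' j a * radialGrad (energyPoly T e (γ t)) (γ t j) a) t := by
  have hderiv := HasDerivAt.fun_sum (u := T) fun α _ => (HasDerivAt.fun_sum (u := univ) fun j _ =>
    hasDerivAt_radialExt_comp (e α) (hγ j) (hz j)).fun_pow 2
  refine hderiv.congr_deriv ?_
  simp only [energyPoly, radialGrad_sum_smul, Finset.mul_sum]
  rw [Finset.sum_comm]
  refine Finset.sum_congr rfl fun j _ => ?_
  rw [Finset.sum_comm]
  exact Finset.sum_congr rfl fun a _ => Finset.sum_congr rfl fun α _ => by push_cast; ring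

lemma nonneg_of_hasDerivAt_of_isMinOn_Icc {F : ℝ → ℝ} {D : ℝ} (hF : HasDerivAt F D 0)
    (hmin : IsMinOn F (Set.Icc 0 1) 0) : 0 ≤ D := by
  have hcone : (1 : ℝ) ∈ posTangentConeAt (Set.Icc 0 1) (0 : ℝ) :=
    mem_posTangentConeAt_of_segment_subset (by rw [zero_add, segment_eq_Icc zero_le_one])
  simpa using hmin.localize.hasFDerivWithinAt_nonneg hF.hasFDerivAt.hasFDerivWithinAt hcone

lemma exists_forall_sum_mul_radialGrad_nonneg {K : J → Set (ι → ℝ)}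
    (hcompact : ∀ j, IsCompact (K j)) (hconvex : ∀ j, Convex ℝ (K j)) (hne : ∀ j, (K j).Nonempty)
    (hK : ∀ j, ∀ u ∈ K j, sqNorm u ≠ 0) (T : Finset κ) (e : κ → MvPolynomial ι ℝ) :
    ∃ z : J → ι → ℝ, (∀ j, z j ∈ K j) ∧
      ∀ j, ∀ u ∈ K j, 0 ≤ ∑ a, (u a - z j a) * radialGrad (energyPoly T e z) (z j) a := by
  classical
  obtain ⟨z, hz, hmin⟩ := (isCompact_univ_pi hcompact).exists_isMinOn
    (Set.univ_pi_nonempty_iff.2 hne) fun z hz =>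
      (continuousAt_energy (T := T) (e := e) fun j => hK j _ (hz j trivial)).continuousWithinAt
  refine ⟨z, fun j => hz j trivial, fun j u hu => ?_⟩
  let y := Function.update z j u
  have hy : y ∈ Set.univ.pi K := by
    intro i _
    obtain rfl | hij := eq_or_ne i j
    · simpa [y] using hu
    · simpa [y, hij] using hz i trivial
  have hderiv := hasDerivAt_energy_comp (T := T) (e := e) (γ := fun s => z + s • (y - z)) (t := 0)
    (fun i a => hasDerivAt_segment_apply (z i) ((y - z) i) 0 a)
    (by simpa using fun i => hK i _ (hz i trivial))
  have hnonneg := nonneg_of_hasDerivAt_of_isMinOn_Icc hderiv fun t ht => by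
    simpa using hmin ((convex_pi fun i _ => hconvex i).add_smul_sub_mem hz hy ht)
  have hsum : ∑ i, ∑ a, (y - z) i a * radialGrad (energyPoly T e z) (z i) a =
      ∑ a, (u a - z j a) * radialGrad (energyPoly T e z) (z j) a := by
    rw [Finset.sum_eq_single_of_mem j (Finset.mem_univ j) fun i _ hij => by simp [y, hij]]
    simp [y]
  simp only [zero_smul, add_zero, hsum] at hnonneg
  linarith

end Energy

/-! ### The energy estimate -/

section CellMass

variable {d m : ℕ} {c : CellLabel d} {F : (Fin (d + 1) → ℝ) → ℝ}

/-- The share of the cell `c` in the normalised surface measure of the sphere. -/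
noncomputable def cellMass (m : ℕ) (c : CellLabel d) : ℝ := ∫ y, cellWeight m c y ∂sphereMeasure d

lemma cellMass_nonneg (m : ℕ) (c : CellLabel d) : 0 ≤ cellMass m c :=
  integral_nonneg (cellWeight_nonneg m c)

lemma norm_cellWeight_le_one (hc : c ∈ cellLabels d m) (y : Fin (d + 1) → ℝ) :
    ‖cellWeight m c y‖ ≤ 1 := by
  rw [Real.norm_of_nonneg (cellWeight_nonneg m c y)]
  exact (cellWeight_le_indicator hc y).trans (Set.indicator_le_self' (fun _ _ => zero_le_one) y)

lemma integrable_cellWeight_mul (hc : c ∈ cellLabels d m) (hF : Integrable F (sphereMeasure d)) :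
    Integrable (fun y => cellWeight m c y * F y) (sphereMeasure d) :=
  hF.bdd_mul (measurable_cellWeight m c).aestronglyMeasurable
    (Filter.Eventually.of_forall (norm_cellWeight_le_one hc))

lemma integrable_cellWeight (hc : c ∈ cellLabels d m) :
    Integrable (cellWeight m c) (sphereMeasure d) := by
  simpa using integrable_cellWeight_mul hc (integrable_const 1)

lemma sum_integral_cellWeight_mul (hm : 1 ≤ m) (hF : Integrable F (sphereMeasure d)) :
    ∑ c ∈ cellLabels d m, ∫ y, cellWeight m c y * F y ∂sphereMeasure d =
      ∫ y, F y ∂sphereMeasure d := by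
  rw [← integral_finsetSum _ fun c hc => integrable_cellWeight_mul hc hF]
  refine integral_congr_ae ?_
  filter_upwards [ae_sqNorm_eq_one] with y hy
  rw [← Finset.sum_mul, sum_cellWeight hm (by rw [hy]; exact one_ne_zero), one_mul]

lemma sum_cellMass (hm : 1 ≤ m) : ∑ c ∈ cellLabels d m, cellMass m c = 1 := by
  simpa [cellMass] using sum_integral_cellWeight_mul hm (integrable_const (μ := sphereMeasure d) 1)

lemma cellMass_le (hm : 1 ≤ m) (hc : c ∈ cellLabels d m) :
    cellMass m c ≤ cellMassConst d * (m : ℝ)⁻¹ ^ d := by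
  refine le_trans ?_ (measureReal_cellCone_le hm hc)
  rw [← integral_indicator_one (measurableSet_cellCone m c)]
  exact integral_mono (integrable_cellWeight hc)
    ((integrable_const 1).indicator (measurableSet_cellCone m c)) (cellWeight_le_indicator hc)

lemma sum_mul_cellMass_le (hm : 1 ≤ m) {M : CellLabel d → ℝ} (hM : ∀ c ∈ cellLabels d m, 0 ≤ M c)
    {A : ℝ} (hsum : ∑ c ∈ cellLabels d m, M c ≤ A * m ^ d) :
    ∑ c ∈ cellLabels d m, M c * cellMass m c ≤ cellMassConst d * A := by
  have hconst := cellMassConst_nonneg d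
  calc ∑ c ∈ cellLabels d m, M c * cellMass m c
      ≤ ∑ c ∈ cellLabels d m, M c * (cellMassConst d * (m : ℝ)⁻¹ ^ d) :=
        Finset.sum_le_sum fun c hc => mul_le_mul_of_nonneg_left (cellMass_le hm hc) (hM c hc)
    _ ≤ A * m ^ d * (cellMassConst d * (m : ℝ)⁻¹ ^ d) := by
        rw [← Finset.sum_mul]
        gcongr
    _ = cellMassConst d * A := by
        rw [inv_pow]
        field_simp

end CellMass

section CellExtrema

variable {d m : ℕ} {c : CellLabel d}

lemma innerCell_nonempty (m : ℕ) (c : CellLabel d) : (innerCell m c).Nonempty :=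
  ⟨fun j => c.2 j / m, rfl, fun j _ => ⟨le_rfl, by simp⟩⟩

lemma innerCell_subset_outerCell (m : ℕ) (c : CellLabel d) : innerCell m c ⊆ outerCell m c :=
  faceBox_subset_enlargedFaceBox (by positivity)

lemma outerCell_nonempty (m : ℕ) (c : CellLabel d) : (outerCell m c).Nonempty :=
  (innerCell_nonempty m c).mono (innerCell_subset_outerCell m c)

lemma isCompact_outerCell (m : ℕ) (c : CellLabel d) : IsCompact (outerCell m c) :=
  isCompact_faceBox _ _ _ _

lemma convex_outerCell (m : ℕ) (c : CellLabel d) : Convex ℝ (outerCell m c) :=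
  convex_faceBox _ _ _ _

lemma sqNorm_ne_zero_of_mem_outerCell (hm : 1 ≤ m) (hc : c ∈ cellLabels d m)
    {u : Fin (d + 1) → ℝ} (hu : u ∈ outerCell m c) : sqNorm u ≠ 0 :=
  (zero_lt_one.trans_le (one_le_sqNorm_of_mem_enlargedFaceBox (abs_cellSign hm hc) hu)).ne'

lemma exists_forall_gradAbs_add_hessAbs_le {n : ℕ} (hn : 1 ≤ n) (hnm : n ≤ m)
    {P : MvPolynomial (Fin (d + 1)) ℝ} (hP : P.totalDegree ≤ n) :
    ∃ M : CellLabel d → ℝ, (∀ c, 0 ≤ M c) ∧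
      (∀ c ∈ cellLabels d m, ∀ w ∈ outerCell m c, gradAbs P w + hessAbs P w ≤ M c) ∧
      ∑ c ∈ cellLabels d m, M c ≤
        samplingConst d * m ^ d * (derivConst d * n * (gradL1 P).toReal) := by
  have hmax (c : CellLabel d) (hc : c ∈ cellLabels d m) : ∃ u ∈ outerCell m c,
      IsMaxOn (fun w => gradAbs P w + hessAbs P w) (outerCell m c) u :=
    (isCompact_outerCell m c).exists_isMaxOn (outerCell_nonempty m c) fun u hu =>
      have hu0 := sqNorm_ne_zero_of_mem_outerCell (hn.trans hnm) hc hu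
      ((continuousAt_gradAbs P hu0).add (continuousAt_hessAbs P hu0)).continuousWithinAt
  choose! u hu hmax using hmax
  exact ⟨fun c => gradAbs P (u c) + hessAbs P (u c),
    fun c => add_nonneg (gradAbs_nonneg P _) (hessAbs_nonneg P _),
    fun c hc w hw => hmax c hc hw, sum_gradAbs_add_hessAbs_le hn hnm hu hP⟩

lemma exists_forall_gainBound_le (hm : 1 ≤ m) (P : MvPolynomial (Fin (d + 1)) ℝ) (ℓ : ℝ)
    (M : CellLabel d → ℝ) :
    ∃ v : CellLabel d → Fin (d + 1) → ℝ, (∀ c ∈ cellLabels d m, v c ∈ innerCell m c) ∧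
      ∀ c ∈ cellLabels d m, ∀ w ∈ innerCell m c,
        gainBound P ℓ (M c) (v c) ≤ gainBound P ℓ (M c) w := by
  have hmin (c : CellLabel d) (hc : c ∈ cellLabels d m) : ∃ v ∈ innerCell m c,
      IsMinOn (gainBound P ℓ (M c)) (innerCell m c) v :=
    (isCompact_faceBox _ _ _ _).exists_isMinOn (innerCell_nonempty m c) fun v hv =>
      have hv0 := sqNorm_ne_zero_of_mem_outerCell hm hc (innerCell_subset_outerCell m c hv)
      (((continuousAt_radialExt P hv0).sub (continuousAt_const.mul
        (continuousAt_gradAbs P hv0))).add continuousAt_const).continuousWithinAt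
  choose! v hv hmin using hmin
  exact ⟨v, hv, fun c hc w hw => hmin c hc hw⟩

end CellExtrema

section GainBound

variable {d n m : ℕ} {P : MvPolynomial (Fin (d + 1)) ℝ} {ℓ : ℝ}

/-- The coefficient of the linear gain in `gainBound`. -/
noncomputable def gainConst (d : ℕ) : ℝ := 1 / (24 * (d + 1))

/-- The coefficient of the quadratic loss in `gainBound`. -/
noncomputable def lossConst (d : ℕ) : ℝ := 9 * (2 * (d + 1) + 1) + 3 * (d + 1) ^ 2

lemma gainConst_pos (d : ℕ) : 0 < gainConst d := by unfold gainConst; positivity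

lemma lossConst_pos (d : ℕ) : 0 < lossConst d := by unfold lossConst; positivity

lemma gainBound_eq (P : MvPolynomial (Fin (d + 1)) ℝ) (ℓ M : ℝ) (v : Fin (d + 1) → ℝ) :
    gainBound P ℓ M v =
      radialExt P v - gainConst d * ℓ * gradAbs P v + lossConst d * ℓ ^ 2 * M := by
  simp [gainBound, gainConst, lossConst]

lemma gainBound_congr {v w : Fin (d + 1) → ℝ} (h : radialProj v = radialProj w) (M : ℝ) :
    gainBound P ℓ M v = gainBound P ℓ M w := by
  simp only [gainBound, gradAbs, radialExt, h]

lemma ae_gainBound_zero_eq (P : MvPolynomial (Fin (d + 1)) ℝ) (ℓ : ℝ) :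
    gainBound P ℓ 0 =ᵐ[sphereMeasure d] fun y => eval y P - gainConst d * ℓ * gradAbs P y := by
  filter_upwards [ae_sqNorm_eq_one] with y hy
  rw [gainBound_eq, radialExt, radialProj_of_sqNorm_eq_one hy, mul_zero, add_zero]

lemma integrable_gainBound_zero (P : MvPolynomial (Fin (d + 1)) ℝ) (ℓ : ℝ) :
    Integrable (gainBound P ℓ 0) (sphereMeasure d) :=
  ((integrable_eval P).sub ((integrable_gradAbs P).const_mul _)).congr
    (ae_gainBound_zero_eq P ℓ).symm

lemma integral_gainBound_zero (hmean : ∫ y, eval y P ∂sphereMeasure d = 0) (ℓ : ℝ) :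
    ∫ y, gainBound P ℓ 0 y ∂sphereMeasure d = -(gainConst d * ℓ * (gradL1 P).toReal) := by
  rw [integral_congr_ae (ae_gainBound_zero_eq P ℓ),
    integral_sub (integrable_eval P) ((integrable_gradAbs P).const_mul _), integral_const_mul,
    integral_gradAbs, hmean, zero_sub]

lemma cellMass_mul_le (hm : 1 ≤ m) {c : CellLabel d} (hc : c ∈ cellLabels d m) {M x : ℝ}
    (hx : ∀ w ∈ innerCell m c, x ≤ gainBound P ℓ M w) :
    cellMass m c * x ≤ ∫ y, cellWeight m c y * gainBound P ℓ 0 y ∂sphereMeasure d +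
      lossConst d * ℓ ^ 2 * (M * cellMass m c) := by
  have hgain := integrable_cellWeight_mul hc (integrable_gainBound_zero P ℓ)
  have hweight := integrable_cellWeight (d := d) hc
  have hsplit : ∫ y, cellWeight m c y * gainBound P ℓ 0 y ∂sphereMeasure d +
      lossConst d * ℓ ^ 2 * (M * cellMass m c) = ∫ y, (cellWeight m c y * gainBound P ℓ 0 y +
        lossConst d * ℓ ^ 2 * M * cellWeight m c y) ∂sphereMeasure d := by
    rw [integral_add hgain (hweight.const_mul _), integral_const_mul, cellMass]
    ring
  rw [hsplit, cellMass, ← integral_mul_const]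
  refine integral_mono (hweight.mul_const _) (hgain.add (hweight.const_mul _)) fun y => ?_
  by_cases hy : y ∈ cellCone m c
  · obtain ⟨w, hw, hwy⟩ := exists_mem_innerCell_radialProj_eq hm hc hy
    have hxy := mul_le_mul_of_nonneg_left (hx w hw) (cellWeight_nonneg m c y)
    rw [gainBound_congr hwy] at hxy
    simp only [gainBound_eq] at hxy ⊢
    linarith
  · simp [cellWeight_eq_zero hy]

lemma sum_cellMass_mul_le (hm : 1 ≤ m) (hmean : ∫ y, eval y P ∂sphereMeasure d = 0)
    {M x : CellLabel d → ℝ}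
    (hx : ∀ c ∈ cellLabels d m, ∀ w ∈ innerCell m c, x c ≤ gainBound P ℓ (M c) w) :
    ∑ c ∈ cellLabels d m, cellMass m c * x c ≤ -(gainConst d * ℓ * (gradL1 P).toReal) +
      lossConst d * ℓ ^ 2 * ∑ c ∈ cellLabels d m, M c * cellMass m c := by
  refine (Finset.sum_le_sum fun c hc => cellMass_mul_le hm hc (hx c hc)).trans_eq ?_
  rw [Finset.sum_add_distrib, sum_integral_cellWeight_mul hm (integrable_gainBound_zero P ℓ),
    integral_gainBound_zero hmean, ← Finset.mul_sum]

lemma abs_gainBound_le (hℓ : 0 ≤ ℓ) {M : ℝ} (hM : 0 ≤ M) (v : Fin (d + 1) → ℝ) :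
    |gainBound P ℓ M v| ≤
      |radialExt P v| + gainConst d * ℓ * gradAbs P v + lossConst d * ℓ ^ 2 * M := by
  have hgain := gainConst_pos d
  have hloss := lossConst_pos d
  have hgrad := gradAbs_nonneg P v
  rw [gainBound_eq]
  refine (abs_add_le _ _).trans (add_le_add ((abs_sub _ _).trans_eq ?_) (abs_of_nonneg ?_).le)
  · rw [abs_of_nonneg (a := gainConst d * ℓ * gradAbs P v) (by positivity)]
  · positivity

lemma sum_abs_gainBound_le (hd : 1 ≤ d) (hn : 1 ≤ n) (hnm : n ≤ m) (hP : P.totalDegree ≤ n)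
    (hmean : ∫ y, eval y P ∂sphereMeasure d = 0) (hℓ : 0 ≤ ℓ)
    {M : CellLabel d → ℝ} (hM : ∀ c, 0 ≤ M c) {v : CellLabel d → Fin (d + 1) → ℝ}
    (hv : ∀ c ∈ cellLabels d m, v c ∈ outerCell m c) :
    ∑ c ∈ cellLabels d m, |gainBound P ℓ (M c) (v c)| ≤
      samplingConst d * m ^ d * ((poincareConst d).toReal * (gradL1 P).toReal) +
        gainConst d * ℓ * (samplingConst d * m ^ d * (gradL1 P).toReal) +
        lossConst d * ℓ ^ 2 * ∑ c ∈ cellLabels d m, M c := by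
  have hgain := gainConst_pos d
  refine (Finset.sum_le_sum fun c _ => abs_gainBound_le hℓ (hM c) (v c)).trans ?_
  rw [Finset.sum_add_distrib, Finset.sum_add_distrib, ← Finset.mul_sum, ← Finset.mul_sum]
  gcongr
  · exact sum_abs_radialExt_le hd hn hnm hv hP hmean
  · exact sum_gradAbs_le hn hnm hv hP

end GainBound

section EnergyFactor

variable {d n m N : ℕ} {P : MvPolynomial (Fin (d + 1)) ℝ}

/-- The ratio to `gradL1 P` in the bound for the sum of `P` over a critical configuration of `N`
points in cells of side `1 / m`. The first summand comes from the average over the sphere, the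
second from rounding the number of points in each cell. -/
noncomputable def energyFactor (d n m N : ℕ) : ℝ :=
  N * (lossConst d * (m : ℝ)⁻¹ ^ 2 * (cellMassConst d * (samplingConst d * (derivConst d * n))) -
    gainConst d * (m : ℝ)⁻¹) +
  samplingConst d * m ^ d * ((poincareConst d).toReal + gainConst d * (m : ℝ)⁻¹ +
    lossConst d * (m : ℝ)⁻¹ ^ 2 * (derivConst d * n))

lemma sum_radialExt_le_energyFactor_mul (hd : 1 ≤ d) (hn : 1 ≤ n) (hnm : n ≤ m)
    (hP : P.totalDegree ≤ n) (hmean : ∫ y, eval y P ∂sphereMeasure d = 0)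
    {label : Fin N → CellLabel d} (hlabel : ∀ j, label j ∈ cellLabels d m)
    (hcount : ∀ c ∈ cellLabels d m, |(#{j | label j = c} : ℝ) - N * cellMass m c| ≤ 1)
    {z : Fin N → Fin (d + 1) → ℝ} (hz : ∀ j, z j ∈ outerCell m (label j))
    (hcrit : ∀ j, ∀ u ∈ outerCell m (label j), 0 ≤ ∑ a, (u a - z j a) * radialGrad P (z j) a) :
    ∑ j, radialExt P (z j) ≤ energyFactor d n m N * (gradL1 P).toReal := by
  have hm := hn.trans hnm
  have hℓ : 0 ≤ (m : ℝ)⁻¹ := by positivity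
  have hloss := lossConst_pos d
  obtain ⟨M, hM0, hM, hMsum⟩ := exists_forall_gradAbs_add_hessAbs_le hn hnm hP
  obtain ⟨v, hv, hmin⟩ := exists_forall_gainBound_le hm P (m : ℝ)⁻¹ M
  have hlocal (j : Fin N) :
      radialExt P (z j) ≤ gainBound P (m : ℝ)⁻¹ (M (label j)) (v (label j)) :=
    radialExt_le_gainBound P (abs_cellSign hm (hlabel j)) hℓ (hz j)
      (abs_apply_le_three_of_mem_outerCell hm (hlabel j) (hz j)) (hcrit j) (hM _ (hlabel j))
      (hv _ (hlabel j))
  have hMmass := sum_mul_cellMass_le hm (fun c _ => hM0 c)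
    (A := samplingConst d * (derivConst d * n * (gradL1 P).toReal)) (by linarith)
  calc ∑ j, radialExt P (z j)
      ≤ N * ∑ c ∈ cellLabels d m, cellMass m c * gainBound P (m : ℝ)⁻¹ (M c) (v c) +
        ∑ c ∈ cellLabels d m, |gainBound P (m : ℝ)⁻¹ (M c) (v c)| :=
        sum_le_of_abs_card_filter_sub_le_one hlabel hcount hlocal
    _ ≤ N * (-(gainConst d * (m : ℝ)⁻¹ * (gradL1 P).toReal) + lossConst d * (m : ℝ)⁻¹ ^ 2 *
          (cellMassConst d * (samplingConst d * (derivConst d * n * (gradL1 P).toReal)))) +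
        (samplingConst d * m ^ d * ((poincareConst d).toReal * (gradL1 P).toReal) +
          gainConst d * (m : ℝ)⁻¹ * (samplingConst d * m ^ d * (gradL1 P).toReal) +
          lossConst d * (m : ℝ)⁻¹ ^ 2 *
            (samplingConst d * m ^ d * (derivConst d * n * (gradL1 P).toReal))) := by
        gcongr
        · exact (sum_cellMass_mul_le hm hmean hmin).trans (by gcongr)
        · exact (sum_abs_gainBound_le hd hn hnm hP hmean hℓ hM0
            fun c hc => innerCell_subset_outerCell m c (hv c hc)).trans (by gcongr)
    _ = energyFactor d n m N * (gradL1 P).toReal := by rw [energyFactor]; ring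

end EnergyFactor

section Constants

/-- The number of cells per unit length is this multiple of the degree, so that the linear gain
is at least twice the quadratic loss. -/
noncomputable def cellRatio (d : ℕ) : ℕ :=
  ⌈2 * (lossConst d * (cellMassConst d * (samplingConst d * derivConst d))) / gainConst d⌉₊ + 1

/-- An upper bound for the relative error made by rounding the number of points in each cell. -/
noncomputable def roundingConst (d : ℕ) : ℝ :=
  (poincareConst d).toReal + gainConst d + lossConst d * derivConst d

/-- The constant in `exists_isSphericalDesign_of_pow_succ_le`. -/
noncomputable def designConst (d : ℕ) : ℝ :=
  2 * samplingConst d * roundingConst d * cellRatio d ^ (d + 1) / gainConst d + 1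

lemma designConst_pos (d : ℕ) : 0 < designConst d := by
  have hgain := gainConst_pos d
  have hloss := lossConst_pos d
  have hderiv := derivConst_pos d
  have hsampling := samplingConst_nonneg d
  unfold designConst roundingConst
  positivity

variable {d n m N : ℕ}

lemma inv_sq_mul_eq (hn : 1 ≤ n) (hm : m = cellRatio d * n) :
    (m : ℝ)⁻¹ ^ 2 * n = (m : ℝ)⁻¹ / cellRatio d := by
  have hratio : (cellRatio d : ℝ) ≠ 0 := by unfold cellRatio; positivity
  subst hm
  push_cast
  field_simp

lemma lossConst_mul_le_gainConst_mul (hn : 1 ≤ n) (hm : m = cellRatio d * n) :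
    lossConst d * (m : ℝ)⁻¹ ^ 2 * (cellMassConst d * (samplingConst d * (derivConst d * n))) ≤
      gainConst d * (m : ℝ)⁻¹ / 2 := by
  have hgain := gainConst_pos d
  have hratio : (0 : ℝ) < cellRatio d := by unfold cellRatio; positivity
  have hlarge : 2 * (lossConst d * (cellMassConst d * (samplingConst d * derivConst d))) ≤
      cellRatio d * gainConst d := by
    rw [← div_le_iff₀ hgain, cellRatio]
    push_cast
    linarith [Nat.le_ceil
      (2 * (lossConst d * (cellMassConst d * (samplingConst d * derivConst d))) / gainConst d)]
  calc lossConst d * (m : ℝ)⁻¹ ^ 2 * (cellMassConst d * (samplingConst d * (derivConst d * n)))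
      = lossConst d * (cellMassConst d * (samplingConst d * derivConst d)) *
          ((m : ℝ)⁻¹ ^ 2 * n) := by ring
    _ ≤ cellRatio d * gainConst d / 2 * ((m : ℝ)⁻¹ ^ 2 * n) := by
        gcongr
        linarith
    _ = gainConst d * (m : ℝ)⁻¹ / 2 := by
        rw [inv_sq_mul_eq hn hm]
        field_simp

lemma poincareConst_add_le_roundingConst (hn : 1 ≤ n) (hnm : n ≤ m) :
    (poincareConst d).toReal + gainConst d * (m : ℝ)⁻¹ +
      lossConst d * (m : ℝ)⁻¹ ^ 2 * (derivConst d * n) ≤ roundingConst d := by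
  have hgain := gainConst_pos d
  have hloss := lossConst_pos d
  have hderiv := derivConst_pos d
  have hm : (1 : ℝ) ≤ m := by exact_mod_cast hn.trans hnm
  have hinv : (m : ℝ)⁻¹ ≤ 1 := inv_le_one_of_one_le₀ hm
  have hnm' : (n : ℝ) * (m : ℝ)⁻¹ ≤ 1 := by
    rw [← div_eq_mul_inv, div_le_one (by positivity)]
    exact_mod_cast hnm
  calc (poincareConst d).toReal + gainConst d * (m : ℝ)⁻¹ +
      lossConst d * (m : ℝ)⁻¹ ^ 2 * (derivConst d * n)
      = (poincareConst d).toReal + gainConst d * (m : ℝ)⁻¹ +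
        lossConst d * derivConst d * ((n * (m : ℝ)⁻¹) * (m : ℝ)⁻¹) := by ring
    _ ≤ (poincareConst d).toReal + gainConst d * 1 + lossConst d * derivConst d * (1 * 1) := by
        gcongr
    _ = roundingConst d := by rw [roundingConst]; ring

lemma energyFactor_nonpos (hn : 1 ≤ n) (hN : designConst d * n ^ (d + 1) ≤ N) :
    energyFactor d n (cellRatio d * n) N ≤ 0 := by
  obtain ⟨m, hm⟩ : ∃ m, m = cellRatio d * n := ⟨_, rfl⟩
  rw [← hm]
  have hgain := gainConst_pos d
  have hsampling := samplingConst_nonneg d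
  have hnm : n ≤ m := hm ▸ Nat.le_mul_of_pos_left n (Nat.succ_pos _)
  have hm0 : (0 : ℝ) < m := by exact_mod_cast hn.trans hnm
  have hmany : 2 * samplingConst d * roundingConst d * m ^ (d + 1) ≤ N * gainConst d := by
    rw [← div_le_iff₀ hgain]
    refine le_trans ?_ hN
    rw [hm, designConst]
    push_cast
    rw [add_mul, mul_pow, ← mul_assoc, div_mul_eq_mul_div]
    linarith [show (0 : ℝ) ≤ 1 * n ^ (d + 1) by positivity]
  calc energyFactor d n m N
      ≤ N * (gainConst d * (m : ℝ)⁻¹ / 2 - gainConst d * (m : ℝ)⁻¹) +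
        samplingConst d * m ^ d * roundingConst d := by
        rw [energyFactor]
        gcongr
        · exact lossConst_mul_le_gainConst_mul hn hm
        · exact poincareConst_add_le_roundingConst hn hnm
    _ = (2 * samplingConst d * roundingConst d * m ^ (d + 1) - N * gainConst d) *
          (m : ℝ)⁻¹ / 2 := by
        field_simp
        ring
    _ ≤ 0 := by
        rw [div_nonpos_iff]
        exact Or.inr ⟨mul_nonpos_of_nonpos_of_nonneg (by linarith) (by positivity), by norm_num⟩

end Constants

/-! ### Existence of designs -/

section Design

variable {d n N : ℕ}

/-- The exponents of the monomials of degree at most `n`. -/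
noncomputable def exponentsLE (d n : ℕ) : Finset (Fin (d + 1) →₀ ℕ) :=
  (range (n + 1)).biUnion fun k => finsuppAntidiag univ k

/-- The monomial with exponent `α`, made orthogonal to the constants on the sphere. -/
noncomputable def centredMonomial (α : Fin (d + 1) →₀ ℕ) : MvPolynomial (Fin (d + 1)) ℝ :=
  MvPolynomial.monomial α 1 -
    MvPolynomial.C (∫ y, eval y (MvPolynomial.monomial α 1) ∂sphereMeasure d)

lemma mem_exponentsLE {α : Fin (d + 1) →₀ ℕ} : α ∈ exponentsLE d n ↔ (α.sum fun _ k => k) ≤ n := by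
  rw [Finsupp.sum_fintype _ _ fun _ => rfl]
  simp [exponentsLE, mem_finsuppAntidiag]

lemma totalDegree_centredMonomial_le {α : Fin (d + 1) →₀ ℕ} (hα : α ∈ exponentsLE d n) :
    (centredMonomial α).totalDegree ≤ n := by
  refine (MvPolynomial.totalDegree_sub _ _).trans (max_le ?_ (by simp))
  rw [MvPolynomial.totalDegree_monomial _ one_ne_zero]
  exact mem_exponentsLE.1 hα

lemma integral_centredMonomial (α : Fin (d + 1) →₀ ℕ) :
    ∫ y, eval y (centredMonomial α) ∂sphereMeasure d = 0 := by
  simp only [centredMonomial, map_sub, MvPolynomial.eval_C]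
  rw [integral_sub (integrable_eval _) (integrable_const _)]
  simp

lemma totalDegree_energyPoly_centredMonomial_le (z : Fin N → Fin (d + 1) → ℝ) :
    (energyPoly (exponentsLE d n) centredMonomial z).totalDegree ≤ n :=
  MvPolynomial.totalDegree_finsetSum_le fun _ hα =>
    (MvPolynomial.totalDegree_smul_le _ _).trans (totalDegree_centredMonomial_le hα)

lemma integral_energyPoly_centredMonomial (z : Fin N → Fin (d + 1) → ℝ) :
    ∫ y, eval y (energyPoly (exponentsLE d n) centredMonomial z) ∂sphereMeasure d = 0 := by
  simp only [energyPoly, map_sum, MvPolynomial.smul_eval]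
  rw [integral_finsetSum _ fun α _ => (integrable_eval _).const_mul _]
  exact Finset.sum_eq_zero fun α _ => by
    rw [integral_const_mul, integral_centredMonomial, mul_zero]

lemma eval_eq_sum_coeff_mul_monomial {σ : Type*} (P : MvPolynomial σ ℝ) (y : σ → ℝ) :
    eval y P = ∑ α ∈ P.support, P.coeff α * eval y (MvPolynomial.monomial α 1) := by
  simp only [MvPolynomial.eval_monomial, Finsupp.prod, one_mul]
  exact MvPolynomial.eval_eq y P

lemma sum_radialExt_eq_mul_integral {z : Fin N → Fin (d + 1) → ℝ}
    (hz : ∀ α ∈ exponentsLE d n, ∑ j, radialExt (centredMonomial α) (z j) = 0)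
    {P : MvPolynomial (Fin (d + 1)) ℝ} (hP : P.totalDegree ≤ n) :
    ∑ j, radialExt P (z j) = N * ∫ y, eval y P ∂sphereMeasure d := by
  have hmonomial (α : Fin (d + 1) →₀ ℕ) (hα : α ∈ exponentsLE d n) :
      ∑ j, eval (radialProj (z j)) (MvPolynomial.monomial α 1) =
        N * ∫ y, eval y (MvPolynomial.monomial α 1) ∂sphereMeasure d := by
    simpa [radialExt, centredMonomial, sub_eq_zero] using hz α hα
  simp only [radialExt, eval_eq_sum_coeff_mul_monomial P]
  rw [integral_finsetSum _ fun α _ => (integrable_eval _).const_mul _, Finset.sum_comm,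
    Finset.mul_sum]
  refine Finset.sum_congr rfl fun α hα => ?_
  rw [← Finset.mul_sum, integral_const_mul,
    hmonomial α (mem_exponentsLE.2 ((MvPolynomial.le_totalDegree hα).trans hP)), mul_left_comm]

lemma exists_isSphericalDesign_of_energy_eq_zero (hN : 0 < N) {z : Fin N → Fin (d + 1) → ℝ}
    (hz : ∀ j, sqNorm (z j) ≠ 0) (hE : energy (exponentsLE d n) centredMonomial z = 0) :
    ∃ x : Fin N → Sph d, IsSphericalDesign d n N x := by
  refine ⟨fun j => spherePoint (radialProj (z j)) (sqNorm_radialProj (hz j)), fun P hP => ?_⟩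
  have hdiscrepancy : ∀ α ∈ exponentsLE d n, ∑ j, radialExt (centredMonomial α) (z j) = 0 :=
    fun α hα => pow_eq_zero_iff two_ne_zero |>.1 <|
      (Finset.sum_eq_zero_iff_of_nonneg fun _ _ => sq_nonneg _).1 hE α hα
  have hsum := sum_radialExt_eq_mul_integral hdiscrepancy hP
  rw [integral_muSph_eval]
  exact (eq_inv_mul_iff_mul_eq₀ (by positivity)).2 hsum.symm

lemma exists_isSphericalDesign_of_pow_succ_le (hd : 1 ≤ d) (hn : 1 ≤ n)
    (hN : designConst d * n ^ (d + 1) ≤ N) : ∃ x : Fin N → Sph d, IsSphericalDesign d n N x := by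
  have hnm : n ≤ cellRatio d * n := Nat.le_mul_of_pos_left n (Nat.succ_pos _)
  have hm := hn.trans hnm
  have hNpos : 0 < N := by
    have hconst := designConst_pos d
    exact_mod_cast hN.trans_lt' (show 0 < designConst d * (n : ℝ) ^ (d + 1) by positivity)
  obtain ⟨label, hlabel, hcount⟩ := exists_forall_abs_card_filter_sub_le_one
    (fun c _ => cellMass_nonneg _ c) (sum_cellMass (d := d) hm) N
  obtain ⟨z, hz, hcrit⟩ := exists_forall_sum_mul_radialGrad_nonneg
    (fun j => isCompact_outerCell _ (label j)) (fun j => convex_outerCell _ (label j))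
    (fun j => outerCell_nonempty _ (label j))
    (fun j _ hu => sqNorm_ne_zero_of_mem_outerCell hm (hlabel j) hu)
    (exponentsLE d n) centredMonomial
  refine exists_isSphericalDesign_of_energy_eq_zero hNpos
    (fun j => sqNorm_ne_zero_of_mem_outerCell hm (hlabel j) (hz j))
    (le_antisymm ?_ (Finset.sum_nonneg fun _ _ => sq_nonneg _))
  calc energy (exponentsLE d n) centredMonomial z
      = ∑ j, radialExt (energyPoly (exponentsLE d n) centredMonomial z) (z j) :=
        (sum_radialExt_energyPoly z).symm
    _ ≤ energyFactor d n (cellRatio d * n) N *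
        (gradL1 (energyPoly (exponentsLE d n) centredMonomial z)).toReal :=
        sum_radialExt_le_energyFactor_mul hd hn hnm (totalDegree_energyPoly_centredMonomial_le z)
          (integral_energyPoly_centredMonomial z) hlabel hcount hz hcrit
    _ ≤ 0 := mul_nonpos_of_nonpos_of_nonneg (energyFactor_nonpos hn hN) ENNReal.toReal_nonneg

end Design

lemma lt_of_two_mul_rpow_le {n N : ℕ} {p : ℝ} (hn : 1 ≤ n) (hp : 1 ≤ p)
    (hN : 2 * (n : ℝ) ^ p ≤ N) : n < N := by
  have hn' : (1 : ℝ) ≤ n := by exact_mod_cast hn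
  have hle : (n : ℝ) ≤ (n : ℝ) ^ p := Real.self_le_rpow_of_one_le hn' hp
  exact_mod_cast (show (n : ℝ) < N by linarith)

lemma pow_succ_le_rpow {d : ℕ} (hd : 2 ≤ d) {x : ℝ} (hx : 1 ≤ x) :
    x ^ (d + 1) ≤ x ^ ((2 * (d : ℝ) * (d + 1)) / (d + 2)) := by
  have hd' : (2 : ℝ) ≤ d := by exact_mod_cast hd
  rw [← Real.rpow_natCast]
  refine Real.rpow_le_rpow_of_exponent_le hx ?_
  rw [le_div_iff₀ (by positivity)]
  push_cast
  nlinarith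

end SphericalDesign

/-- For every `d ≥ 1` there is a constant `c_d > 0` such that for every
`n ≥ 1` and every `N ≥ c_d · n^{2d(d+1)/(d+2)}` there exist `N` points on `S^d` forming a
spherical `n`-design. -/
theorem statement0 (d : ℕ) (hd : 1 ≤ d) :
    ∃ c : ℝ, 0 < c ∧ ∀ n N : ℕ, 1 ≤ n →
      c * (n : ℝ) ^ ((2 * (d : ℝ) * (d + 1)) / (d + 2)) ≤ (N : ℝ) →
      ∃ x : Fin N → Sph d, IsSphericalDesign d n N x := by
  rcases hd.eq_or_lt with rfl | hd2
  · refine ⟨2, two_pos, fun n N hn hN => SphericalDesign.exists_isSphericalDesign_circle ?_⟩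
    exact SphericalDesign.lt_of_two_mul_rpow_le hn (by norm_num) hN
  · have hconst := SphericalDesign.designConst_pos d
    refine ⟨SphericalDesign.designConst d, hconst, fun n N hn hN => ?_⟩
    refine SphericalDesign.exists_isSphericalDesign_of_pow_succ_le hd hn (le_trans ?_ hN)
    gcongr
    exact SphericalDesign.pow_succ_le_rpow hd2 (by exact_mod_cast hn)
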